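/- Let d > 2s and let ρ be an admissible weight with exponents (γ₀,γ). Let u be a nonnegative measurable function on ℝ^d × (0,∞) satisfying conditions (i)–(iii) in the definition of weak solution (i.e. the uniform L¹_ρ bound and essential boundedness on ℝ^d × (τ,∞) for every τ > 0, the local-in-time square-integrability of the Gagliardo seminorm of u^m, and the weak formulation against all smooth compactly supported test functions on ℝ^d × (0,∞)), without any prescribed initial datum. Then there exists a unique positive finite Radon measure μ on ℝ^d such that ess lim_{t→0} ∫_{ℝ^d} φ(x) u(x,t) ρ(x) dx = ∫_{ℝ^d} φ dμ for every bounded continuous φ : ℝ^d → ℝ. In particular μ(ℝ^d) = ∫_{ℝ^d} u(x,t) ρ(x) dx for a.e. t > 0. -/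

import Mathlib

open MeasureTheory Filter Topology Set
open scoped ENNReal NNReal

noncomputable section

/-- `d`-dimensional Euclidean space. -/
abbrev Ed (d : ℕ) : Type := EuclideanSpace ℝ (Fin d)

/-- An admissible weight with exponents `(γ₀, γ)` and constants `0 < c < C`:
a measurable, everywhere positive function comparable to `|x|^{-γ₀}` near the
origin and to `|x|^{-γ}` at infinity. -/
def AdmissibleWeight (d : ℕ) (ρ : Ed d → ℝ) (γ₀ γ c C : ℝ) : Prop :=
  0 < c ∧ c < C ∧ Measurable ρ ∧ (∀ x, 0 < ρ x) ∧
    (∀ᵐ x ∂(volume : Measure (Ed d)), ‖x‖ ≤ 1 →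
      c * ‖x‖ ^ (-γ₀) ≤ ρ x ∧ ρ x ≤ C * ‖x‖ ^ (-γ₀)) ∧
    (∀ᵐ x ∂(volume : Measure (Ed d)), 1 < ‖x‖ →
      c * ‖x‖ ^ (-γ) ≤ ρ x ∧ ρ x ≤ C * ‖x‖ ^ (-γ))

/-- The Gagliardo bilinear form `E(v,w)` of order `s` with normalizing constant `κ`. -/
def gagliardoE (d : ℕ) (s κ : ℝ) (v w : Ed d → ℝ) : ℝ :=
  (κ / 2) * ∫ p : Ed d × Ed d,
    (v p.1 - v p.2) * (w p.1 - w p.2) / ‖p.1 - p.2‖ ^ ((d : ℝ) + 2 * s)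

/-- The squared homogeneous fractional Sobolev seminorm `‖v‖_{Ḣ^s}² = E(v,v)`,
with values in `[0,∞]`. -/
def gagliardoSq (d : ℕ) (s κ : ℝ) (v : Ed d → ℝ) : ℝ≥0∞ :=
  ENNReal.ofReal (κ / 2) * ∫⁻ p : Ed d × Ed d,
    ENNReal.ofReal ((v p.1 - v p.2) ^ 2 / ‖p.1 - p.2‖ ^ ((d : ℝ) + 2 * s))

/-- The weighted `L^p` norm `‖v‖_{p,ρ}`, valued in `[0,∞]`. -/
def wnorm (d : ℕ) (p : ℝ) (ρ v : Ed d → ℝ) : ℝ≥0∞ :=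
  (∫⁻ x : Ed d, ENNReal.ofReal (|v x| ^ p * ρ x)) ^ (1 / p)

/-- Smooth compactly supported test functions on `ℝ^d × (0,∞)`. -/
def IsTestFn (d : ℕ) (φ : Ed d × ℝ → ℝ) : Prop :=
  ContDiff ℝ (⊤ : ℕ∞) φ ∧ HasCompactSupport φ ∧ tsupport φ ⊆ univ ×ˢ Ioi (0 : ℝ)

/-- Conditions (i)–(iii) of the definition of weak solution of
`ρ u_t + (-Δ)^s(u^m) = 0` on `ℝ^d × (0,∞)` (no initial datum prescribed). -/
structure WeakSolCore (d : ℕ) (s m κ : ℝ) (ρ : Ed d → ℝ) (u : Ed d → ℝ → ℝ) : Prop where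
  measurable : Measurable (Function.uncurry u)
  nonneg : ∀ x t, 0 ≤ u x t
  /-- (i), first part: `ess sup_{t>0} ∫ u(·,t) ρ < ∞`. -/
  massBound : ∃ M : ℝ, ∀ᵐ t ∂(volume.restrict (Ioi (0 : ℝ))),
    Integrable (fun x : Ed d => u x t * ρ x) ∧ (∫ x : Ed d, u x t * ρ x) ≤ M
  /-- (i), second part: `u` essentially bounded on `ℝ^d × (τ,∞)` for every `τ > 0`. -/
  essBdd : ∀ τ : ℝ, 0 < τ → ∃ B : ℝ,
    ∀ᵐ p ∂(volume : Measure (Ed d × ℝ)), τ < p.2 → u p.1 p.2 ≤ B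
  /-- (ii), first part: `‖u^m(·,t)‖_{Ḣ^s} < ∞` for a.e. `t > 0`. -/
  energyFinite : ∀ᵐ t ∂(volume.restrict (Ioi (0 : ℝ))),
    gagliardoSq d s κ (fun x => u x t ^ m) < ⊤
  /-- (ii), second part: `t ↦ ‖u^m(·,t)‖_{Ḣ^s}²` locally integrable on `(0,∞)`. -/
  energyLocInt : ∀ t₁ t₂ : ℝ, 0 < t₁ → t₁ < t₂ →
    (∫⁻ t in Ioc t₁ t₂, gagliardoSq d s κ (fun x => u x t ^ m)) ≠ ⊤
  /-- (iii): the weak formulation against all test functions. -/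
  weakForm : ∀ φ : Ed d × ℝ → ℝ, IsTestFn d φ →
    -(∫ t in Ioi (0 : ℝ), ∫ x : Ed d, u x t * deriv (fun τ => φ (x, τ)) t * ρ x)
      + ∫ t in Ioi (0 : ℝ),
          gagliardoE d s κ (fun x => u x t ^ m) (fun x => φ (x, t)) = 0

/-- Condition (iv): `ρ(·)u(·,t) → μ` as `t → 0` essentially, tested against all
bounded continuous functions. -/
def HasInitialTrace (d : ℕ) (ρ : Ed d → ℝ) (u : Ed d → ℝ → ℝ)
    (μ : Measure (Ed d)) : Prop :=
  ∃ N : Set ℝ, volume N = 0 ∧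
    ∀ φ : Ed d → ℝ, Continuous φ → (∃ B : ℝ, ∀ x, |φ x| ≤ B) →
      Tendsto (fun t => ∫ x : Ed d, φ x * (u x t * ρ x))
        (𝓝[(Ioi (0 : ℝ)) \ N] 0) (𝓝 (∫ x, φ x ∂μ))

/-- Weak solution of the Cauchy problem with initial datum `μ`. -/
def IsWeakSolution (d : ℕ) (s m κ : ℝ) (ρ : Ed d → ℝ) (μ : Measure (Ed d))
    (u : Ed d → ℝ → ℝ) : Prop :=
  WeakSolCore d s m κ ρ u ∧ HasInitialTrace d ρ u μ

/-!
For `α = d + 2 s`, the bubble `(1 + l |x - a|²) ^ (-(d - 2 s) / 2)`, and its sum with a small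
multiple of any Gaussian centred at `a`, are supersolutions of the fractional Laplace equation:
the inversion in the sphere about `a` through `x` is a symmetry of the singular kernel, and it
reduces the sign of the principal value at `x` to the concavity of a function of one variable.
Since `u ^ m` is nonnegative, the moment of `u ρ` against a supersolution is essentially
nonincreasing in time. It therefore has a limit at `t = 0`, and so have, by subtraction, all
Gaussian moments.

The mass of `u ρ` is essentially constant in time, because the energy pairing of `u ^ m` with a
cut-off of radius `R` is `O(R ^ (γ - 2 s))`. A bubble of small `l` sees almost all the mass at a
fixed time `T`, hence at all earlier times by monotonicity: the measures `u(·, t) ρ` are tight. The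
Gaussians span an algebra that separates finite measures, so these measures converge weakly as
`t → 0`. Uniqueness holds because bounded continuous functions separate finite measures.
-/

section TimeTests

/-- Admissible test functions of time: smooth with compact support in `(0, ∞)`. -/
structure IsTimeTest (θ : ℝ → ℝ) : Prop where
  contDiff : ContDiff ℝ (⊤ : ℕ∞) θ
  hasCompactSupport : HasCompactSupport θ
  tsupport_subset : tsupport θ ⊆ Ioi (0 : ℝ)

lemma hasDerivAt_integral_sub_sub {f : ℝ → ℝ} (hf : Continuous f) (a b t : ℝ) :
    HasDerivAt (fun t => ∫ τ in (t - b)..(t - a), f τ) (f (t - a) - f (t - b)) t := by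
  have hprim (t : ℝ) : HasDerivAt (fun t => ∫ τ in (0 : ℝ)..t, f τ) (f t) t :=
    intervalIntegral.integral_hasDerivAt_right (hf.intervalIntegrable _ _)
      (hf.stronglyMeasurableAtFilter _ _) hf.continuousAt
  refine (((hprim _).comp_sub_const t a).fun_sub
    ((hprim _).comp_sub_const t b)).congr_of_eventuallyEq (Eventually.of_forall fun t => ?_)
  exact (intervalIntegral.integral_interval_sub_left (hf.intervalIntegrable _ _)
    (hf.intervalIntegrable _ _)).symm

lemma contDiff_integral_sub_sub {f : ℝ → ℝ} (hf : ContDiff ℝ (⊤ : ℕ∞) f) (a b : ℝ) :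
    ContDiff ℝ (⊤ : ℕ∞) (fun t => ∫ τ in (t - b)..(t - a), f τ) := by
  have hderiv := hasDerivAt_integral_sub_sub hf.continuous a b
  refine contDiff_infty_iff_deriv.2 ⟨fun t => (hderiv t).differentiableAt, ?_⟩
  rw [funext fun t => (hderiv t).deriv]
  fun_prop

lemma support_integral_sub_sub_subset {f : ℝ → ℝ} {a b r : ℝ} (hab : a ≤ b)
    (hf : Function.support f ⊆ Metric.ball 0 r) :
    Function.support (fun t => ∫ τ in (t - b)..(t - a), f τ) ⊆ Icc (a - r) (b + r) := by
  refine fun t ht => by_contra fun hout => ht ?_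
  refine (intervalIntegral.integral_congr fun τ hτ => ?_).trans intervalIntegral.integral_zero
  rw [uIcc_of_le (by linarith)] at hτ
  refine Function.notMem_support.1 fun hτr => hout ?_
  have hlt := abs_lt.1 (mem_ball_zero_iff.1 (hf hτr))
  exact ⟨by linarith [hτ.2], by linarith [hτ.1]⟩

lemma exists_isTimeTest_deriv_eq_normed_bump_sub (φ : ContDiffBump (0 : ℝ)) {t₁ t₂ : ℝ}
    (h₁ : φ.rOut < t₁) (h₁₂ : t₁ ≤ t₂) :
    ∃ θ : ℝ → ℝ, IsTimeTest θ ∧ (∀ t, 0 ≤ θ t) ∧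
      ∀ t, deriv θ t = φ.normed volume (t₁ - t) - φ.normed volume (t₂ - t) := by
  have hsmooth : ContDiff ℝ (⊤ : ℕ∞) (φ.normed volume) := φ.contDiff_normed
  have hsupp := support_integral_sub_sub_subset h₁₂ (φ.support_normed_eq (μ := volume)).subset
  refine ⟨fun t => ∫ τ in (t - t₂)..(t - t₁), φ.normed volume τ,
    ⟨contDiff_integral_sub_sub hsmooth t₁ t₂,
      HasCompactSupport.of_support_subset_isCompact isCompact_Icc hsupp,
      (closure_minimal hsupp isClosed_Icc).trans fun t ht => lt_of_lt_of_le (by linarith) ht.1⟩,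
    fun t => ?_, fun t => ?_⟩
  · exact intervalIntegral.integral_nonneg (by linarith) fun τ _ => φ.nonneg_normed τ
  · rw [(hasDerivAt_integral_sub_sub hsmooth.continuous t₁ t₂ t).deriv, ← φ.normed_neg (t - t₁),
      ← φ.normed_neg (t - t₂), neg_sub, neg_sub]

/-- A sequence of bumps at the origin with vanishing radii and bounded ratio of radii. -/
def shrinkingBump (n : ℕ) : ContDiffBump (0 : ℝ) where
  rIn := 1 / ((n : ℝ) + 1)
  rOut := 2 * (1 / ((n : ℝ) + 1))
  rIn_pos := Nat.one_div_pos_of_nat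
  rIn_lt_rOut := lt_two_mul_self Nat.one_div_pos_of_nat

lemma tendsto_rOut_shrinkingBump : Tendsto (fun n => (shrinkingBump n).rOut) atTop (𝓝 0) := by
  simpa [shrinkingBump] using (tendsto_one_div_add_atTop_nhds_zero_nat (𝕜 := ℝ)).const_mul 2

lemma integrable_normed_bump_sub_mul {g : ℝ → ℝ} (hg : LocallyIntegrable g)
    (φ : ContDiffBump (0 : ℝ)) (t : ℝ) :
    Integrable fun τ => φ.normed volume (t - τ) * g τ :=
  hg.integrable_smul_left_of_hasCompactSupport
    (φ.continuous_normed.comp (continuous_const.sub continuous_id))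
    (φ.hasCompactSupport_normed.comp_homeomorph (Homeomorph.subLeft t))

-- At Lebesgue points the values are limits of mollifications, and the difference of the
-- mollifications at `t₁ ≤ t₂` is a pairing with the derivative of a nonnegative test function.
lemma exists_antitoneOn_of_integral_mul_deriv_nonneg {g : ℝ → ℝ}
    (hg : LocallyIntegrable ((Ioi (0 : ℝ)).indicator g))
    (h : ∀ θ, IsTimeTest θ → (∀ t, 0 ≤ θ t) → 0 ≤ ∫ t in Ioi (0 : ℝ), g t * deriv θ t) :
    ∃ N : Set ℝ, volume N = 0 ∧ AntitoneOn g (Ioi 0 \ N) := by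
  refine ⟨_, ContDiffBump.ae_convolution_tendsto_right_of_locallyIntegrable (μ := volume)
    tendsto_rOut_shrinkingBump (K := 2) (Eventually.of_forall fun n => le_rfl) hg, ?_⟩
  intro t₁ ht₁ t₂ ht₂ h₁₂
  have lim₁ := not_not.1 ht₁.2
  have lim₂ := not_not.1 ht₂.2
  simp only [Set.mem_ofPred_eq, indicator_of_mem ht₁.1, indicator_of_mem ht₂.1] at lim₁ lim₂
  refine le_of_tendsto_of_tendsto lim₂ lim₁ ?_
  filter_upwards [tendsto_rOut_shrinkingBump.eventually (gt_mem_nhds ht₁.1)] with n hn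
  obtain ⟨θ, hθ, hθ_nonneg, hθ_deriv⟩ :=
    exists_isTimeTest_deriv_eq_normed_bump_sub (shrinkingBump n) hn h₁₂
  simp only [convolution_eq_swap, ContinuousLinearMap.lsmul_apply, smul_eq_mul]
  rw [← sub_nonneg, ← integral_sub (integrable_normed_bump_sub_mul hg _ t₁)
    (integrable_normed_bump_sub_mul hg _ t₂)]
  refine (h θ hθ hθ_nonneg).trans_eq ?_
  rw [← integral_indicator measurableSet_Ioi]
  refine integral_congr_ae (Eventually.of_forall fun t => ?_)
  by_cases ht : t ∈ Ioi (0 : ℝ)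
  · simp only [indicator_of_mem ht, hθ_deriv]
    ring
  · simp only [indicator_of_notMem ht]
    ring

lemma exists_ae_eq_const_of_integral_mul_deriv_eq_zero {g : ℝ → ℝ}
    (hg : LocallyIntegrable ((Ioi (0 : ℝ)).indicator g))
    (h : ∀ θ, IsTimeTest θ → ∫ t in Ioi (0 : ℝ), g t * deriv θ t = 0) :
    ∃ c : ℝ, ∀ᵐ t ∂volume.restrict (Ioi (0 : ℝ)), g t = c := by
  obtain ⟨N, hN, hanti⟩ :=
    exists_antitoneOn_of_integral_mul_deriv_nonneg hg fun θ hθ _ => (h θ hθ).ge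
  obtain ⟨N', hN', hanti'⟩ :=
    exists_antitoneOn_of_integral_mul_deriv_nonneg (g := fun t => -g t)
      ((indicator_neg (Ioi (0 : ℝ)) g) ▸ hg.neg) fun θ hθ _ => by
        simp only [neg_mul, integral_neg, h θ hθ, neg_zero, le_refl]
  have hae : ∀ᵐ t ∂volume.restrict (Ioi (0 : ℝ)), t ∈ Ioi 0 \ (N ∪ N') := by
    filter_upwards [ae_restrict_mem measurableSet_Ioi,
      ae_restrict_of_ae (measure_eq_zero_iff_ae_notMem.1 (measure_union_null hN hN'))]
      with t ht ht' using ⟨ht, ht'⟩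
  have : (ae (volume.restrict (Ioi (0 : ℝ)))).NeBot := ae_restrict_neBot.2 (by simp)
  obtain ⟨t₀, ht₀⟩ := hae.exists
  have hle {t t' : ℝ} (ht : t ∈ Ioi 0 \ (N ∪ N')) (ht' : t' ∈ Ioi 0 \ (N ∪ N')) (htt' : t ≤ t') :
      g t = g t' :=
    le_antisymm (neg_le_neg_iff.1 (hanti' ⟨ht.1, fun h => ht.2 (.inr h)⟩
      ⟨ht'.1, fun h => ht'.2 (.inr h)⟩ htt'))
      (hanti ⟨ht.1, fun h => ht.2 (.inl h)⟩ ⟨ht'.1, fun h => ht'.2 (.inl h)⟩ htt')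
  refine ⟨g t₀, ?_⟩
  filter_upwards [hae] with t ht
  rcases le_total t t₀ with h | h
  · exact hle ht ht₀ h
  · exact (hle ht₀ ht h).symm

end TimeTests

section RadialIntegrals

lemma pow_sub_one_mul_rpow_neg {n : ℕ} (hn : 0 < n) {r : ℝ} (hr : 0 < r) (α : ℝ) :
    r ^ (n - 1) * r ^ (-α) = r ^ (n - α - 1) := by
  rw [← Real.rpow_natCast, ← Real.rpow_add hr, Nat.cast_sub hn]
  congr 1
  push_cast
  ring

lemma setLIntegral_enorm_le_of_abs_le_mul {X : Type*} [MeasurableSpace X] {μ : Measure X}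
    {S : Set X} (hS : MeasurableSet S) {f k : X → ℝ} {A B : ℝ} (hA : 0 ≤ A)
    (hf : ∀ y ∈ S, |f y| ≤ A * k y) (hk : ∫⁻ y in S, ENNReal.ofReal (k y) ∂μ = ENNReal.ofReal B) :
    ∫⁻ y in S, ‖f y‖ₑ ∂μ ≤ ENNReal.ofReal (A * B) := by
  rw [ENNReal.ofReal_mul hA, ← hk, ← lintegral_const_mul' _ _ ENNReal.ofReal_ne_top]
  refine setLIntegral_mono' hS fun y hy => ?_
  rw [Real.enorm_eq_ofReal_abs, ← ENNReal.ofReal_mul hA]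
  exact ENNReal.ofReal_le_ofReal (hf y hy)

variable {E : Type*} [NormedAddCommGroup E] [NormedSpace ℝ E] [Nontrivial E]
  [FiniteDimensional ℝ E] [MeasurableSpace E] [BorelSpace E]
  (μ : Measure E) [μ.IsAddHaarMeasure]

local notation "dim" => Module.finrank ℝ E

lemma setLIntegral_ofReal_comp_norm_sub {S : Set ℝ} (hS : MeasurableSet S) (hS_pos : S ⊆ Ioi 0)
    {f : ℝ → ℝ} (hf : ∀ r ∈ S, 0 ≤ f r) (hint : IntegrableOn (fun r => r ^ (dim - 1) * f r) S)
    (x : E) :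
    ∫⁻ y in {y | ‖x - y‖ ∈ S}, ENNReal.ofReal (f ‖x - y‖) ∂μ =
      ENNReal.ofReal (μ.toSphere.real univ * ∫ r in S, r ^ (dim - 1) * f r) := by
  have hmul : (fun r => r ^ (dim - 1) • S.indicator f r) =
      S.indicator fun r => r ^ (dim - 1) * f r := by
    funext r
    by_cases hr : r ∈ S <;> simp [hr]
  have hinter : S ∩ Ioi 0 = S := inter_eq_left.2 hS_pos
  have hrad : Integrable (fun y : E => S.indicator f ‖y‖) μ := by
    rwa [integrable_fun_norm_addHaar, hmul, IntegrableOn, integrable_indicator_iff hS, IntegrableOn,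
      Measure.restrict_restrict hS, hinter]
  have hmeas : MeasurableSet {y : E | ‖x - y‖ ∈ S} :=
    hS.preimage (f := fun y => ‖x - y‖) (by fun_prop)
  rw [← lintegral_indicator hmeas]
  calc ∫⁻ y, {y | ‖x - y‖ ∈ S}.indicator (fun y => ENNReal.ofReal (f ‖x - y‖)) y ∂μ
      = ∫⁻ y, ENNReal.ofReal (S.indicator f ‖x - y‖) ∂μ :=
        lintegral_congr fun y => by by_cases hy : ‖x - y‖ ∈ S <;> simp [hy]
    _ = ∫⁻ h, ENNReal.ofReal (S.indicator f ‖h‖) ∂μ :=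
        lintegral_sub_left_eq_self (fun h => ENNReal.ofReal (S.indicator f ‖h‖)) x
    _ = ENNReal.ofReal (∫ h, S.indicator f ‖h‖ ∂μ) :=
        (ofReal_integral_eq_lintegral_ofReal hrad
          (Eventually.of_forall fun h => indicator_nonneg hf _)).symm
    _ = _ := by
        rw [integral_fun_norm_addHaar, hmul, setIntegral_indicator hS, inter_comm, hinter]
        simp [Measure.toSphere_real_apply_univ, mul_assoc]

lemma setLIntegral_norm_sub_rpow_of_lt {α r : ℝ} (hα : dim < α) (hr : 0 < r) (x : E) :
    ∫⁻ y in {y | r < ‖x - y‖}, ENNReal.ofReal (‖x - y‖ ^ (-α)) ∂μ =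
      ENNReal.ofReal (μ.toSphere.real univ / (α - dim) * r ^ (dim - α)) := by
  have hpow : EqOn (fun y : ℝ => y ^ (dim - 1) * y ^ (-α)) (fun y => y ^ (dim - α - 1)) (Ioi r) :=
    fun y hy => pow_sub_one_mul_rpow_neg Module.finrank_pos (hr.trans hy) α
  refine (setLIntegral_ofReal_comp_norm_sub μ measurableSet_Ioi (Ioi_subset_Ioi hr.le)
    (fun y hy => Real.rpow_nonneg (hr.trans hy).le _)
    ((integrableOn_congr_fun hpow measurableSet_Ioi).2
      (integrableOn_Ioi_rpow_of_lt (by linarith) hr)) x).trans ?_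
  rw [setIntegral_congr_fun measurableSet_Ioi hpow, integral_Ioi_rpow_of_lt (by linarith) hr,
    sub_add_cancel, ← neg_sub α, div_neg, neg_div, neg_neg, mul_comm_div]

lemma setLIntegral_norm_sub_rpow_of_le {α r : ℝ} (hα : α < dim) (hr : 0 < r) (x : E) :
    ∫⁻ y in {y | ‖x - y‖ ≤ r}, ENNReal.ofReal (‖x - y‖ ^ (-α)) ∂μ =
      ENNReal.ofReal (μ.toSphere.real univ / (dim - α) * r ^ (dim - α)) := by
  have hpow : EqOn (fun y : ℝ => y ^ (dim - 1) * y ^ (-α)) (fun y => y ^ (dim - α - 1))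
      (Ioc 0 r) := fun y hy => pow_sub_one_mul_rpow_neg Module.finrank_pos hy.1 α
  have hae : {y | ‖x - y‖ ≤ r} =ᵐ[μ] {y | ‖x - y‖ ∈ Ioc 0 r} := by
    filter_upwards [measure_eq_zero_iff_ae_notMem.1 (measure_singleton (μ := μ) x)] with y hy
    have hpos : 0 < ‖x - y‖ := norm_sub_pos_iff.2 (Ne.symm hy)
    exact propext ⟨fun h => ⟨hpos, h⟩, fun h => h.2⟩
  rw [setLIntegral_congr hae]
  refine (setLIntegral_ofReal_comp_norm_sub μ measurableSet_Ioc Ioc_subset_Ioi_self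
    (fun y hy => Real.rpow_nonneg hy.1.le _)
    ((integrableOn_congr_fun hpow measurableSet_Ioc).2
      ((intervalIntegrable_iff_integrableOn_Ioc_of_le hr.le).1
        (intervalIntegral.intervalIntegrable_rpow' (by linarith)))) x).trans ?_
  rw [setIntegral_congr_fun measurableSet_Ioc hpow, ← intervalIntegral.integral_of_le hr.le,
    integral_rpow (.inl (by linarith)), sub_add_cancel, Real.zero_rpow (sub_pos.2 hα).ne',
    sub_zero, mul_comm_div]

lemma lintegral_enorm_le_of_abs_le_rpow_of_lt {α r A : ℝ} (hα : dim < α) (hr : 0 < r) (hA : 0 ≤ A)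
    (x : E) {f : E → ℝ} (hf_near : ∀ y, ‖x - y‖ ≤ r → f y = 0)
    (hf_far : ∀ y, r < ‖x - y‖ → |f y| ≤ A * ‖x - y‖ ^ (-α)) :
    ∫⁻ y, ‖f y‖ₑ ∂μ ≤
      ENNReal.ofReal (A * (μ.toSphere.real univ / (α - dim) * r ^ (dim - α))) := by
  have hmeas : MeasurableSet {y | r < ‖x - y‖} := measurableSet_lt (by fun_prop) (by fun_prop)
  have hsupp : Function.support (fun y => ‖f y‖ₑ) ⊆ {y | r < ‖x - y‖} := fun y hy =>
    show r < ‖x - y‖ from not_le.1 fun hle => hy (by simp [hf_near y hle])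
  rw [← indicator_eq_self.2 hsupp, lintegral_indicator hmeas]
  exact setLIntegral_enorm_le_of_abs_le_mul hmeas hA hf_far
    (setLIntegral_norm_sub_rpow_of_lt μ hα hr x)

end RadialIntegrals

section GagliardoIntegrand

lemma integrable_comp_fst_mul_of_lintegral_enorm_le {X Y : Type*} [MeasurableSpace X]
    [MeasurableSpace Y] {μ : Measure X} {ν : Measure Y} [SFinite ν] {v A : X → ℝ} {q : X × Y → ℝ}
    (hv : Measurable v) (hq : Measurable q) (hvA : Integrable (fun x => v x * A x) μ)
    (hqA : ∀ᵐ x ∂μ, ∫⁻ y, ‖q (x, y)‖ₑ ∂ν ≤ ENNReal.ofReal (A x)) :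
    Integrable (fun p => v p.1 * q p) (μ.prod ν) := by
  refine ⟨((hv.comp measurable_fst).mul hq).aestronglyMeasurable, ?_⟩
  rw [hasFiniteIntegral_iff_enorm, lintegral_prod _ (by fun_prop)]
  refine (lintegral_mono_ae ?_).trans_lt (hasFiniteIntegral_iff_enorm.1 hvA.2)
  filter_upwards [hqA] with x hx
  simp only [enorm_mul]
  rw [lintegral_const_mul _ (by fun_prop)]
  gcongr
  exact hx.trans (Real.ofReal_le_enorm _)

variable {E : Type*} [NormedAddCommGroup E]

/-- The integrand of the Gagliardo form with kernel `‖x - y‖ ^ (-α)`; on `ℝ^d` the form of order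
`s` has `α = d + 2 * s`. -/
def gagliardoIntegrand (α : ℝ) (v w : E → ℝ) (p : E × E) : ℝ :=
  (v p.1 - v p.2) * (w p.1 - w p.2) / ‖p.1 - p.2‖ ^ α

/-- The difference quotient whose principal value integral in the second variable is, up to a
constant, the fractional Laplacian of `w`. -/
def diffQuotient (α : ℝ) (w : E → ℝ) (p : E × E) : ℝ :=
  (w p.1 - w p.2) / ‖p.1 - p.2‖ ^ α

lemma gagliardoIntegrand_self_nonneg (α : ℝ) (v : E → ℝ) (p : E × E) :
    0 ≤ gagliardoIntegrand α v v p :=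
  div_nonneg (mul_self_nonneg _) (Real.rpow_nonneg (norm_nonneg _) _)

lemma gagliardoIntegrand_of_fst_eq_snd (α : ℝ) (v w : E → ℝ) {p : E × E} (hp : p.1 = p.2) :
    gagliardoIntegrand α v w p = 0 := by
  simp [gagliardoIntegrand, hp]

lemma abs_diffQuotient_le {α K : ℝ} {w : E → ℝ} (hw : ∀ x, |w x| ≤ K) (p : E × E) :
    |diffQuotient α w p| ≤ 2 * K * ‖p.1 - p.2‖ ^ (-α) := by
  rw [diffQuotient, abs_div, abs_of_nonneg (Real.rpow_nonneg (norm_nonneg _) α),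
    Real.rpow_neg (norm_nonneg _), ← div_eq_mul_inv]
  gcongr
  linarith [abs_sub (w p.1) (w p.2), hw p.1, hw p.2]

lemma abs_gagliardoIntegrand_le_half_add {α : ℝ} {v w z : E → ℝ}
    (hwz : ∀ x y, |w x - w y| ≤ |z x - z y|) (p : E × E) :
    |gagliardoIntegrand α v w p| ≤
      (1 / 2) * (gagliardoIntegrand α v v p + gagliardoIntegrand α z z p) := by
  have hk : 0 ≤ ‖p.1 - p.2‖ ^ α := Real.rpow_nonneg (norm_nonneg _) _
  unfold gagliardoIntegrand
  rw [abs_div, abs_of_nonneg hk, ← add_div, ← mul_div_assoc, abs_mul]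
  refine div_le_div_of_nonneg_right ?_ hk
  rw [← abs_mul_abs_self (v p.1 - v p.2), ← abs_mul_abs_self (z p.1 - z p.2)]
  nlinarith [sq_nonneg (|v p.1 - v p.2| - |z p.1 - z p.2|),
    mul_le_mul_of_nonneg_left (hwz p.1 p.2) (abs_nonneg (v p.1 - v p.2))]

variable [MeasureSpace E]

lemma tendsto_setIntegral_gagliardoIntegrand {α : ℝ} {v w : E → ℝ}
    (hint : Integrable (gagliardoIntegrand α v w)) {ι : Type*} {l : Filter ι}
    [l.IsCountablyGenerated] {T : ι → Set (E × E)} (hT : ∀ i, MeasurableSet (T i))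
    (hT_exh : ∀ p : E × E, p.1 ≠ p.2 → ∀ᶠ i in l, p ∈ T i) :
    Tendsto (fun i => ∫ p in T i, gagliardoIntegrand α v w p) l
      (𝓝 (∫ p, gagliardoIntegrand α v w p)) := by
  simp_rw [← integral_indicator (hT _)]
  refine tendsto_integral_filter_of_dominated_convergence (fun p => ‖gagliardoIntegrand α v w p‖)
    (Eventually.of_forall fun i => (hint.indicator (hT i)).aestronglyMeasurable)
    (Eventually.of_forall fun i => Eventually.of_forall fun p => norm_indicator_le_norm_self _ _)
    hint.norm (Eventually.of_forall fun p => ?_)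
  by_cases hp : p.1 = p.2
  · have hzero : gagliardoIntegrand α v w p = 0 := gagliardoIntegrand_of_fst_eq_snd α v w hp
    refine tendsto_const_nhds.congr fun i => ?_
    by_cases hi : p ∈ T i <;> simp [hi, hzero]
  · refine tendsto_const_nhds.congr' ?_
    filter_upwards [hT_exh p hp] with i hi
    rw [indicator_of_mem hi]

-- Exchanging the variables in half of the form turns it into a pairing with a truncated
-- fractional Laplacian.
lemma setIntegral_gagliardoIntegrand_eq [SFinite (volume : Measure E)] {α : ℝ} {v w : E → ℝ}
    {T : Set (E × E)} (hT : MeasurableSet T) (hT_swap : ∀ p : E × E, p.swap ∈ T ↔ p ∈ T)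
    (hint : Integrable fun p : E × E => v p.1 * T.indicator (diffQuotient α w) p) :
    ∫ p in T, gagliardoIntegrand α v w p =
      2 * ∫ x, v x * ∫ y, T.indicator (diffQuotient α w) (x, y) := by
  set F : E × E → ℝ := fun p => v p.1 * T.indicator (diffQuotient α w) p
  rw [Measure.volume_eq_prod] at hint ⊢
  have hsum : T.indicator (gagliardoIntegrand α v w) = fun p => F p + F p.swap := by
    funext p
    by_cases hp : p ∈ T
    · simp only [F, indicator_of_mem hp, indicator_of_mem ((hT_swap p).2 hp), gagliardoIntegrand,
        diffQuotient, Prod.fst_swap, Prod.snd_swap]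
      rw [norm_sub_rev p.2 p.1]
      ring
    · simp [F, indicator_of_notMem hp, indicator_of_notMem (mt (hT_swap p).1 hp)]
  have hint_swap : Integrable (fun p : E × E => F p.swap) (volume.prod volume) := hint.swap
  have hswap : ∫ p : E × E, F p.swap ∂volume.prod volume = ∫ p, F p ∂volume.prod volume :=
    integral_prod_swap F
  rw [← integral_indicator hT, hsum, integral_add hint hint_swap, hswap, ← two_mul,
    integral_prod _ hint]
  simp only [F, integral_const_mul]

variable [BorelSpace E] [SecondCountableTopology E]

lemma measurable_gagliardoIntegrand {α : ℝ} {v w : E → ℝ} (hv : Measurable v)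
    (hw : Measurable w) : Measurable (gagliardoIntegrand α v w) := by
  unfold gagliardoIntegrand
  fun_prop

lemma measurable_diffQuotient {α : ℝ} {w : E → ℝ} (hw : Measurable w) :
    Measurable (diffQuotient α w) := by
  unfold diffQuotient
  fun_prop

lemma integrable_gagliardoIntegrand {α : ℝ} {v w : E → ℝ} (hv : Measurable v) (hw : Measurable w)
    (hvv : Integrable (gagliardoIntegrand α v v)) (hww : Integrable (gagliardoIntegrand α w w)) :
    Integrable (gagliardoIntegrand α v w) :=
  ((hvv.add hww).const_mul (1 / 2)).mono' (measurable_gagliardoIntegrand hv hw).aestronglyMeasurable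
    (Eventually.of_forall fun p => abs_gagliardoIntegrand_le_half_add (fun _ _ => le_rfl) p)

end GagliardoIntegrand

section Inversion

open EuclideanGeometry

lemma add_rpow_mul_le_of_concaveOn {F : ℝ → ℝ} (hF : ConcaveOn ℝ (Ioi 0) F) {R r : ℝ}
    (hR : 0 < R) (hr : 0 < r) (b : ℝ) :
    F (r ^ (-b)) + (R / r) ^ b * F ((R ^ 2 / r) ^ (-b)) ≤ (1 + (R / r) ^ b) * F (R ^ (-b)) := by
  set l := (R / r) ^ b with hl
  have hl0 : 0 < l := by positivity
  have hfar : l * (R ^ 2 / r) ^ (-b) = R ^ (-b) := by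
    rw [hl, Real.rpow_neg (by positivity), ← Real.inv_rpow (by positivity),
      ← Real.mul_rpow (by positivity) (by positivity), Real.rpow_neg hR.le, ← Real.inv_rpow hR.le]
    congr 1
    field_simp
  have hnear : l * R ^ (-b) = r ^ (-b) := by
    rw [hl, Real.div_rpow hR.le hr.le, Real.rpow_neg hR.le, Real.rpow_neg hr.le]
    field_simp
  have hmid : (1 / (1 + l)) • r ^ (-b) + (l / (1 + l)) • (R ^ 2 / r) ^ (-b) = R ^ (-b) := by
    rw [smul_eq_mul, smul_eq_mul, div_mul_eq_mul_div, div_mul_eq_mul_div, ← add_div, hfar,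
      one_mul, ← hnear]
    field_simp
    ring
  have hconc := hF.2 (show r ^ (-b) ∈ Ioi (0 : ℝ) from Real.rpow_pos_of_pos hr _)
    (show (R ^ 2 / r) ^ (-b) ∈ Ioi (0 : ℝ) from Real.rpow_pos_of_pos (by positivity) _)
    (show 0 ≤ 1 / (1 + l) by positivity) (show 0 ≤ l / (1 + l) by positivity) (by field_simp)
  rw [hmid, smul_eq_mul, smul_eq_mul, div_mul_eq_mul_div, div_mul_eq_mul_div, ← add_div,
    div_le_iff₀ (by positivity)] at hconc
  linarith

variable {E : Type*} [NormedAddCommGroup E]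

/-- The off-diagonal region `ε ‖x - a‖ ‖y - a‖ < ‖x - y‖ ^ 2`. In contrast to `ε < ‖x - y‖`, it is
stable under the inversion in any sphere centred at `a` that passes through `x`. -/
def inversionRegion (a : E) (ε : ℝ) : Set (E × E) :=
  {p | ε * dist p.1 a * dist p.2 a < ‖p.1 - p.2‖ ^ 2}

lemma swap_mem_inversionRegion (a : E) (ε : ℝ) (p : E × E) :
    p.swap ∈ inversionRegion a ε ↔ p ∈ inversionRegion a ε := by
  simp only [inversionRegion, mem_ofPred_eq, Prod.fst_swap, Prod.snd_swap, norm_sub_rev p.2 p.1]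
  rw [mul_right_comm]

lemma half_mul_dist_lt_of_mem_inversionRegion {a x y : E} {ε : ℝ} (hε : 0 < ε) (hε1 : ε ≤ 1)
    (hx : x ≠ a) (h : (x, y) ∈ inversionRegion a ε) : ε / 2 * dist x a < ‖x - y‖ := by
  by_contra! hle
  simp only [inversionRegion, mem_ofPred_eq] at h
  have hR : 0 < dist x a := dist_pos.2 hx
  have hr : dist x a / 2 ≤ dist y a := by
    have := dist_triangle x y a
    rw [dist_eq_norm x y] at this
    nlinarith
  have hsq : ‖x - y‖ ^ 2 ≤ (ε / 2 * dist x a) ^ 2 := pow_le_pow_left₀ (norm_nonneg _) hle 2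
  have hprod : ε * dist x a * (dist x a / 2) ≤ ε * dist x a * dist y a := by gcongr
  nlinarith [mul_pos (mul_pos hε hR) hR]

lemma eventually_mem_inversionRegion (a : E) {p : E × E} (hp : p.1 ≠ p.2) :
    ∀ᶠ ε in 𝓝[>] (0 : ℝ), p ∈ inversionRegion a ε := by
  have hpos : 0 < ‖p.1 - p.2‖ ^ 2 := pow_pos (norm_sub_pos_iff.2 hp) 2
  have hlim : Tendsto (fun ε : ℝ => ε * dist p.1 a * dist p.2 a) (𝓝[>] 0) (𝓝 0) := by
    refine (Continuous.tendsto' (by fun_prop) 0 0 (by ring)).mono_left nhdsWithin_le_nhds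
  exact hlim.eventually_lt_const hpos

variable [InnerProductSpace ℝ E]

lemma norm_sub_inversion_dist {a x y : E} (hx : x ≠ a) (hy : y ≠ a) :
    ‖x - inversion a (dist x a) y‖ = dist x a / dist y a * ‖x - y‖ := by
  have hR : dist x a ≠ 0 := dist_ne_zero.2 hx
  have hdist := dist_inversion_inversion hx hy (dist x a)
  rw [inversion_dist_center] at hdist
  rw [← dist_eq_norm, hdist, dist_eq_norm x y]
  field_simp

lemma mk_inversion_mem_inversionRegion {a x y : E} (hx : x ≠ a) (hy : y ≠ a) (ε : ℝ) :
    (x, inversion a (dist x a) y) ∈ inversionRegion a ε ↔ (x, y) ∈ inversionRegion a ε := by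
  have hR : 0 < dist x a := dist_pos.2 hx
  have hr : 0 < dist y a := dist_pos.2 hy
  simp only [inversionRegion, mem_ofPred_eq, dist_inversion_center, norm_sub_inversion_dist hx hy]
  rw [mul_pow, div_pow, show ε * dist x a * (dist x a ^ 2 / dist y a) =
    dist x a ^ 2 / dist y a ^ 2 * (ε * dist x a * dist y a) by field_simp,
    mul_lt_mul_iff_of_pos_left (by positivity)]

lemma image_inversion_compl_center (a : E) {R : ℝ} (hR : R ≠ 0) :
    inversion a R '' {a}ᶜ = {a}ᶜ :=
  (image_compl_eq (inversion_bijective a hR)).trans (by simp)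

local notation "dim" => Module.finrank ℝ E

-- The inversion in the sphere about `a` through `x` fixes `x` and scales `‖x - y‖`, so its Jacobian
-- combines the two difference quotients into a single one, governed by the concavity of `F`.
lemma diffQuotient_add_inversion_nonneg {α : ℝ} {F : ℝ → ℝ} (hF : ConcaveOn ℝ (Ioi 0) F) {a : E}
    {χ : E → ℝ} (hχ : ∀ z, z ≠ a → χ z = F (dist z a ^ (-(2 * dim - α)))) {x y : E}
    (hx : x ≠ a) (hy : y ≠ a) :
    0 ≤ diffQuotient α χ (x, y) + (dist x a / dist y a) ^ (2 * dim) *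
      diffQuotient α χ (x, inversion a (dist x a) y) := by
  rcases eq_or_ne x y with rfl | hxy
  · simp [diffQuotient]
  have hR : 0 < dist x a := dist_pos.2 hx
  have hr : 0 < dist y a := dist_pos.2 hy
  have hD : 0 < ‖x - y‖ := norm_sub_pos_iff.2 hxy
  have hconc := add_rpow_mul_le_of_concaveOn hF hR hr (2 * dim - α)
  rw [← dist_inversion_center a y, ← hχ x hx, ← hχ y hy,
    ← hχ _ (by rwa [Ne, inversion_eq_center hR.ne'])] at hconc
  have hjac : (dist x a / dist y a) ^ (2 * dim) =
      (dist x a / dist y a) ^ (2 * dim - α) * (dist x a / dist y a) ^ α := by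
    rw [← Real.rpow_add (by positivity), ← Real.rpow_natCast]
    push_cast
    ring_nf
  have hsum : diffQuotient α χ (x, y) + (dist x a / dist y a) ^ (2 * dim) *
      diffQuotient α χ (x, inversion a (dist x a) y) =
      ((1 + (dist x a / dist y a) ^ (2 * dim - α)) * χ x - (χ y +
        (dist x a / dist y a) ^ (2 * dim - α) * χ (inversion a (dist x a) y))) / ‖x - y‖ ^ α := by
    simp only [diffQuotient, hjac, norm_sub_inversion_dist hx hy]
    rw [Real.mul_rpow (by positivity) hD.le]
    have : (dist x a / dist y a) ^ α ≠ 0 := by positivity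
    field_simp
    ring
  rw [hsum]
  exact div_nonneg (sub_nonneg.2 hconc) (by positivity)

variable [FiniteDimensional ℝ E]

lemma abs_det_smul_reflection (K : Submodule ℝ E) (c : ℝ) :
    |(c ^ 2 • (K.reflection : E →L[ℝ] E)).det| = c ^ (2 * dim) := by
  change |LinearMap.det (c ^ 2 • (K.reflection.toLinearEquiv : E →ₗ[ℝ] E))| = _
  have hdet : LinearMap.det (K.reflection.toLinearEquiv : E →ₗ[ℝ] E) =
      (-1) ^ Module.finrank ℝ Kᗮ := Submodule.det_reflection (𝕜 := ℝ) K
  rw [LinearMap.det_smul, hdet, abs_mul, abs_neg_one_pow, mul_one, ← pow_mul,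
    abs_of_nonneg (Even.pow_nonneg (by simp) _)]

variable [MeasurableSpace E] [BorelSpace E]

lemma measurableSet_inversionRegion (a : E) (ε : ℝ) : MeasurableSet (inversionRegion a ε) :=
  measurableSet_lt (by fun_prop) (by fun_prop)

variable [Nontrivial E]

lemma integral_eq_integral_inversion (a : E) {R : ℝ} (hR : R ≠ 0) (f : E → ℝ) :
    ∫ y, f y = ∫ y, (R / dist y a) ^ (2 * dim) * f (inversion a R y) := by
  have hcov := integral_image_eq_integral_abs_det_fderiv_smul volume
    (measurableSet_singleton a).compl
    (fun x hx => (hasFDerivAt_inversion (R := R) (show x ≠ a from hx)).hasFDerivWithinAt)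
    (inversion_injective a hR).injOn f
  simpa only [image_inversion_compl_center a hR, restrict_compl_singleton,
    abs_det_smul_reflection, smul_eq_mul] using hcov

lemma integrable_inversion (a : E) {R : ℝ} (hR : R ≠ 0) {f : E → ℝ} (hf : Integrable f) :
    Integrable fun y => (R / dist y a) ^ (2 * dim) * f (inversion a R y) := by
  have hcov := integrableOn_image_iff_integrableOn_abs_det_fderiv_smul volume
    (measurableSet_singleton a).compl
    (fun x hx => (hasFDerivAt_inversion (R := R) (show x ≠ a from hx)).hasFDerivWithinAt)
    (inversion_injective a hR).injOn f
  simpa only [image_inversion_compl_center a hR, IntegrableOn, restrict_compl_singleton,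
    abs_det_smul_reflection, smul_eq_mul, hf, true_iff] using hcov

lemma integral_indicator_diffQuotient_nonneg {α : ℝ} {F : ℝ → ℝ} (hF : ConcaveOn ℝ (Ioi 0) F)
    {a : E} {χ : E → ℝ} (hχ : ∀ z, z ≠ a → χ z = F (dist z a ^ (-(2 * dim - α)))) {x : E}
    (hx : x ≠ a) (ε : ℝ) :
    0 ≤ ∫ y, (inversionRegion a ε).indicator (diffQuotient α χ) (x, y) := by
  set q : E → ℝ := fun y => (inversionRegion a ε).indicator (diffQuotient α χ) (x, y)
  by_cases hq : Integrable q
  swap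
  · rw [integral_undef hq]
  have hR : dist x a ≠ 0 := dist_ne_zero.2 hx
  have hsum : 0 ≤ ∫ y, (q y + (dist x a / dist y a) ^ (2 * dim) *
      q (inversion a (dist x a) y)) := by
    refine integral_nonneg_of_ae ?_
    filter_upwards [compl_mem_ae_iff.2 (measure_singleton a)] with y hy
    by_cases hmem : (x, y) ∈ inversionRegion a ε
    · simpa only [q, indicator_of_mem hmem, Pi.zero_apply,
        indicator_of_mem ((mk_inversion_mem_inversionRegion hx hy ε).2 hmem)] using
        diffQuotient_add_inversion_nonneg hF hχ hx hy
    · simp [q, hmem, mk_inversion_mem_inversionRegion hx hy]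
  rw [integral_add hq (integrable_inversion a hR hq), ← integral_eq_integral_inversion a hR] at hsum
  linarith

lemma lintegral_enorm_inversionRegion_diffQuotient_le {α : ℝ} (hα : dim < α) {χ : E → ℝ} {K : ℝ}
    (hχ : ∀ x, |χ x| ≤ K) {a x : E} (hx : x ≠ a) {ε : ℝ} (hε : 0 < ε) (hε1 : ε ≤ 1) :
    ∫⁻ y, ‖(inversionRegion a ε).indicator (diffQuotient α χ) (x, y)‖ₑ ≤
      ENNReal.ofReal (2 * K * ((volume : Measure E).toSphere.real univ / (α - dim) *
        (ε / 2 * dist x a) ^ (dim - α))) := by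
  have hR : 0 < dist x a := dist_pos.2 hx
  have hK : 0 ≤ K := (abs_nonneg _).trans (hχ a)
  refine lintegral_enorm_le_of_abs_le_rpow_of_lt volume hα (r := ε / 2 * dist x a) (by positivity)
    (by positivity) x (fun y hy => indicator_of_notMem (fun hmem => ?_) _) fun y _ => ?_
  · exact hy.not_gt (half_mul_dist_lt_of_mem_inversionRegion hε hε1 hx hmem)
  · rw [← Real.norm_eq_abs]
    exact (norm_indicator_le_norm_self _ _).trans (abs_diffQuotient_le hχ (x, y))

theorem integral_gagliardoIntegrand_nonneg_of_concaveOn {α : ℝ} (hα : dim < α) {F : ℝ → ℝ}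
    (hF : ConcaveOn ℝ (Ioi 0) F) {a : E} {v χ : E → ℝ}
    (hχ : ∀ z, z ≠ a → χ z = F (dist z a ^ (-(2 * dim - α)))) (hv : Measurable v)
    (hv_nonneg : ∀ x, 0 ≤ v x) (hχ_meas : Measurable χ) {K : ℝ} (hχ_bdd : ∀ x, |χ x| ≤ K)
    (hint : Integrable (gagliardoIntegrand α v χ))
    (hv_int : Integrable fun x => v x * dist x a ^ (dim - α)) :
    0 ≤ ∫ p, gagliardoIntegrand α v χ p := by
  have hlim := tendsto_setIntegral_gagliardoIntegrand hint (l := 𝓝[>] 0)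
    (measurableSet_inversionRegion a) fun p hp => eventually_mem_inversionRegion a hp
  refine ge_of_tendsto hlim ?_
  filter_upwards [Ioc_mem_nhdsGT zero_lt_one] with ε ⟨hε, hε1⟩
  have hne : ∀ᵐ x : E, x ≠ a := compl_mem_ae_iff.2 (measure_singleton a)
  have hprod := integrable_comp_fst_mul_of_lintegral_enorm_le hv
    ((measurable_diffQuotient hχ_meas (α := α)).indicator (measurableSet_inversionRegion a ε))
    (A := fun x => 2 * K * ((volume : Measure E).toSphere.real univ / (α - dim) *
      (ε / 2 * dist x a) ^ (dim - α))) (μ := volume) (ν := volume) ?_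
    (hne.mono fun x hx => lintegral_enorm_inversionRegion_diffQuotient_le hα hχ_bdd hx hε hε1)
  · rw [setIntegral_gagliardoIntegrand_eq (measurableSet_inversionRegion a ε)
      (swap_mem_inversionRegion a ε) hprod]
    refine mul_nonneg zero_le_two (integral_nonneg_of_ae ?_)
    filter_upwards [hne] with x hx
    exact mul_nonneg (hv_nonneg x) (integral_indicator_diffQuotient_nonneg hF hχ hx ε)
  · refine (hv_int.const_mul (2 * K * ((volume : Measure E).toSphere.real univ / (α - dim) *
      (ε / 2) ^ (dim - α)))).congr (Eventually.of_forall fun x => ?_)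
    simp only [Real.mul_rpow (half_pos hε).le dist_nonneg]
    ring

end Inversion

section FiniteEnergy

variable {E : Type*} [NormedAddCommGroup E] {b K : ℝ} {w : E → ℝ} {a : E}

lemma gagliardoIntegrand_self_le_add (hK : ∀ x, |w x| ≤ K * (1 + ‖x - a‖) ^ (-b)) (α : ℝ)
    (p : E × E) :
    gagliardoIntegrand α w w p ≤
      2 * K ^ 2 * ((1 + ‖p.1 - a‖) ^ (-(2 * b)) * ‖p.1 - p.2‖ ^ (-α) +
        (1 + ‖p.2 - a‖) ^ (-(2 * b)) * ‖p.2 - p.1‖ ^ (-α)) := by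
  have hsq : ∀ x, w x ^ 2 ≤ K ^ 2 * (1 + ‖x - a‖) ^ (-(2 * b)) := fun x => by
    have h := pow_le_pow_left₀ (abs_nonneg _) (hK x) 2
    rwa [sq_abs, mul_pow, ← Real.rpow_mul_natCast (by positivity), Nat.cast_ofNat,
      show -b * 2 = -(2 * b) by ring] at h
  rw [norm_sub_rev p.2 p.1, ← add_mul, gagliardoIntegrand, div_eq_mul_inv,
    ← Real.rpow_neg (norm_nonneg _), ← mul_assoc]
  refine mul_le_mul_of_nonneg_right ?_ (Real.rpow_nonneg (norm_nonneg _) _)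
  nlinarith [hsq p.1, hsq p.2, sq_nonneg (w p.1 + w p.2)]

lemma one_add_norm_sub_div_four_lt {x y : E} (hxy : (1 + ‖x - a‖) / 2 < ‖x - y‖) :
    (1 + ‖x - a‖) / 4 < ‖x - y‖ ∧ (1 + ‖y - a‖) / 4 < ‖y - x‖ := by
  have htri := norm_sub_le_norm_sub_add_norm_sub y x a
  rw [norm_sub_rev y x] at htri ⊢
  constructor <;> linarith [norm_nonneg (x - a)]

variable [NormedSpace ℝ E]

lemma abs_sub_le_of_norm_fderiv_le_one_add_rpow (hb : 0 ≤ b) (hw : Differentiable ℝ w)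
    (hdw : ∀ x, ‖fderiv ℝ w x‖ ≤ K * (1 + ‖x - a‖) ^ (-b)) {x y : E}
    (hxy : ‖x - y‖ ≤ (1 + ‖x - a‖) / 2) :
    |w x - w y| ≤ 2 ^ b * K * (1 + ‖x - a‖) ^ (-b) * ‖x - y‖ := by
  have hK : 0 ≤ K := by
    simpa using (norm_nonneg _).trans (hdw a)
  have hderiv : ∀ z ∈ segment ℝ x y, ‖fderiv ℝ w z‖ ≤ 2 ^ b * K * (1 + ‖x - a‖) ^ (-b) := by
    intro z hz
    have hxz : ‖x - z‖ ≤ ‖x - y‖ := by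
      simpa only [norm_sub_rev] using norm_sub_le_of_mem_segment hz
    have hhalf : (1 + ‖x - a‖) / 2 ≤ 1 + ‖z - a‖ := by
      linarith [norm_sub_le_norm_sub_add_norm_sub x z a]
    calc ‖fderiv ℝ w z‖ ≤ K * (1 + ‖z - a‖) ^ (-b) := hdw z
      _ ≤ K * ((1 + ‖x - a‖) / 2) ^ (-b) := mul_le_mul_of_nonneg_left
        (Real.rpow_le_rpow_of_nonpos (by positivity) hhalf (neg_nonpos.2 hb)) hK
      _ = _ := by
        rw [Real.div_rpow (by positivity) zero_le_two, Real.rpow_neg zero_le_two, div_inv_eq_mul]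
        ring
  rw [← Real.norm_eq_abs, norm_sub_rev (w x), norm_sub_rev x y]
  exact (convex_segment x y).norm_image_sub_le_of_norm_fderiv_le (fun z _ => hw z) hderiv
    (left_mem_segment ℝ x y) (right_mem_segment ℝ x y)

lemma gagliardoIntegrand_self_le_of_near (hb : 0 ≤ b) (hw : Differentiable ℝ w)
    (hdw : ∀ x, ‖fderiv ℝ w x‖ ≤ K * (1 + ‖x - a‖) ^ (-b)) (α : ℝ) {p : E × E}
    (hp : ‖p.1 - p.2‖ ≤ (1 + ‖p.1 - a‖) / 2) :
    gagliardoIntegrand α w w p ≤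
      (2 ^ b * K) ^ 2 * ((1 + ‖p.1 - a‖) ^ (-(2 * b)) * ‖p.1 - p.2‖ ^ (-(α - 2))) := by
  rcases eq_or_ne p.1 p.2 with hdiag | hdiag
  · rw [gagliardoIntegrand_of_fst_eq_snd α w w hdiag]
    positivity
  have hD : 0 < ‖p.1 - p.2‖ := norm_sub_pos_iff.2 hdiag
  have hN : 0 < 1 + ‖p.1 - a‖ := by positivity
  have hsq := pow_le_pow_left₀ (abs_nonneg _)
    (abs_sub_le_of_norm_fderiv_le_one_add_rpow hb hw hdw hp) 2
  rw [gagliardoIntegrand, ← sq, ← sq_abs, div_le_iff₀ (by positivity)]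
  refine hsq.trans (le_of_eq ?_)
  have hD_sq : ‖p.1 - p.2‖ ^ 2 = ‖p.1 - p.2‖ ^ (-(α - 2)) * ‖p.1 - p.2‖ ^ α := by
    rw [← Real.rpow_add hD, ← Real.rpow_natCast]
    norm_num
  rw [mul_pow, mul_pow, ← Real.rpow_mul_natCast hN.le, hD_sq, Nat.cast_ofNat,
    show -b * 2 = -(2 * b) by ring]
  ring

variable [FiniteDimensional ℝ E] [MeasureSpace E] [BorelSpace E]
  [(volume : Measure E).IsAddHaarMeasure]

local notation "dim" => Module.finrank ℝ E

lemma integrableOn_one_add_norm_rpow_mul {T : Set (E × E)} (hT : MeasurableSet T) {α β c : ℝ}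
    (hαβ : 2 * dim < β + α) (hTα : ∀ x, ∫⁻ y in {y | (x, y) ∈ T}, ENNReal.ofReal (‖x - y‖ ^ (-α)) ≤
      ENNReal.ofReal (c * (1 + ‖x - a‖) ^ (dim - α))) :
    IntegrableOn (fun p : E × E => (1 + ‖p.1 - a‖) ^ (-β) * ‖p.1 - p.2‖ ^ (-α)) T := by
  have hdecay : Integrable fun x : E => (1 + ‖x - a‖) ^ (-β) * (c * (1 + ‖x - a‖) ^ (dim - α)) := by
    refine (((integrable_one_add_norm (E := E) (μ := volume) (r := β + α - dim)
      (by linarith)).comp_sub_right a).const_mul c).congr (Eventually.of_forall fun x => ?_)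
    simp only
    rw [mul_left_comm, ← Real.rpow_add (by positivity)]
    ring_nf
  rw [← integrable_indicator_iff hT]
  refine (integrable_comp_fst_mul_of_lintegral_enorm_le (q := T.indicator fun p =>
    ‖p.1 - p.2‖ ^ (-α)) (by fun_prop) (Measurable.indicator (by fun_prop) hT) hdecay
    (ae_of_all _ fun x => ?_)).congr (Eventually.of_forall fun p =>
      (indicator_mul_right T (fun p => (1 + ‖p.1 - a‖) ^ (-β)) _).symm)
  have hTx : MeasurableSet {y | (x, y) ∈ T} := measurable_prodMk_left hT
  refine le_trans (le_of_eq ?_) (hTα x)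
  rw [← lintegral_indicator hTx]
  refine lintegral_congr fun y => ?_
  by_cases hy : (x, y) ∈ T <;>
    simp [hy, Real.enorm_of_nonneg, Real.rpow_nonneg]

variable [Nontrivial E]

lemma integrableOn_one_add_norm_rpow_mul_near {α β : ℝ} (hα : α < dim) (hαβ : 2 * dim < β + α) :
    IntegrableOn (fun p : E × E => (1 + ‖p.1 - a‖) ^ (-β) * ‖p.1 - p.2‖ ^ (-α))
      {p | ‖p.1 - p.2‖ ≤ (1 + ‖p.1 - a‖) / 2} := by
  refine integrableOn_one_add_norm_rpow_mul (measurableSet_le (by fun_prop) (by fun_prop)) hαβ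
    (c := (volume : Measure E).toSphere.real univ / (dim - α) * (1 / 2) ^ (dim - α)) fun x => ?_
  have hr : 0 < (1 + ‖x - a‖) / 2 := by positivity
  refine (setLIntegral_norm_sub_rpow_of_le volume hα hr x).trans_le
    (ENNReal.ofReal_le_ofReal (le_of_eq ?_))
  rw [div_eq_inv_mul (1 + _), Real.mul_rpow (by positivity) (by positivity), ← mul_assoc, one_div]

lemma integrableOn_one_add_norm_rpow_mul_far {α β : ℝ} (hα : dim < α) (hαβ : 2 * dim < β + α) :
    IntegrableOn (fun p : E × E => (1 + ‖p.1 - a‖) ^ (-β) * ‖p.1 - p.2‖ ^ (-α))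
      {p | (1 + ‖p.1 - a‖) / 4 < ‖p.1 - p.2‖} := by
  refine integrableOn_one_add_norm_rpow_mul (measurableSet_lt (by fun_prop) (by fun_prop)) hαβ
    (c := (volume : Measure E).toSphere.real univ / (α - dim) * (1 / 4) ^ (dim - α)) fun x => ?_
  have hr : 0 < (1 + ‖x - a‖) / 4 := by positivity
  refine (setLIntegral_norm_sub_rpow_of_lt volume hα hr x).trans_le
    (ENNReal.ofReal_le_ofReal (le_of_eq ?_))
  rw [div_eq_inv_mul (1 + _), Real.mul_rpow (by positivity) (by positivity), ← mul_assoc, one_div]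

theorem integrable_gagliardoIntegrand_self {α : ℝ} (hα : dim < α) (hα' : α < dim + 2)
    (hbα : 2 * dim < 2 * b + α) (hw : Differentiable ℝ w)
    (hwK : ∀ x, |w x| ≤ K * (1 + ‖x - a‖) ^ (-b))
    (hdw : ∀ x, ‖fderiv ℝ w x‖ ≤ K * (1 + ‖x - a‖) ^ (-(b + 1))) :
    Integrable (gagliardoIntegrand α w w) := by
  have hb : 0 ≤ b + 1 := by
    have : (0 : ℝ) ≤ dim := Nat.cast_nonneg _
    linarith
  have hmeas := measurable_gagliardoIntegrand (α := α) hw.continuous.measurable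
    hw.continuous.measurable
  have hnear : IntegrableOn (gagliardoIntegrand α w w)
      {p | ‖p.1 - p.2‖ ≤ (1 + ‖p.1 - a‖) / 2} := by
    have hkernel := integrableOn_one_add_norm_rpow_mul_near (a := a) (α := α - 2)
      (β := 2 * (b + 1)) (by linarith) (by linarith)
    refine (hkernel.const_mul ((2 ^ (b + 1) * K) ^ 2)).mono' hmeas.aestronglyMeasurable
      (ae_restrict_of_forall_mem (measurableSet_le (by fun_prop) (by fun_prop)) fun p hp => ?_)
    rw [Real.norm_of_nonneg (gagliardoIntegrand_self_nonneg α w p)]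
    exact gagliardoIntegrand_self_le_of_near hb hw hdw α hp
  have hfst := integrableOn_one_add_norm_rpow_mul_far (a := a) hα hbα
  have hsnd := (Measure.measurePreserving_swap (μ := (volume : Measure E)) (ν := volume)
    ).integrableOn_comp_preimage MeasurableEquiv.prodComm.measurableEmbedding |>.2 hfst
  have hfar : IntegrableOn (gagliardoIntegrand α w w)
      {p | ‖p.1 - p.2‖ ≤ (1 + ‖p.1 - a‖) / 2}ᶜ := by
    have hsub : {p : E × E | ‖p.1 - p.2‖ ≤ (1 + ‖p.1 - a‖) / 2}ᶜ ⊆ _ := fun p hp =>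
      one_add_norm_sub_div_four_lt (not_le.1 hp)
    refine (((hfst.mono_set fun p hp => (hsub hp).1).add
      (hsnd.mono_set fun p hp => (hsub hp).2)).const_mul (2 * K ^ 2)).mono'
      hmeas.aestronglyMeasurable (Eventually.of_forall fun p => ?_)
    rw [Real.norm_of_nonneg (gagliardoIntegrand_self_nonneg α w p)]
    exact gagliardoIntegrand_self_le_add hwK α p
  rw [← integrableOn_univ, ← union_compl_self]
  exact hnear.union hfar

end FiniteEnergy

section CutOff

lemma abs_integral_le_of_lintegral_enorm_le {X : Type*} [MeasurableSpace X] {μ : Measure X}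
    {f : X → ℝ} {B : ℝ} (hB : 0 ≤ B) (hf : ∫⁻ x, ‖f x‖ₑ ∂μ ≤ ENNReal.ofReal B) :
    |∫ x, f x ∂μ| ≤ B := by
  rw [← ENNReal.ofReal_le_ofReal_iff hB, ← Real.enorm_eq_ofReal_abs]
  exact (enorm_integral_le_lintegral_enorm f).trans hf

variable {E : Type*} [NormedAddCommGroup E]

/-- The off-diagonal region on which the singular kernel is bounded. -/
def offDiagonal (E : Type*) [NormedAddCommGroup E] (ε : ℝ) : Set (E × E) :=
  {p | ε < ‖p.1 - p.2‖}

lemma abs_indicator_diffQuotient_le {α K : ℝ} {w : E → ℝ} (hw : ∀ x, |w x| ≤ K)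
    (T : Set (E × E)) (p : E × E) :
    |T.indicator (diffQuotient α w) p| ≤ 2 * K * ‖p.1 - p.2‖ ^ (-α) :=
  (norm_indicator_le_norm_self (diffQuotient α w) p).trans (abs_diffQuotient_le hw p)

lemma indicator_diffQuotient_add_reflection (α ε : ℝ) (w : E → ℝ) (x y : E) :
    (offDiagonal E ε).indicator (diffQuotient α w) (x, y) +
        (offDiagonal E ε).indicator (diffQuotient α w) (x, x + x - y) =
      (offDiagonal E ε).indicator (fun p => (2 * w x - w (x + (x - y)) - w (x - (x - y))) /
        ‖p.1 - p.2‖ ^ α) (x, y) := by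
  have hrefl : ‖x - (x + x - y)‖ = ‖x - y‖ := by rw [← norm_sub_rev y]; congr 1; abel
  by_cases h : (x, y) ∈ offDiagonal E ε
  · have h' : (x, x + x - y) ∈ offDiagonal E ε := by
      rwa [offDiagonal, mem_ofPred_eq, hrefl]
    rw [indicator_of_mem h, indicator_of_mem h', indicator_of_mem h, diffQuotient, diffQuotient,
      hrefl, ← add_div, sub_sub_cancel, add_sub_assoc]
    ring
  · have h' : (x, x + x - y) ∉ offDiagonal E ε := by
      rwa [offDiagonal, mem_ofPred_eq, hrefl]
    rw [indicator_of_notMem h, indicator_of_notMem h', indicator_of_notMem h, add_zero]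

lemma diffQuotient_eq_zero_of_far {α r₀ : ℝ} (hr₀ : 0 ≤ r₀) {w : E → ℝ}
    (hw : ∀ x, r₀ < ‖x‖ → w x = 0) {x y : E} (hx : 1 + 2 * r₀ ≤ ‖x‖)
    (hxy : ‖x - y‖ ≤ 1 / 4 * (1 + ‖x‖)) : diffQuotient α w (x, y) = 0 := by
  have hy : ‖x‖ - ‖x - y‖ ≤ ‖y‖ := by linarith [norm_sub_norm_le x y]
  rw [diffQuotient, hw x (by linarith), hw y (by linarith), sub_self, zero_div]

lemma abs_add_reflection_diffQuotient_le {α L : ℝ} (ε : ℝ) (hL : 0 ≤ L) {w : E → ℝ}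
    (hw : ∀ x h, |2 * w x - w (x + h) - w (x - h)| ≤ L * ‖h‖ ^ 2) (x y : E) :
    |(offDiagonal E ε).indicator (diffQuotient α w) (x, y) +
        (offDiagonal E ε).indicator (diffQuotient α w) (x, x + x - y)| ≤
      L * ‖x - y‖ ^ (-(α - 2)) := by
  rw [indicator_diffQuotient_add_reflection, ← Real.norm_eq_abs]
  refine (norm_indicator_le_norm_self _ _).trans ?_
  rcases eq_or_ne x y with rfl | hxy
  · have hzero : 2 * w x - w (x + (x - x)) - w (x - (x - x)) = 0 := by
      rw [sub_self, add_zero, sub_zero]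
      ring
    rw [hzero, zero_div, norm_zero]
    positivity
  · have hpos : 0 < ‖x - y‖ := norm_pos_iff.2 (sub_ne_zero.2 hxy)
    rw [neg_sub, Real.rpow_sub hpos, Real.rpow_two, ← mul_div_assoc, norm_div, Real.norm_eq_abs,
      Real.norm_of_nonneg (by positivity)]
    gcongr
    exact hw x (x - y)

variable [NormedSpace ℝ E]

lemma exists_abs_second_difference_le {w : E → ℝ} (hw : ContDiff ℝ 2 w)
    (hw_supp : HasCompactSupport w) :
    ∃ L : ℝ, 0 ≤ L ∧ ∀ x h, |2 * w x - w (x + h) - w (x - h)| ≤ L * ‖h‖ ^ 2 := by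
  obtain ⟨L, hL⟩ := ContDiff.lipschitzWith_of_hasCompactSupport (hw_supp.fderiv ℝ)
    (hw.fderiv_right (m := 1) le_rfl) one_ne_zero
  refine ⟨L, L.2, fun x h => ?_⟩
  have hdiff : Differentiable ℝ w := hw.differentiable two_ne_zero
  have hderiv : ∀ y, HasFDerivAt (fun y => w (y + h) - w y)
      (fderiv ℝ w (y + h) - fderiv ℝ w y) y := fun y =>
    ((hasFDerivAt_comp_add_right h).2 (hdiff _).hasFDerivAt).sub (hdiff y).hasFDerivAt
  have hbound : ∀ y, ‖fderiv ℝ w (y + h) - fderiv ℝ w y‖ ≤ L * ‖h‖ := fun y => by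
    simpa [dist_eq_norm] using hL.dist_le_mul (y + h) y
  have hmvt := convex_univ.norm_image_sub_le_of_norm_hasFDerivWithin_le
    (fun y _ => (hderiv y).hasFDerivWithinAt) (fun y _ => hbound y) (mem_univ x) (mem_univ (x - h))
  rw [Real.norm_eq_abs, sub_add_cancel, sub_sub_cancel_left, norm_neg] at hmvt
  rw [show 2 * w x - w (x + h) - w (x - h) = w x - w (x - h) - (w (x + h) - w x) by ring]
  linarith [sq ‖h‖]

lemma one_add_norm_inv_smul_rpow_neg_le {γ δ R : ℝ} (hγ : 0 ≤ γ) (hγδ : γ ≤ δ) (hR : 1 ≤ R)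
    (x : E) : (1 + ‖R⁻¹ • x‖) ^ (-δ) ≤ R ^ γ * (1 + ‖x‖) ^ (-γ) := by
  have hR0 : 0 < R := one_pos.trans_le hR
  have hbase : R⁻¹ * (1 + ‖x‖) ≤ 1 + ‖R⁻¹ • x‖ := by
    rw [norm_smul, norm_inv, Real.norm_of_nonneg hR0.le, mul_add, mul_one]
    gcongr
    exact inv_le_one_of_one_le₀ hR
  calc (1 + ‖R⁻¹ • x‖) ^ (-δ) ≤ (1 + ‖R⁻¹ • x‖) ^ (-γ) :=
        Real.rpow_le_rpow_of_exponent_le (by linarith [norm_nonneg (R⁻¹ • x)]) (by linarith)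
    _ ≤ (R⁻¹ * (1 + ‖x‖)) ^ (-γ) :=
        Real.rpow_le_rpow_of_nonpos (by positivity) hbase (by linarith)
    _ = R ^ γ * (1 + ‖x‖) ^ (-γ) := by
        rw [Real.mul_rpow (by positivity) (by positivity), Real.inv_rpow hR0.le,
          Real.rpow_neg hR0.le, inv_inv]

lemma gagliardoIntegrand_comp_inv_smul {α R : ℝ} (hR : 0 < R) (v w : E → ℝ) (p : E × E) :
    gagliardoIntegrand α v (fun x => w (R⁻¹ • x)) (R • p) =
      R ^ (-α) * gagliardoIntegrand α (fun x => v (R • x)) w p := by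
  simp only [gagliardoIntegrand, Prod.smul_fst, Prod.smul_snd, inv_smul_smul₀ hR.ne', ← smul_sub,
    norm_smul, Real.norm_of_nonneg hR.le]
  rw [Real.mul_rpow hR.le (norm_nonneg _), Real.rpow_neg hR.le, div_mul_eq_div_div_swap,
    div_eq_inv_mul _ (R ^ α)]

variable [FiniteDimensional ℝ E] [MeasureSpace E] [BorelSpace E]

lemma measurableSet_offDiagonal (ε : ℝ) : MeasurableSet (offDiagonal E ε) :=
  measurableSet_lt (by fun_prop) (by fun_prop)

variable [(volume : Measure E).IsAddHaarMeasure]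

local notation "dim" => Module.finrank ℝ E

instance isAddHaarMeasure_volume_prod : (volume : Measure (E × E)).IsAddHaarMeasure :=
  inferInstanceAs ((volume : Measure E).prod volume).IsAddHaarMeasure

lemma integral_gagliardoIntegrand_comp_inv_smul {α R : ℝ} (hR : 0 < R) (v w : E → ℝ) :
    ∫ p, gagliardoIntegrand α v (fun x => w (R⁻¹ • x)) p =
      R ^ (2 * dim - α) * ∫ p, gagliardoIntegrand α (fun x => v (R • x)) w p := by
  have hscale := Measure.integral_comp_smul_of_nonneg volume
    (gagliardoIntegrand α v fun x => w (R⁻¹ • x)) R (hR := hR.le)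
  simp_rw [gagliardoIntegrand_comp_inv_smul hR, integral_const_mul] at hscale
  rw [eq_inv_smul_iff₀ (by positivity), smul_eq_mul, Module.finrank_prod, ← Real.rpow_natCast]
    at hscale
  rw [← hscale, ← mul_assoc, ← Real.rpow_add hR]
  congr 2
  push_cast
  ring

lemma integrable_abs_comp_smul_mul_one_add_norm_rpow {γ δ R : ℝ} (hγ : 0 ≤ γ) (hγδ : γ ≤ δ)
    (hR : 1 ≤ R) {v : E → ℝ} (hv : Measurable v)
    (hv_int : Integrable fun x => |v x| * (1 + ‖x‖) ^ (-γ)) :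
    Integrable (fun x => |v (R • x)| * (1 + ‖x‖) ^ (-δ)) ∧
      ∫ x, |v (R • x)| * (1 + ‖x‖) ^ (-δ) ≤
        R ^ (γ - dim) * ∫ x, |v x| * (1 + ‖x‖) ^ (-γ) := by
  have hR0 : 0 < R := one_pos.trans_le hR
  have hle : ∀ x, |v x| * (1 + ‖R⁻¹ • x‖) ^ (-δ) ≤ R ^ γ * (|v x| * (1 + ‖x‖) ^ (-γ)) := fun x =>
    (mul_le_mul_of_nonneg_left (one_add_norm_inv_smul_rpow_neg_le hγ hγδ hR x)
      (abs_nonneg _)).trans_eq (mul_left_comm _ _ _)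
  have hint : Integrable fun x => |v x| * (1 + ‖R⁻¹ • x‖) ^ (-δ) :=
    (hv_int.const_mul (R ^ γ)).mono' (by fun_prop) (Eventually.of_forall fun x => by
      rw [Real.norm_of_nonneg (by positivity)]
      exact hle x)
  have hscale := Measure.integral_comp_smul_of_nonneg volume
    (fun x => |v x| * (1 + ‖R⁻¹ • x‖) ^ (-δ)) R (hR := hR0.le)
  have hint_scale := hint.comp_smul hR0.ne'
  simp only [inv_smul_smul₀ hR0.ne'] at hscale hint_scale
  refine ⟨hint_scale, ?_⟩
  rw [hscale, smul_eq_mul, sub_eq_neg_add, Real.rpow_add hR0, Real.rpow_neg hR0.le,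
    Real.rpow_natCast, mul_assoc, ← integral_const_mul (R ^ γ)]
  refine mul_le_mul_of_nonneg_left (integral_mono hint (hv_int.const_mul _) hle) (by positivity)

variable [Nontrivial E]

lemma lintegral_enorm_le_of_abs_le_rpow {α A B : ℝ} (hα : dim < α) (hα' : α < dim + 2)
    (hA : 0 ≤ A) (hB : 0 ≤ B) (x : E) {f : E → ℝ}
    (hf_near : ∀ y, |f y| ≤ A * ‖x - y‖ ^ (-(α - 2))) (hf_far : ∀ y, |f y| ≤ B * ‖x - y‖ ^ (-α)) :
    ∫⁻ y, ‖f y‖ₑ ≤ ENNReal.ofReal (A * ((volume : Measure E).toSphere.real univ / (dim - (α - 2))) +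
      B * ((volume : Measure E).toSphere.real univ / (α - dim))) := by
  have hσ : 0 ≤ (volume : Measure E).toSphere.real univ := measureReal_nonneg
  have hmeas : MeasurableSet {y : E | ‖x - y‖ ≤ 1} := measurableSet_le (by fun_prop) (by fun_prop)
  have hcompl : {y : E | ‖x - y‖ ≤ 1}ᶜ = {y | 1 < ‖x - y‖} := by
    ext y
    simp
  have hnear := setLIntegral_enorm_le_of_abs_le_mul hmeas hA (fun y _ => hf_near y)
    (setLIntegral_norm_sub_rpow_of_le volume (by linarith) one_pos x)
  have hfar := setLIntegral_enorm_le_of_abs_le_mul hmeas.compl hB (fun y _ => hf_far y)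
    (hcompl ▸ setLIntegral_norm_sub_rpow_of_lt volume hα one_pos x)
  rw [Real.one_rpow, mul_one] at hnear hfar
  rw [← lintegral_add_compl _ hmeas, ENNReal.ofReal_add
    (mul_nonneg hA (div_nonneg hσ (by linarith))) (mul_nonneg hB (div_nonneg hσ (by linarith)))]
  exact add_le_add hnear hfar

lemma exists_forall_abs_integral_diffQuotient_le {α K : ℝ} (hα : dim < α) (hα' : α < dim + 2)
    {w : E → ℝ} (hw : ContDiff ℝ 2 w) (hw_supp : HasCompactSupport w) (hK : ∀ x, |w x| ≤ K) :
    ∃ C : ℝ, ∀ ε : ℝ, 0 < ε → ∀ x : E,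
      |∫ y, (offDiagonal E ε).indicator (diffQuotient α w) (x, y)| ≤ C := by
  obtain ⟨L, hL, hw_diff⟩ := exists_abs_second_difference_le hw hw_supp
  have hK0 : 0 ≤ K := (abs_nonneg (w 0)).trans (hK 0)
  set C := L * ((volume : Measure E).toSphere.real univ / (dim - (α - 2))) +
    4 * K * ((volume : Measure E).toSphere.real univ / (α - dim))
  have hC : 0 ≤ C := add_nonneg
    (mul_nonneg hL (div_nonneg measureReal_nonneg (by linarith)))
    (mul_nonneg (by linarith) (div_nonneg measureReal_nonneg (by linarith)))
  refine ⟨C, fun ε hε x => ?_⟩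
  set f : E → ℝ := fun y => (offDiagonal E ε).indicator (diffQuotient α w) (x, y)
  have hf_far : ∀ y, |f y| ≤ 2 * K * ‖x - y‖ ^ (-α) := fun y =>
    abs_indicator_diffQuotient_le hK _ _
  have hf_int : Integrable f := by
    refine ⟨(((measurable_diffQuotient hw.continuous.measurable).indicator
      (measurableSet_offDiagonal ε)).comp measurable_prodMk_left).aestronglyMeasurable, ?_⟩
    refine (lintegral_enorm_le_of_abs_le_rpow_of_lt volume hα hε (by positivity) x (fun y hy => ?_)
      fun y _ => hf_far y).trans_lt ENNReal.ofReal_lt_top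
    exact indicator_of_notMem (show (x, y) ∉ offDiagonal E ε from hy.not_gt) _
  have hsum : ∫ y, (f y + f (x + x - y)) = 2 * ∫ y, f y := by
    rw [integral_add hf_int (hf_int.comp_sub_left (x + x)),
      integral_sub_left_eq_self f volume (x + x), two_mul]
  have hsum_far : ∀ y, |f y + f (x + x - y)| ≤ 4 * K * ‖x - y‖ ^ (-α) := fun y => by
    have hnorm : ‖x - (x + x - y)‖ = ‖x - y‖ := by rw [← norm_sub_rev y]; congr 1; abel
    have h := hf_far (x + x - y)
    rw [hnorm] at h
    linarith [abs_add_le (f y) (f (x + x - y)), hf_far y]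
  have habs := abs_integral_le_of_lintegral_enorm_le hC <|
    lintegral_enorm_le_of_abs_le_rpow hα hα' hL (by positivity) x
      (abs_add_reflection_diffQuotient_le ε hL hw_diff x) hsum_far
  rw [hsum, abs_mul, abs_two] at habs
  linarith [abs_nonneg (∫ y, f y)]

lemma lintegral_enorm_indicator_diffQuotient_le {α K η : ℝ} (hα : dim < α) (hη : 0 < η)
    {w : E → ℝ} (hK : ∀ x, |w x| ≤ K) {T : Set (E × E)} (x : E)
    (hT : ∀ y, ‖x - y‖ ≤ η * (1 + ‖x‖) → T.indicator (diffQuotient α w) (x, y) = 0) :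
    ∫⁻ y, ‖T.indicator (diffQuotient α w) (x, y)‖ₑ ≤ ENNReal.ofReal
      (2 * K * ((volume : Measure E).toSphere.real univ / (α - dim) * η ^ (dim - α)) *
        (1 + ‖x‖) ^ (dim - α)) := by
  have hK0 : 0 ≤ K := (abs_nonneg (w 0)).trans (hK 0)
  have h := lintegral_enorm_le_of_abs_le_rpow_of_lt volume hα (by positivity)
    (by positivity) x hT fun y _ => abs_indicator_diffQuotient_le hK T (x, y)
  rwa [Real.mul_rpow hη.le (by positivity), ← mul_assoc, ← mul_assoc, mul_assoc (2 * K)] at h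

lemma exists_forall_abs_integral_diffQuotient_le_rpow {α K r₀ : ℝ} (hα : dim < α)
    (hα' : α < dim + 2) {w : E → ℝ} (hw : ContDiff ℝ 2 w) (hr₀ : 0 ≤ r₀)
    (hw_supp : ∀ x, r₀ < ‖x‖ → w x = 0) (hK : ∀ x, |w x| ≤ K) :
    ∃ C : ℝ, 0 ≤ C ∧ ∀ ε : ℝ, 0 < ε → ∀ x : E,
      |∫ y, (offDiagonal E ε).indicator (diffQuotient α w) (x, y)| ≤
        C * (1 + ‖x‖) ^ (dim - α) := by
  have hcpt : HasCompactSupport w := .intro (isCompact_closedBall 0 r₀) fun x hx =>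
    hw_supp x (by simpa using hx)
  obtain ⟨C, hC⟩ := exists_forall_abs_integral_diffQuotient_le hα hα' hw hcpt hK
  have hK0 : 0 ≤ K := (abs_nonneg (w 0)).trans (hK 0)
  have hC0 : 0 ≤ C := (abs_nonneg _).trans (hC 1 one_pos 0)
  set A : ℝ := 2 * K * ((volume : Measure E).toSphere.real univ / (α - dim) *
    (1 / 4 : ℝ) ^ (dim - α)) with hA
  have hA0 : 0 ≤ A := mul_nonneg (by linarith)
    (mul_nonneg (div_nonneg measureReal_nonneg (by linarith)) (by positivity))
  refine ⟨A + C * (2 + 2 * r₀) ^ (α - dim), by positivity, fun ε hε x => ?_⟩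
  have hpow : 0 < (1 + ‖x‖) ^ (dim - α) := by positivity
  rcases le_or_gt (1 + 2 * r₀) ‖x‖ with hx | hx
  · refine (abs_integral_le_of_lintegral_enorm_le (by positivity)
      (lintegral_enorm_indicator_diffQuotient_le (η := 1 / 4) hα (by norm_num) hK x
        fun y hy => ?_)).trans ?_
    · rw [indicator_apply_eq_zero]
      exact fun _ => diffQuotient_eq_zero_of_far hr₀ hw_supp hx hy
    · rw [← hA, add_mul]
      exact le_add_of_nonneg_right (by positivity)
  · have hone : 1 ≤ (2 + 2 * r₀) ^ (α - dim) * (1 + ‖x‖) ^ (dim - α) := by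
      rw [← neg_sub α, Real.rpow_neg (by positivity), ← div_eq_mul_inv, one_le_div (by positivity)]
      exact Real.rpow_le_rpow (by positivity) (by linarith) (by linarith)
    calc _ ≤ C * 1 := by rw [mul_one]; exact hC ε hε x
      _ ≤ C * ((2 + 2 * r₀) ^ (α - dim) * (1 + ‖x‖) ^ (dim - α)) := by gcongr
      _ ≤ _ := by
        rw [add_mul, mul_assoc C]
        exact le_add_of_nonneg_left (mul_nonneg hA0 hpow.le)

lemma exists_forall_lintegral_enorm_diffQuotient_le {α K r₀ ε : ℝ} (hα : dim < α) {w : E → ℝ}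
    (hr₀ : 0 ≤ r₀) (hw_supp : ∀ x, r₀ < ‖x‖ → w x = 0) (hK : ∀ x, |w x| ≤ K) (hε : 0 < ε) :
    ∃ A : ℝ, ∀ x : E, ∫⁻ y, ‖(offDiagonal E ε).indicator (diffQuotient α w) (x, y)‖ₑ ≤
      ENNReal.ofReal (A * (1 + ‖x‖) ^ (dim - α)) := by
  set η := min (1 / 4) (ε / (2 + 2 * r₀))
  refine ⟨_, fun x => lintegral_enorm_indicator_diffQuotient_le (η := η) hα
    (lt_min (by norm_num) (by positivity)) hK x fun y hy => ?_⟩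
  rw [indicator_apply_eq_zero]
  intro hxy
  refine diffQuotient_eq_zero_of_far hr₀ hw_supp ?_ (hy.trans ?_)
  · by_contra! hx
    refine absurd (show ε < ‖x - y‖ from hxy) (not_lt.2 (hy.trans ?_))
    calc η * (1 + ‖x‖) ≤ ε / (2 + 2 * r₀) * (2 + 2 * r₀) :=
          mul_le_mul (min_le_right _ _) (by linarith) (by positivity) (by positivity)
      _ = ε := div_mul_cancel₀ _ (by positivity)
  · gcongr
    exact min_le_left _ _

lemma exists_forall_abs_integral_gagliardoIntegrand_le {α : ℝ} (hα : dim < α)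
    (hα' : α < dim + 2) {w : E → ℝ} (hw : ContDiff ℝ 2 w) (hw_supp : HasCompactSupport w) :
    ∃ C : ℝ, 0 ≤ C ∧ ∀ v : E → ℝ, Measurable v →
      Integrable (fun x => |v x| * (1 + ‖x‖) ^ (dim - α)) →
      Integrable (gagliardoIntegrand α v w) →
      |∫ p, gagliardoIntegrand α v w p| ≤ C * ∫ x, |v x| * (1 + ‖x‖) ^ (dim - α) := by
  obtain ⟨K, hK⟩ := hw.continuous.bounded_above_of_compact_support hw_supp
  obtain ⟨r₀, hr₀, hsupp⟩ := hw_supp.exists_pos_le_norm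
  have hw_zero : ∀ x, r₀ < ‖x‖ → w x = 0 := fun x hx => hsupp x hx.le
  obtain ⟨C, hC, hw_bound⟩ :=
    exists_forall_abs_integral_diffQuotient_le_rpow hα hα' hw hr₀.le hw_zero hK
  refine ⟨2 * C, by positivity, fun v hv hv_int hint => ?_⟩
  have hlim := tendsto_setIntegral_gagliardoIntegrand (l := 𝓝[>] (0 : ℝ)) hint
    measurableSet_offDiagonal fun p hp => by
      filter_upwards [Ioo_mem_nhdsGT (norm_pos_iff.2 (sub_ne_zero.2 hp))] with ε hε using hε.2
  refine le_of_tendsto hlim.abs ?_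
  filter_upwards [self_mem_nhdsWithin] with ε hε
  obtain ⟨A, hA⟩ := exists_forall_lintegral_enorm_diffQuotient_le hα hr₀.le hw_zero hK hε
  have hprod : Integrable fun p : E × E =>
      v p.1 * (offDiagonal E ε).indicator (diffQuotient α w) p := by
    refine integrable_comp_fst_mul_of_lintegral_enorm_le hv
      ((measurable_diffQuotient hw.continuous.measurable).indicator (measurableSet_offDiagonal ε))
      ?_ (Eventually.of_forall hA)
    refine (hv_int.const_mul A).congr' (by fun_prop) (Eventually.of_forall fun x => ?_)
    rw [norm_mul, norm_mul, norm_mul, norm_mul,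
      Real.norm_eq_abs |v x|, abs_abs, Real.norm_eq_abs (v x), mul_left_comm]
  have hswap : ∀ p : E × E, p.swap ∈ offDiagonal E ε ↔ p ∈ offDiagonal E ε := fun p => by
    simp only [offDiagonal, mem_ofPred_eq, Prod.fst_swap, Prod.snd_swap, norm_sub_rev p.2]
  rw [setIntegral_gagliardoIntegrand_eq (measurableSet_offDiagonal ε) hswap hprod, abs_mul,
    abs_two, mul_assoc]
  gcongr
  rw [← integral_const_mul, ← Real.norm_eq_abs]
  refine norm_integral_le_of_norm_le (hv_int.const_mul C) (Eventually.of_forall fun x => ?_)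
  rw [norm_mul, Real.norm_eq_abs, Real.norm_eq_abs, mul_left_comm]
  exact mul_le_mul_of_nonneg_left (hw_bound ε hε x) (abs_nonneg _)

-- Rescaling the previous bound: the dilated cut-off `w (x / R)` costs `R ^ (dim + γ - α)`, which
-- tends to zero as soon as `γ < α - dim`.
lemma exists_forall_abs_integral_gagliardoIntegrand_comp_inv_smul_le {α γ : ℝ} (hγ : 0 ≤ γ)
    (hγα : γ < α - dim) (hα' : α < dim + 2) {w : E → ℝ} (hw : ContDiff ℝ 2 w)
    (hw_supp : HasCompactSupport w) :
    ∃ C : ℝ, ∀ R : ℝ, 1 ≤ R → ∀ v : E → ℝ, Measurable v →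
      Integrable (fun x => |v x| * (1 + ‖x‖) ^ (-γ)) →
      Integrable (gagliardoIntegrand α v fun x => w (R⁻¹ • x)) →
      |∫ p, gagliardoIntegrand α v (fun x => w (R⁻¹ • x)) p| ≤
        C * R ^ (dim + γ - α) * ∫ x, |v x| * (1 + ‖x‖) ^ (-γ) := by
  obtain ⟨C, hC, hbound⟩ :=
    exists_forall_abs_integral_gagliardoIntegrand_le (by linarith) hα' hw hw_supp
  refine ⟨C, fun R hR v hv hv_int hint => ?_⟩
  have hR0 : 0 < R := one_pos.trans_le hR
  obtain ⟨hV_int, hV_le⟩ := integrable_abs_comp_smul_mul_one_add_norm_rpow hγ hγα.le hR hv hv_int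
  rw [neg_sub] at hV_int hV_le
  have hV_gag : Integrable (gagliardoIntegrand α (fun x => v (R • x)) w) := by
    have h := (hint.comp_smul hR0.ne').const_mul (R ^ α)
    simpa only [gagliardoIntegrand_comp_inv_smul hR0, ← mul_assoc, ← Real.rpow_add hR0,
      add_neg_cancel, Real.rpow_zero, one_mul] using h
  have hV := hbound (fun x => v (R • x)) (hv.comp (measurable_const_smul R)) hV_int hV_gag
  rw [integral_gagliardoIntegrand_comp_inv_smul hR0, abs_mul, abs_of_pos (by positivity)]
  calc R ^ (2 * dim - α) * |∫ p, gagliardoIntegrand α (fun x => v (R • x)) w p|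
      ≤ R ^ (2 * dim - α) * (C * (R ^ (γ - dim) * ∫ x, |v x| * (1 + ‖x‖) ^ (-γ))) := by
        gcongr
        exact hV.trans (mul_le_mul_of_nonneg_left hV_le hC)
    _ = C * (R ^ (2 * dim - α) * R ^ (γ - dim)) * ∫ x, |v x| * (1 + ‖x‖) ^ (-γ) := by ring
    _ = C * R ^ (dim + γ - α) * ∫ x, |v x| * (1 + ‖x‖) ^ (-γ) := by
        rw [← Real.rpow_add hR0]
        congr 3
        ring

end CutOff

section FiniteEnergyTests

/-- A smooth contraction of the line vanishing on `(-∞, 1]` and differing from the identity by a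
constant on `[2, ∞)`. -/
def softThreshold (t : ℝ) : ℝ := ∫ τ in (0 : ℝ)..t, Real.smoothTransition (τ - 1)

lemma continuous_smoothTransition_sub_one :
    Continuous fun τ : ℝ => Real.smoothTransition (τ - 1) :=
  Real.smoothTransition.continuous.comp (continuous_sub_right 1)

lemma hasDerivAt_softThreshold (t : ℝ) :
    HasDerivAt softThreshold (Real.smoothTransition (t - 1)) t :=
  intervalIntegral.integral_hasDerivAt_right
    (continuous_smoothTransition_sub_one.intervalIntegrable _ _)
    (continuous_smoothTransition_sub_one.stronglyMeasurableAtFilter _ _)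
    continuous_smoothTransition_sub_one.continuousAt

lemma contDiff_softThreshold : ContDiff ℝ (⊤ : ℕ∞) softThreshold := by
  refine contDiff_infty_iff_deriv.2 ⟨fun t => (hasDerivAt_softThreshold t).differentiableAt, ?_⟩
  rw [funext fun t => (hasDerivAt_softThreshold t).deriv]
  exact Real.smoothTransition.contDiff.comp (contDiff_id.sub contDiff_const)

lemma lipschitzWith_softThreshold : LipschitzWith 1 softThreshold := by
  refine lipschitzWith_of_nnnorm_deriv_le
    (fun t => (hasDerivAt_softThreshold t).differentiableAt) fun t => ?_
  rw [(hasDerivAt_softThreshold t).deriv, ← NNReal.coe_le_coe, coe_nnnorm, NNReal.coe_one,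
    Real.norm_of_nonneg (Real.smoothTransition.nonneg _)]
  exact Real.smoothTransition.le_one _

lemma softThreshold_of_le_one {t : ℝ} (ht : t ≤ 1) : softThreshold t = 0 := by
  refine (intervalIntegral.integral_congr fun τ hτ => ?_).trans intervalIntegral.integral_zero
  exact Real.smoothTransition.zero_of_nonpos
    (sub_nonpos.2 (hτ.2.trans (max_le zero_le_one ht)))

lemma softThreshold_nonneg (t : ℝ) : 0 ≤ softThreshold t := by
  rcases le_total t 1 with ht | ht
  · exact (softThreshold_of_le_one ht).ge
  · exact intervalIntegral.integral_nonneg (zero_le_one.trans ht)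
      fun τ _ => Real.smoothTransition.nonneg _

lemma abs_softThreshold_sub_self_le {t : ℝ} (ht : 0 ≤ t) : |softThreshold t - t| ≤ 2 := by
  have hle (r : ℝ) (hr : 0 ≤ r) : softThreshold r ≤ r := by
    simpa [softThreshold_of_le_one zero_le_one, Real.dist_eq, abs_of_nonneg hr,
      abs_of_nonneg (softThreshold_nonneg r)] using lipschitzWith_softThreshold.dist_le_mul r 0
  rw [abs_sub_comm, abs_of_nonneg (sub_nonneg.2 (hle t ht))]
  rcases le_total t 2 with h | h
  · linarith [softThreshold_nonneg t]
  · have hshift : softThreshold t - softThreshold 2 = t - 2 := by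
      refine (intervalIntegral.integral_interval_sub_left
        (continuous_smoothTransition_sub_one.intervalIntegrable _ _)
        (continuous_smoothTransition_sub_one.intervalIntegrable _ _)).trans
        ((intervalIntegral.integral_congr (g := 1) fun τ hτ => ?_).trans (by simp))
      exact Real.smoothTransition.one_of_one_le (by linarith [(uIcc_of_le h ▸ hτ).1])
    linarith [softThreshold_nonneg 2]

lemma abs_mul_softThreshold_div_sub_le {δ : ℝ} (hδ : 0 < δ) (r r' : ℝ) :
    |δ * softThreshold (r / δ) - δ * softThreshold (r' / δ)| ≤ |r - r'| := by
  rw [← mul_sub, abs_mul, abs_of_pos hδ, ← le_div_iff₀' hδ, ← abs_of_pos hδ, ← abs_div,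
    abs_of_pos hδ, sub_div]
  simpa [Real.dist_eq] using lipschitzWith_softThreshold.dist_le_mul (r / δ) (r' / δ)

lemma tendsto_mul_softThreshold_div {r : ℝ} (hr : 0 ≤ r) {δ : ℕ → ℝ} (hδ : ∀ n, 0 < δ n)
    (hδ_lim : Tendsto δ atTop (𝓝 0)) :
    Tendsto (fun n => δ n * softThreshold (r / δ n)) atTop (𝓝 r) := by
  rw [tendsto_iff_norm_sub_tendsto_zero]
  refine squeeze_zero (fun n => norm_nonneg _) (fun n => ?_) (by simpa using hδ_lim.mul_const 2)
  rw [show δ n * softThreshold (r / δ n) - r = δ n * (softThreshold (r / δ n) - r / δ n) by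
    rw [mul_sub, mul_div_cancel₀ _ (hδ n).ne'], norm_mul, Real.norm_of_nonneg (hδ n).le]
  exact mul_le_mul_of_nonneg_left (abs_softThreshold_sub_self_le (div_nonneg hr (hδ n).le))
    (hδ n).le

lemma exists_norm_le_one_add_norm_rpow_of_hasCompactSupport {E F : Type*} [NormedAddCommGroup E]
    [NormedAddCommGroup F] [NormedSpace ℝ F] {g : E → F} (hg : Continuous g)
    (hg_supp : HasCompactSupport g) (a : E) (b : ℝ) :
    ∃ K, ∀ x, ‖g x‖ ≤ K * (1 + ‖x - a‖) ^ (-b) := by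
  have hweight : Continuous fun x : E => (1 + ‖x - a‖) ^ b :=
    (continuous_const.add (continuous_sub_right a).norm).rpow_const
      fun x => .inl (add_pos_of_pos_of_nonneg one_pos (norm_nonneg _)).ne'
  obtain ⟨K, hK⟩ := (hweight.smul hg).bounded_above_of_compact_support
    (f := fun x => (1 + ‖x - a‖) ^ b • g x) hg_supp.smul_left
  refine ⟨K, fun x => ?_⟩
  rw [Real.rpow_neg (by positivity), ← div_eq_mul_inv, le_div_iff₀' (by positivity)]
  simpa only [norm_smul, Real.norm_of_nonneg (Real.rpow_nonneg
    (add_nonneg zero_le_one (norm_nonneg (x - a))) b)] using hK x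

variable {E : Type*} [NormedAddCommGroup E] [NormedSpace ℝ E] [MeasureSpace E]

/-- Nonnegative smooth functions vanishing at infinity, of finite energy for the Gagliardo form
with kernel `‖x - y‖ ^ (-α)`: limits of test functions in the sense of
`IsFiniteEnergyTest.exists_approx`. -/
structure IsFiniteEnergyTest (α : ℝ) (χ : E → ℝ) : Prop where
  contDiff : ContDiff ℝ (⊤ : ℕ∞) χ
  nonneg : ∀ x, 0 ≤ χ x
  integrable_gagliardoIntegrand : Integrable (gagliardoIntegrand α χ χ)
  tendsto_zero : Tendsto χ (cocompact E) (𝓝 0)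

namespace IsFiniteEnergyTest

variable {α : ℝ} {χ : E → ℝ}

lemma exists_abs_le (hχ : IsFiniteEnergyTest α χ) : ∃ K, ∀ x, |χ x| ≤ K := by
  let χ₀ : ZeroAtInftyContinuousMap E ℝ := ⟨⟨χ, hχ.contDiff.continuous⟩, hχ.tendsto_zero⟩
  obtain ⟨K, hK⟩ := χ₀.isBounded_range.exists_norm_le
  exact ⟨K, fun x => hK _ (mem_range_self x)⟩

lemma exists_approx (hχ : IsFiniteEnergyTest α χ) :
    ∃ ψ : ℕ → E → ℝ, (∀ n, ContDiff ℝ (⊤ : ℕ∞) (ψ n)) ∧ (∀ n, HasCompactSupport (ψ n)) ∧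
      (∀ n x y, |ψ n x - ψ n y| ≤ |χ x - χ y|) ∧ (∀ n x, |ψ n x| ≤ χ x) ∧
      ∀ x, Tendsto (fun n => ψ n x) atTop (𝓝 (χ x)) := by
  have hδ (n : ℕ) : (0 : ℝ) < 1 / ((n : ℝ) + 1) := Nat.one_div_pos_of_nat
  refine ⟨fun n x => 1 / ((n : ℝ) + 1) * softThreshold (χ x / (1 / ((n : ℝ) + 1))),
    fun n => contDiff_const.mul (contDiff_softThreshold.comp (hχ.contDiff.div_const _)),
    fun n => ?_, fun n x y => abs_mul_softThreshold_div_sub_le (hδ n) _ _, fun n x => ?_,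
    fun x => tendsto_mul_softThreshold_div (hχ.nonneg x) hδ
      tendsto_one_div_add_atTop_nhds_zero_nat⟩
  · obtain ⟨S, hS, hSχ⟩ := mem_cocompact.1 (hχ.tendsto_zero.eventually (gt_mem_nhds (hδ n)))
    refine HasCompactSupport.intro hS fun x hx => ?_
    have hlt : χ x < 1 / ((n : ℝ) + 1) := hSχ hx
    simp only [softThreshold_of_le_one ((div_le_one (hδ n)).2 hlt.le), mul_zero]
  · have h := abs_mul_softThreshold_div_sub_le (hδ n) (χ x) 0
    rwa [zero_div, softThreshold_of_le_one zero_le_one, mul_zero, sub_zero, sub_zero,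
      abs_of_nonneg (hχ.nonneg x)] at h

end IsFiniteEnergyTest

variable [FiniteDimensional ℝ E] [BorelSpace E] [(volume : Measure E).IsAddHaarMeasure]
variable [Nontrivial E]

local notation "dim" => Module.finrank ℝ E

lemma integrable_gagliardoIntegrand_self_of_hasCompactSupport {α : ℝ} (hα : dim < α)
    (hα' : α < dim + 2) {w : E → ℝ} (hw : ContDiff ℝ 1 w) (hw_supp : HasCompactSupport w) :
    Integrable (gagliardoIntegrand α w w) := by
  have : (0 : ℝ) ≤ dim := Nat.cast_nonneg _
  obtain ⟨K₁, hK₁⟩ :=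
    exists_norm_le_one_add_norm_rpow_of_hasCompactSupport hw.continuous hw_supp 0 dim
  obtain ⟨K₂, hK₂⟩ :=
    exists_norm_le_one_add_norm_rpow_of_hasCompactSupport
      (hw.continuous_fderiv one_ne_zero) (hw_supp.fderiv ℝ) 0 (dim + 1)
  refine integrable_gagliardoIntegrand_self (a := 0) (b := dim) (K := max K₁ K₂) hα hα'
    (by linarith) (hw.differentiable one_ne_zero) (fun x => (hK₁ x).trans ?_)
    fun x => (hK₂ x).trans ?_
  · gcongr
    exact le_max_left _ _
  · gcongr
    exact le_max_right _ _

end FiniteEnergyTests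

section Supersolutions

/-- Nonnegative smooth functions on `[0, ∞)` decaying like `q ^ (-p)` together with their
derivative: the profiles of radial test functions written in terms of the squared radius. -/
structure IsRadialProfile (p : ℝ) (f : ℝ → ℝ) : Prop where
  contDiffAt : ∀ q, 0 ≤ q → ContDiffAt ℝ (⊤ : ℕ∞) f q
  nonneg : ∀ q, 0 ≤ q → 0 ≤ f q
  decay : ∃ A, ∀ q, 0 ≤ q → f q ≤ A * (1 + q) ^ (-p) ∧ |deriv f q| ≤ A * (1 + q) ^ (-(p + 1))

namespace IsRadialProfile

variable {p : ℝ} {f g : ℝ → ℝ}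

lemma differentiableAt (hf : IsRadialProfile p f) {q : ℝ} (hq : 0 ≤ q) : DifferentiableAt ℝ f q :=
  (hf.contDiffAt q hq).differentiableAt (by simp)

lemma add (hf : IsRadialProfile p f) (hg : IsRadialProfile p g) :
    IsRadialProfile p fun q => f q + g q where
  contDiffAt q hq := (hf.contDiffAt q hq).add (hg.contDiffAt q hq)
  nonneg q hq := add_nonneg (hf.nonneg q hq) (hg.nonneg q hq)
  decay := by
    obtain ⟨A, hA⟩ := hf.decay
    obtain ⟨B, hB⟩ := hg.decay
    refine ⟨A + B, fun q hq => ?_⟩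
    rw [deriv_fun_add (hf.differentiableAt hq) (hg.differentiableAt hq), add_mul, add_mul]
    exact ⟨add_le_add (hA q hq).1 (hB q hq).1,
      (abs_add_le _ _).trans (add_le_add (hA q hq).2 (hB q hq).2)⟩

lemma const_mul (hf : IsRadialProfile p f) {ε : ℝ} (hε : 0 ≤ ε) :
    IsRadialProfile p fun q => ε * f q where
  contDiffAt q hq := contDiffAt_const.mul (hf.contDiffAt q hq)
  nonneg q hq := mul_nonneg hε (hf.nonneg q hq)
  decay := by
    obtain ⟨A, hA⟩ := hf.decay
    refine ⟨ε * A, fun q hq => ?_⟩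
    rw [deriv_const_mul _ (hf.differentiableAt hq), abs_mul, abs_of_nonneg hε, mul_assoc, mul_assoc]
    exact ⟨mul_le_mul_of_nonneg_left (hA q hq).1 hε, mul_le_mul_of_nonneg_left (hA q hq).2 hε⟩

end IsRadialProfile

lemma hasDerivAt_one_add_mul_rpow_neg {l q : ℝ} (p : ℝ) (hlq : 0 < 1 + l * q) :
    HasDerivAt (fun q => (1 + l * q) ^ (-p)) (-(p * l * (1 + l * q) ^ (-(p + 1)))) q := by
  have haff : HasDerivAt (fun q => 1 + l * q) l q := by
    simpa using ((hasDerivAt_id q).const_mul l).const_add 1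
  refine (haff.rpow_const (p := -p) (.inl hlq.ne')).congr_deriv ?_
  rw [show -(p + 1) = -p - 1 by ring]
  ring

lemma hasDerivAt_exp_neg_mul (l q : ℝ) :
    HasDerivAt (fun q => Real.exp (-(l * q))) (-(l * Real.exp (-(l * q)))) q := by
  have hlin : HasDerivAt (fun q => -(l * q)) (-l) q := by
    simpa using ((hasDerivAt_id q).const_mul l).fun_neg
  exact hlin.exp.congr_deriv (by ring)

lemma one_add_mul_rpow_neg_le {l p q : ℝ} (hl : 0 < l) (hp : 0 ≤ p) (hq : 0 ≤ q) :
    (1 + l * q) ^ (-p) ≤ min 1 l ^ (-p) * (1 + q) ^ (-p) := by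
  have hmin : 0 < min 1 l := lt_min one_pos hl
  rw [← Real.mul_rpow hmin.le (by positivity)]
  refine Real.rpow_le_rpow_of_nonpos (by positivity) ?_ (neg_nonpos.2 hp)
  rw [mul_add, mul_one]
  exact add_le_add (min_le_left _ _) (mul_le_mul_of_nonneg_right (min_le_right _ _) hq)

lemma isRadialProfile_one_add_mul_rpow_neg {l p : ℝ} (hl : 0 < l) (hp : 0 ≤ p) :
    IsRadialProfile p fun q => (1 + l * q) ^ (-p) where
  contDiffAt q hq := (contDiffAt_const.add (contDiffAt_const.mul contDiffAt_id)).rpow_const_of_ne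
    (by positivity)
  nonneg q hq := by positivity
  decay := by
    have : 0 < min 1 l := lt_min one_pos hl
    refine ⟨min 1 l ^ (-p) + p * l * min 1 l ^ (-(p + 1)), fun q hq => ⟨?_, ?_⟩⟩
    · refine (one_add_mul_rpow_neg_le hl hp hq).trans ?_
      gcongr
      exact le_add_of_nonneg_right (by positivity)
    · rw [(hasDerivAt_one_add_mul_rpow_neg p (by positivity)).deriv, abs_neg,
        abs_of_nonneg (by positivity)]
      calc p * l * (1 + l * q) ^ (-(p + 1))
          ≤ p * l * (min 1 l ^ (-(p + 1)) * (1 + q) ^ (-(p + 1))) := by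
            gcongr
            exact one_add_mul_rpow_neg_le hl (by positivity) hq
        _ = p * l * min 1 l ^ (-(p + 1)) * (1 + q) ^ (-(p + 1)) := by ring
        _ ≤ _ := by
            gcongr
            exact le_add_of_nonneg_left (by positivity)

lemma exists_one_add_rpow_le_exp {r l : ℝ} (hr : 0 < r) (hl : 0 < l) :
    ∃ M : ℝ, 0 < M ∧ ∀ q, 0 ≤ q → (1 + q) ^ r ≤ M * Real.exp (l * q) := by
  refine ⟨(max 1 (r / l)) ^ r, by positivity, fun q hq => ?_⟩
  have hbase : 1 + q ≤ max 1 (r / l) * Real.exp (l / r * q) := calc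
    1 + q = 1 + r / l * (l / r * q) := by field_simp
    _ ≤ max 1 (r / l) + max 1 (r / l) * (l / r * q) := by
        gcongr
        · exact le_max_left _ _
        · exact le_max_right _ _
    _ = max 1 (r / l) * (l / r * q + 1) := by ring
    _ ≤ _ := by
        gcongr
        exact Real.add_one_le_exp _
  calc (1 + q) ^ r ≤ (max 1 (r / l) * Real.exp (l / r * q)) ^ r := by gcongr
    _ = _ := by
        rw [Real.mul_rpow (by positivity) (by positivity), ← Real.exp_mul]
        congr 2
        field_simp

lemma isRadialProfile_exp_neg_mul {p l : ℝ} (hp : 0 < p) (hl : 0 < l) :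
    IsRadialProfile p fun q => Real.exp (-(l * q)) where
  contDiffAt q _ := ContDiff.contDiffAt (by fun_prop)
  nonneg q _ := (Real.exp_pos _).le
  decay := by
    obtain ⟨M, hM, hexp⟩ := exists_one_add_rpow_le_exp (r := p + 1) (by positivity) hl
    have hle (q : ℝ) (hq : 0 ≤ q) : Real.exp (-(l * q)) ≤ M * (1 + q) ^ (-(p + 1)) := by
      rw [Real.rpow_neg (by positivity), ← div_eq_mul_inv, le_div_iff₀ (by positivity),
        Real.exp_neg, inv_mul_le_iff₀ (Real.exp_pos _), mul_comm]
      exact hexp q hq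
    refine ⟨M + l * M, fun q hq => ⟨?_, ?_⟩⟩
    · calc Real.exp (-(l * q)) ≤ M * (1 + q) ^ (-(p + 1)) := hle q hq
        _ ≤ M * (1 + q) ^ (-p) := by
            gcongr
            · linarith
            · linarith
        _ ≤ _ := by
            gcongr
            exact le_add_of_nonneg_right (by positivity)
    · rw [(hasDerivAt_exp_neg_mul l q).deriv, abs_neg, abs_of_nonneg (by positivity)]
      calc l * Real.exp (-(l * q)) ≤ l * (M * (1 + q) ^ (-(p + 1))) := by
            gcongr
            exact hle q hq
        _ = l * M * (1 + q) ^ (-(p + 1)) := by ring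
        _ ≤ _ := by
            gcongr
            exact le_add_of_nonneg_left hM.le

-- In the variable `q = w ^ (-1 / p)` the derivative is `-p⁻¹ * (q ^ (p + 1) * f' q)`.
lemma concaveOn_comp_rpow_neg_inv {p : ℝ} (hp : 0 < p) {f f' f'' : ℝ → ℝ}
    (hf : ∀ q, 0 < q → HasDerivAt f (f' q) q) (hf' : ∀ q, 0 < q → HasDerivAt f' (f'' q) q)
    (h : ∀ q, 0 < q → q * f'' q + (p + 1) * f' q ≤ 0) :
    ConcaveOn ℝ (Ioi 0) fun w => f (w ^ (-p⁻¹)) := by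
  have hflux (q : ℝ) (hq : 0 < q) : HasDerivAt (fun q => q ^ (p + 1) * f' q)
      (q ^ p * (q * f'' q + (p + 1) * f' q)) q := by
    refine ((Real.hasDerivAt_rpow_const (p := p + 1) (.inl hq.ne')).fun_mul
      (hf' q hq)).congr_deriv ?_
    rw [add_sub_cancel_right, Real.rpow_add_one hq.ne']
    ring
  have hanti : AntitoneOn (fun q => q ^ (p + 1) * f' q) (Ioi 0) := by
    refine antitoneOn_of_deriv_nonpos (convex_Ioi 0)
      (fun q hq => (hflux q hq).continuousAt.continuousWithinAt) ?_ ?_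
    all_goals rw [interior_Ioi]; intro q hq
    · exact (hflux q hq).differentiableAt.differentiableWithinAt
    · rw [(hflux q hq).deriv]
      exact mul_nonpos_of_nonneg_of_nonpos (Real.rpow_nonneg (mem_Ioi.1 hq).le _) (h q hq)
  have hcomp (w : ℝ) (hw : 0 < w) : HasDerivAt (fun w => f (w ^ (-p⁻¹)))
      (-p⁻¹ * ((w ^ (-p⁻¹)) ^ (p + 1) * f' (w ^ (-p⁻¹)))) w := by
    refine (HasDerivAt.comp w (hf _ (Real.rpow_pos_of_pos hw (-p⁻¹)))
      (Real.hasDerivAt_rpow_const (p := -p⁻¹) (.inl hw.ne'))).congr_deriv ?_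
    rw [← Real.rpow_mul hw.le, show -p⁻¹ * (p + 1) = -p⁻¹ - 1 by field_simp; ring]
    ring
  refine AntitoneOn.concaveOn_of_deriv (convex_Ioi 0)
    (fun w hw => (hcomp w hw).continuousAt.continuousWithinAt) ?_ ?_
  all_goals rw [interior_Ioi]; intro w hw
  · exact (hcomp w hw).differentiableAt.differentiableWithinAt
  · intro w' hw' hww'
    rw [(hcomp w hw).deriv, (hcomp w' hw').deriv]
    refine mul_le_mul_of_nonpos_left (hanti (Real.rpow_pos_of_pos hw' _)
      (Real.rpow_pos_of_pos hw _) ?_) (neg_nonpos.2 (inv_pos.2 hp).le)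
    exact Real.rpow_le_rpow_of_nonpos hw hww' (neg_nonpos.2 (inv_pos.2 hp).le)

lemma concaveOn_one_add_mul_rpow_neg {p l : ℝ} (hp : 0 < p) (hl : 0 < l) :
    ConcaveOn ℝ (Ioi 0) fun w => (1 + l * w ^ (-p⁻¹)) ^ (-p) := by
  refine concaveOn_comp_rpow_neg_inv hp (f := fun q => (1 + l * q) ^ (-p))
    (fun q hq => hasDerivAt_one_add_mul_rpow_neg p (by positivity))
    (fun q hq => ((hasDerivAt_one_add_mul_rpow_neg (p + 1) (by positivity)).const_mul
      (p * l)).neg) fun q hq => ?_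
  have hsplit : (1 + l * q) ^ (-(p + 1)) = (1 + l * q) ^ (-(p + 1 + 1)) * (1 + l * q) := by
    rw [← Real.rpow_add_one (by positivity)]
    congr 1
    ring
  have hpos : 0 ≤ p * (p + 1) * l * (1 + l * q) ^ (-(p + 1 + 1)) := by positivity
  rw [hsplit]
  linarith

-- A bubble is strictly a supersolution, with a margin decaying polynomially; this absorbs a small
-- multiple of any Gaussian.
lemma exists_concaveOn_one_add_rpow_neg_add_exp {p l : ℝ} (hp : 0 < p) (hl : 0 < l) :
    ∃ ε, 0 < ε ∧ ConcaveOn ℝ (Ioi 0) fun w =>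
      (1 + 1 * w ^ (-p⁻¹)) ^ (-p) + ε * Real.exp (-(l * w ^ (-p⁻¹))) := by
  obtain ⟨M, hM, hexp⟩ := exists_one_add_rpow_le_exp (r := p + 3) (by positivity) hl
  refine ⟨p * (p + 1) / (l ^ 2 * M), by positivity, ?_⟩
  set ε := p * (p + 1) / (l ^ 2 * M) with hε
  have : 0 < ε := by positivity
  refine concaveOn_comp_rpow_neg_inv hp (f := fun q => (1 + 1 * q) ^ (-p) +
      ε * Real.exp (-(l * q)))
    (fun q hq => (hasDerivAt_one_add_mul_rpow_neg p (by positivity)).add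
      ((hasDerivAt_exp_neg_mul l q).const_mul ε))
    (fun q hq => ((hasDerivAt_one_add_mul_rpow_neg (p + 1) (by positivity)).const_mul
      (p * 1)).neg.add (((hasDerivAt_exp_neg_mul l q).const_mul l).neg.const_mul ε)) fun q hq => ?_
  simp only [one_mul, mul_one]
  have hsplit : (1 + q) ^ (-(p + 1)) = (1 + q) ^ (-(p + 1 + 1)) * (1 + q) := by
    rw [← Real.rpow_add_one (by positivity)]
    congr 1
    ring
  have hgauss : (1 + q) * Real.exp (-(l * q)) ≤ M * (1 + q) ^ (-(p + 1 + 1)) := by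
    rw [Real.rpow_neg (by positivity), ← div_eq_mul_inv, le_div_iff₀ (by positivity), Real.exp_neg,
      mul_right_comm, ← div_eq_mul_inv, div_le_iff₀ (Real.exp_pos _)]
    refine le_trans (le_of_eq ?_) (hexp q hq.le)
    rw [show p + 3 = 1 + (p + 1 + 1) by ring, Real.rpow_add (by positivity) 1, Real.rpow_one]
  have hmargin : ε * l ^ 2 * ((1 + q) * Real.exp (-(l * q))) ≤
      p * (p + 1) * (1 + q) ^ (-(p + 1 + 1)) := by
    refine (mul_le_mul_of_nonneg_left hgauss (by positivity)).trans_eq ?_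
    rw [hε]
    field_simp
  have hnonneg : 0 ≤ ε * (l ^ 2 + (p + 1) * l) * Real.exp (-(l * q)) := by positivity
  rw [hsplit]
  linarith

lemma one_add_sq_rpow_neg_le {r p : ℝ} (hr : 0 ≤ r) (hp : 0 ≤ p) :
    (1 + r ^ 2) ^ (-p) ≤ 2 ^ p * (1 + r) ^ (-(2 * p)) := by
  have hsq : (1 + r) ^ 2 / 2 ≤ 1 + r ^ 2 := by linarith [sq_nonneg (1 - r)]
  refine (Real.rpow_le_rpow_of_nonpos (by positivity) hsq (neg_nonpos.2 hp)).trans_eq ?_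
  rw [Real.div_rpow (by positivity) zero_le_two, Real.rpow_neg zero_le_two, div_inv_eq_mul,
    ← Real.rpow_natCast_mul (by positivity), mul_comm]
  norm_num

variable {E : Type*} [NormedAddCommGroup E] [InnerProductSpace ℝ E]

lemma contDiff_norm_sub_sq (a : E) : ContDiff ℝ (⊤ : ℕ∞) fun x : E => ‖x - a‖ ^ 2 :=
  (contDiff_id.sub contDiff_const).norm_sq ℝ

namespace IsRadialProfile

variable {p : ℝ} {f : ℝ → ℝ}

lemma contDiff_comp_norm_sub_sq (hf : IsRadialProfile p f) (a : E) :
    ContDiff ℝ (⊤ : ℕ∞) fun x => f (‖x - a‖ ^ 2) :=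
  contDiff_iff_contDiffAt.2 fun x => (hf.contDiffAt _ (by positivity)).comp x
    (contDiff_norm_sub_sq a).contDiffAt

lemma norm_fderiv_comp_norm_sub_sq_le (hf : IsRadialProfile p f) (a x : E) :
    ‖fderiv ℝ (fun x => f (‖x - a‖ ^ 2)) x‖ ≤ |deriv f (‖x - a‖ ^ 2)| * (2 * ‖x - a‖) := by
  have hsq : HasFDerivAt (fun x => ‖x - a‖ ^ 2) (2 • innerSL ℝ (x - a)) x :=
    ((hasFDerivAt_id x).sub_const a).norm_sq.congr_fderiv (by ext; simp)
  have hcomp : HasFDerivAt (fun x => f (‖x - a‖ ^ 2)) _ x :=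
    (hf.differentiableAt (by positivity)).hasDerivAt.comp_hasFDerivAt x hsq
  rw [hcomp.fderiv, norm_smul, Real.norm_eq_abs]
  refine mul_le_mul_of_nonneg_left ?_ (abs_nonneg _)
  refine (norm_nsmul_le (n := 2)).trans_eq ?_
  rw [innerSL_apply_norm, Nat.cast_ofNat]

lemma exists_decay_comp_norm_sub_sq (hf : IsRadialProfile p f) (hp : 0 ≤ p) (a : E) :
    ∃ K, (∀ x, |f (‖x - a‖ ^ 2)| ≤ K * (1 + ‖x - a‖) ^ (-(2 * p))) ∧
      ∀ x, ‖fderiv ℝ (fun x => f (‖x - a‖ ^ 2)) x‖ ≤ K * (1 + ‖x - a‖) ^ (-(2 * p + 1)) := by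
  obtain ⟨A, hA⟩ := hf.decay
  have hA_nonneg : 0 ≤ A := by
    simpa using (hf.nonneg 0 le_rfl).trans (hA 0 le_rfl).1
  refine ⟨A * 2 ^ (p + 2), fun x => ?_, fun x => ?_⟩
  · rw [abs_of_nonneg (hf.nonneg _ (by positivity)), mul_assoc]
    refine (hA _ (by positivity)).1.trans (mul_le_mul_of_nonneg_left ?_ hA_nonneg)
    refine (one_add_sq_rpow_neg_le (norm_nonneg _) hp).trans ?_
    gcongr
    · exact one_le_two
    · linarith
  · refine (hf.norm_fderiv_comp_norm_sub_sq_le a x).trans ?_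
    calc |deriv f (‖x - a‖ ^ 2)| * (2 * ‖x - a‖)
        ≤ A * (2 ^ (p + 1) * (1 + ‖x - a‖) ^ (-(2 * (p + 1)))) * (2 * (1 + ‖x - a‖)) := by
          gcongr
          · exact (hA _ (by positivity)).2.trans (mul_le_mul_of_nonneg_left
              (one_add_sq_rpow_neg_le (norm_nonneg _) (by positivity)) hA_nonneg)
          · linarith
      _ = A * (2 ^ (p + 1) * 2) * ((1 + ‖x - a‖) ^ (-(2 * (p + 1))) * (1 + ‖x - a‖)) := by ring
      _ = A * 2 ^ (p + 2) * (1 + ‖x - a‖) ^ (-(2 * p + 1)) := by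
          rw [← Real.rpow_add_one two_ne_zero, ← Real.rpow_add_one (by positivity)]
          ring_nf

lemma tendsto_comp_norm_sub_sq (hf : IsRadialProfile p f) (hp : 0 < p) [FiniteDimensional ℝ E]
    (a : E) : Tendsto (fun x => f (‖x - a‖ ^ 2)) (cocompact E) (𝓝 0) := by
  obtain ⟨A, hA⟩ := hf.decay
  refine squeeze_zero (fun x => hf.nonneg _ (by positivity)) (fun x => (hA _ (by positivity)).1) ?_
  have hnorm : Tendsto (fun x : E => ‖x - a‖) (cocompact E) atTop :=
    tendsto_norm_cocompact_atTop.comp (Homeomorph.subRight a).isClosedEmbedding.tendsto_cocompact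
  simpa using ((tendsto_rpow_neg_atTop hp).comp (tendsto_atTop_add_const_left _ 1
    ((tendsto_pow_atTop two_ne_zero).comp hnorm))).const_mul A

end IsRadialProfile

variable [FiniteDimensional ℝ E] [MeasurableSpace E] [BorelSpace E]

/-- Finite-energy test functions whose Gagliardo pairing with every sufficiently integrable
nonnegative function of finite energy is nonnegative: weak supersolutions of the fractional
Laplace equation. -/
structure IsSupersolution (α : ℝ) (χ : E → ℝ) : Prop extends IsFiniteEnergyTest α χ where
  integral_gagliardoIntegrand_nonneg : ∀ v : E → ℝ, Measurable v → (∀ x, 0 ≤ v x) →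
    Integrable (gagliardoIntegrand α v v) →
    (∀ a, Integrable fun x => v x * dist x a ^ (Module.finrank ℝ E - α)) →
    0 ≤ ∫ p, gagliardoIntegrand α v χ p

/-- The Gaussian centred at `a` with concentration parameter `l`. -/
def gaussian (l : ℝ) (a x : E) : ℝ := Real.exp (-(l * ‖x - a‖ ^ 2))

/-- The Aubin–Talenti bubble: up to normalisation the extremal of the Sobolev inequality for the
Gagliardo form with kernel `‖x - y‖ ^ (-α)`. -/
def bubble (α l : ℝ) (a x : E) : ℝ :=
  (1 + l * ‖x - a‖ ^ 2) ^ (-((2 * Module.finrank ℝ E - α) / 2))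

variable [Nontrivial E]

local notation "dim" => Module.finrank ℝ E

variable {α : ℝ}

lemma IsRadialProfile.isFiniteEnergyTest {f : ℝ → ℝ} (hα : dim < α) (hα' : α < dim + 2)
    (hα'' : α < 2 * dim) (hf : IsRadialProfile ((2 * dim - α) / 2) f) (a : E) :
    IsFiniteEnergyTest α fun x => f (‖x - a‖ ^ 2) where
  contDiff := hf.contDiff_comp_norm_sub_sq a
  nonneg x := hf.nonneg _ (by positivity)
  integrable_gagliardoIntegrand := by
    obtain ⟨K, hK, hdK⟩ := hf.exists_decay_comp_norm_sub_sq (by linarith) a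
    exact integrable_gagliardoIntegrand_self hα hα' (by linarith)
      ((hf.contDiff_comp_norm_sub_sq a).differentiable (by simp)) hK hdK
  tendsto_zero := hf.tendsto_comp_norm_sub_sq (by linarith) a

lemma IsRadialProfile.isSupersolution {f : ℝ → ℝ} (hα : dim < α) (hα' : α < dim + 2)
    (hα'' : α < 2 * dim) (hf : IsRadialProfile ((2 * dim - α) / 2) f)
    (hconc : ConcaveOn ℝ (Ioi 0) fun w => f (w ^ (-((2 * dim - α) / 2)⁻¹))) (a : E) :
    IsSupersolution α fun x => f (‖x - a‖ ^ 2) where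
  toIsFiniteEnergyTest := hf.isFiniteEnergyTest hα hα' hα'' a
  integral_gagliardoIntegrand_nonneg v hv hv_nonneg hvv hv_int := by
    have htest := hf.isFiniteEnergyTest hα hα' hα'' a
    have hmeas := htest.contDiff.continuous.measurable
    obtain ⟨K, hK⟩ := htest.exists_abs_le
    refine integral_gagliardoIntegrand_nonneg_of_concaveOn hα hconc (a := a) (fun z _ => ?_) hv
      hv_nonneg hmeas hK (integrable_gagliardoIntegrand hv hmeas hvv
        htest.integrable_gagliardoIntegrand) (hv_int a)
    have hp : 2 * (dim : ℝ) - α ≠ 0 := by linarith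
    rw [← Real.rpow_mul dist_nonneg, dist_eq_norm, ← Real.rpow_two]
    congr 2
    field_simp

lemma isSupersolution_bubble {l : ℝ} (hα : dim < α) (hα' : α < dim + 2) (hα'' : α < 2 * dim)
    (hl : 0 < l) (a : E) : IsSupersolution α (bubble α l a) :=
  (isRadialProfile_one_add_mul_rpow_neg hl (by linarith)).isSupersolution hα hα' hα''
    (concaveOn_one_add_mul_rpow_neg (by linarith) hl) a

lemma exists_isSupersolution_bubble_add_gaussian {l : ℝ} (hα : dim < α) (hα' : α < dim + 2)
    (hα'' : α < 2 * dim) (hl : 0 < l) :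
    ∃ ε, 0 < ε ∧ ∀ a : E, IsSupersolution α fun x => bubble α 1 a x + ε * gaussian l a x := by
  have hp : 0 < (2 * (dim : ℝ) - α) / 2 := by linarith
  obtain ⟨ε, hε, hconc⟩ := exists_concaveOn_one_add_rpow_neg_add_exp hp hl
  exact ⟨ε, hε, fun a => ((isRadialProfile_one_add_mul_rpow_neg one_pos hp.le).add
    ((isRadialProfile_exp_neg_mul hp hl).const_mul hε.le)).isSupersolution hα hα' hα'' hconc a⟩

end Supersolutions

section WeightedIntegrability

lemma one_add_norm_le_mul_dist {E : Type*} [SeminormedAddCommGroup E] {x a : E}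
    (h : 1 ≤ dist x a) : 1 + ‖x‖ ≤ (2 + ‖a‖) * dist x a := by
  have htri := norm_sub_norm_le x a
  rw [← dist_eq_norm] at htri
  nlinarith [norm_nonneg a]

lemma dist_rpow_neg_le_mul_one_add_norm_rpow_neg {E : Type*} [SeminormedAddCommGroup E]
    {β γ : ℝ} (hγ : 0 ≤ γ) (hγβ : γ ≤ β) {x a : E} (h : 1 ≤ dist x a) :
    dist x a ^ (-β) ≤ (2 + ‖a‖) ^ γ * (1 + ‖x‖) ^ (-γ) :=
  calc dist x a ^ (-β) ≤ dist x a ^ (-γ) :=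
        Real.rpow_le_rpow_of_exponent_le h (by linarith)
    _ ≤ ((2 + ‖a‖)⁻¹ * (1 + ‖x‖)) ^ (-γ) :=
        Real.rpow_le_rpow_of_nonpos (by positivity)
          ((inv_mul_le_iff₀ (by positivity)).2 (one_add_norm_le_mul_dist h)) (by linarith)
    _ = (2 + ‖a‖) ^ γ * (1 + ‖x‖) ^ (-γ) := by
        rw [Real.mul_rpow (by positivity) (by positivity), Real.inv_rpow (by positivity),
          Real.rpow_neg (by positivity), inv_inv]

variable {E : Type*} [NormedAddCommGroup E] [NormedSpace ℝ E] [Nontrivial E]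
  [FiniteDimensional ℝ E] [MeasurableSpace E] [BorelSpace E]
  (μ : Measure E) [μ.IsAddHaarMeasure]

lemma integrableOn_closedBall_dist_rpow_neg {β : ℝ} (hβ : β < Module.finrank ℝ E) (a : E) :
    IntegrableOn (fun x => dist x a ^ (-β)) (Metric.closedBall a 1) μ := by
  refine ⟨(by fun_prop : Measurable _).aestronglyMeasurable, ?_⟩
  rw [hasFiniteIntegral_iff_ofReal
    (Eventually.of_forall fun x => Real.rpow_nonneg dist_nonneg _)]
  simp_rw [dist_comm _ a, dist_eq_norm]
  have hball : Metric.closedBall a 1 = {x | ‖a - x‖ ≤ 1} := by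
    ext x
    rw [mem_closedBall_iff_norm']
    rfl
  rw [hball, setLIntegral_norm_sub_rpow_of_le μ hβ one_pos]
  exact ENNReal.ofReal_lt_top

lemma integrable_mul_dist_rpow_neg {β γ A : ℝ} (hβ : β < Module.finrank ℝ E) (hγ : 0 ≤ γ)
    (hγβ : γ ≤ β) {v : E → ℝ} (hv : Measurable v) (hvA : ∀ᵐ x ∂μ, |v x| ≤ A)
    (hv_int : Integrable (fun x => v x * (1 + ‖x‖) ^ (-γ)) μ) (a : E) :
    Integrable (fun x => v x * dist x a ^ (-β)) μ := by
  rw [← integrableOn_univ, ← union_compl_self (Metric.closedBall a 1)]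
  refine IntegrableOn.union ?_ ?_
  · exact (integrableOn_closedBall_dist_rpow_neg μ hβ a).bdd_mul hv.aestronglyMeasurable
      (ae_restrict_of_ae hvA)
  · refine (hv_int.norm.const_mul ((2 + ‖a‖) ^ γ)).integrableOn.mono'
      (by fun_prop : Measurable _).aestronglyMeasurable ?_
    filter_upwards [ae_restrict_mem Metric.isClosed_closedBall.measurableSet.compl] with x hx
    rw [norm_mul, norm_mul, Real.norm_of_nonneg (Real.rpow_nonneg dist_nonneg (-β)),
      Real.norm_of_nonneg (by positivity : 0 ≤ (1 + ‖x‖) ^ (-γ)), mul_left_comm]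
    exact mul_le_mul_of_nonneg_left
      (dist_rpow_neg_le_mul_one_add_norm_rpow_neg hγ hγβ (not_le.1 (notMem_of_mem_compl hx)).le)
      (norm_nonneg _)

end WeightedIntegrability

section TimeSlices

lemma rpow_le_rpow_sub_one_mul {x B m : ℝ} (hx : 0 ≤ x) (hxB : x ≤ B) (hm : 1 ≤ m) :
    x ^ m ≤ B ^ (m - 1) * x :=
  calc x ^ m = x ^ (m - 1) * x := by
        rw [← Real.rpow_add_one' hx (by linarith), sub_add_cancel]
    _ ≤ B ^ (m - 1) * x := by gcongr

variable {d : ℕ} {s m κ c γ M : ℝ} {ρ f ψ : Ed d → ℝ}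

lemma gagliardoSq_eq_mul_lintegral_enorm (s κ : ℝ) (v : Ed d → ℝ) :
    gagliardoSq d s κ v =
      ENNReal.ofReal (κ / 2) * ∫⁻ p, ‖gagliardoIntegrand (d + 2 * s) v v p‖ₑ := by
  refine congrArg _ (lintegral_congr fun p => ?_)
  rw [Real.enorm_of_nonneg (gagliardoIntegrand_self_nonneg _ v p), gagliardoIntegrand, sq]

lemma integrable_gagliardoIntegrand_self_of_gagliardoSq_lt_top (hκ : 0 < κ) {v : Ed d → ℝ}
    (hv : Measurable v) (h : gagliardoSq d s κ v < ⊤) :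
    Integrable (gagliardoIntegrand (d + 2 * s) v v) := by
  refine ⟨(measurable_gagliardoIntegrand hv hv).aestronglyMeasurable, ?_⟩
  rw [gagliardoSq_eq_mul_lintegral_enorm] at h
  exact hasFiniteIntegral_iff_enorm.2
    (ENNReal.lt_top_of_mul_ne_top_right h.ne (ENNReal.ofReal_pos.2 (by positivity)).ne')

lemma toReal_gagliardoSq (hκ : 0 < κ) {v : Ed d → ℝ} (hv : Measurable v) :
    (gagliardoSq d s κ v).toReal = κ / 2 * ∫ p, gagliardoIntegrand (d + 2 * s) v v p := by
  rw [gagliardoSq_eq_mul_lintegral_enorm, ENNReal.toReal_mul,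
    ENNReal.toReal_ofReal (by positivity),
    integral_eq_lintegral_of_nonneg_ae
      (Eventually.of_forall (gagliardoIntegrand_self_nonneg _ v))
      (measurable_gagliardoIntegrand hv hv).aestronglyMeasurable]
  simp_rw [Real.enorm_of_nonneg (gagliardoIntegrand_self_nonneg _ v _)]

/-- The properties of a time slice `f = u(·, t)` that hold at almost every time `t` of a weak
solution: the mass with respect to `ρ` is at most `M`, `f` is bounded, and `f ^ m` has finite
Gagliardo energy of order `s`. -/
structure IsGoodSlice (s m : ℝ) (ρ : Ed d → ℝ) (M : ℝ) (f : Ed d → ℝ) : Prop where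
  measurable : Measurable f
  nonneg : ∀ x, 0 ≤ f x
  integrable_mul : Integrable fun x => f x * ρ x
  integral_mul_le : ∫ x, f x * ρ x ≤ M
  integrable_gagliardoIntegrand :
    Integrable (gagliardoIntegrand (d + 2 * s) (fun x => f x ^ m) fun x => f x ^ m)
  exists_ae_le : ∃ B, ∀ᵐ x, f x ≤ B

namespace IsGoodSlice

lemma integrable_bdd_mul (hf : IsGoodSlice s m ρ M f) (hψ : Measurable ψ) {A : ℝ}
    (hA : ∀ x, |ψ x| ≤ A) : Integrable fun x => ψ x * (f x * ρ x) :=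
  hf.integrable_mul.bdd_mul hψ.aestronglyMeasurable (Eventually.of_forall hA)

lemma abs_mul_le (hf : IsGoodSlice s m ρ M f) {A : ℝ} (hA : ∀ x, |ψ x| ≤ A) {x : Ed d}
    (hρ : 0 ≤ ρ x) : |ψ x * (f x * ρ x)| ≤ A * (f x * ρ x) := by
  have hfρ : 0 ≤ f x * ρ x := mul_nonneg (hf.nonneg x) hρ
  rw [abs_mul, abs_of_nonneg hfρ]
  exact mul_le_mul_of_nonneg_right (hA x) hfρ

lemma abs_integral_mul_le (hf : IsGoodSlice s m ρ M f) (hρ : ∀ᵐ x, 0 ≤ ρ x) {A : ℝ}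
    (hA : ∀ x, |ψ x| ≤ A) : |∫ x, ψ x * (f x * ρ x)| ≤ A * M :=
  calc |∫ x, ψ x * (f x * ρ x)| ≤ ∫ x, A * (f x * ρ x) :=
        (Real.norm_eq_abs _).symm.trans_le (norm_integral_le_of_norm_le
          (hf.integrable_mul.const_mul A) (hρ.mono fun _ => hf.abs_mul_le hA))
    _ = A * ∫ x, f x * ρ x := integral_const_mul _ _
    _ ≤ A * M := mul_le_mul_of_nonneg_left hf.integral_mul_le ((abs_nonneg _).trans (hA 0))

lemma ae_rpow_mul_one_add_norm_rpow_le (hf : IsGoodSlice s m ρ M f) (hm : 1 ≤ m) (hc : 0 < c)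
    (hρ : ∀ᵐ x, c * (1 + ‖x‖) ^ (-γ) ≤ ρ x) {B : ℝ} (hB : ∀ᵐ x, f x ≤ B) :
    ∀ᵐ x, f x ^ m * (1 + ‖x‖) ^ (-γ) ≤ B ^ (m - 1) / c * (f x * ρ x) := by
  filter_upwards [hρ, hB] with x hρx hBx
  have hf0 := hf.nonneg x
  calc f x ^ m * (1 + ‖x‖) ^ (-γ) ≤ B ^ (m - 1) * f x * (ρ x / c) := by
        refine mul_le_mul (rpow_le_rpow_sub_one_mul hf0 hBx hm) ((le_div_iff₀' hc).2 hρx)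
          (by positivity) (mul_nonneg (Real.rpow_nonneg (hf0.trans hBx) _) hf0)
    _ = B ^ (m - 1) / c * (f x * ρ x) := by ring

lemma integrable_rpow_mul_one_add_norm_rpow (hf : IsGoodSlice s m ρ M f) (hm : 1 ≤ m)
    (hc : 0 < c) (hρ : ∀ᵐ x, c * (1 + ‖x‖) ^ (-γ) ≤ ρ x) :
    Integrable fun x => f x ^ m * (1 + ‖x‖) ^ (-γ) := by
  obtain ⟨B, hB⟩ := hf.exists_ae_le
  have hmeas := hf.measurable
  refine (hf.integrable_mul.const_mul (B ^ (m - 1) / c)).mono' (by fun_prop) ?_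
  filter_upwards [hf.ae_rpow_mul_one_add_norm_rpow_le hm hc hρ hB] with x hx
  have hf0 := hf.nonneg x
  rwa [Real.norm_of_nonneg (by positivity)]

lemma integral_rpow_mul_one_add_norm_rpow_le (hf : IsGoodSlice s m ρ M f) (hm : 1 ≤ m)
    (hc : 0 < c) (hρ : ∀ᵐ x, c * (1 + ‖x‖) ^ (-γ) ≤ ρ x) {B : ℝ} (hB0 : 0 ≤ B)
    (hB : ∀ᵐ x, f x ≤ B) : ∫ x, f x ^ m * (1 + ‖x‖) ^ (-γ) ≤ B ^ (m - 1) / c * M :=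
  calc ∫ x, f x ^ m * (1 + ‖x‖) ^ (-γ) ≤ ∫ x, B ^ (m - 1) / c * (f x * ρ x) :=
        integral_mono_ae (hf.integrable_rpow_mul_one_add_norm_rpow hm hc hρ)
          (hf.integrable_mul.const_mul _) (hf.ae_rpow_mul_one_add_norm_rpow_le hm hc hρ hB)
    _ = B ^ (m - 1) / c * ∫ x, f x * ρ x := integral_const_mul _ _
    _ ≤ B ^ (m - 1) / c * M := mul_le_mul_of_nonneg_left hf.integral_mul_le (by positivity)

lemma integral_gagliardoIntegrand_nonneg (hf : IsGoodSlice s m ρ M f) (hd : 2 * s < d)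
    (hm : 1 ≤ m) (hγ : 0 ≤ γ) (hγs : γ < 2 * s) (hc : 0 < c)
    (hρ : ∀ᵐ x, c * (1 + ‖x‖) ^ (-γ) ≤ ρ x) (hψ : IsSupersolution (d + 2 * s) ψ) :
    0 ≤ ∫ p, gagliardoIntegrand (d + 2 * s) (fun x => f x ^ m) ψ p := by
  have hd0 : 0 < d := Nat.cast_pos.1 (by linarith : (0 : ℝ) < d)
  have : NeZero d := ⟨hd0.ne'⟩
  obtain ⟨B, hB⟩ := hf.exists_ae_le
  refine hψ.integral_gagliardoIntegrand_nonneg _ (hf.measurable.pow_const m)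
    (fun x => Real.rpow_nonneg (hf.nonneg x) m) hf.integrable_gagliardoIntegrand fun a => ?_
  rw [finrank_euclideanSpace_fin, sub_add_cancel_left]
  refine integrable_mul_dist_rpow_neg volume (A := B ^ m) ?_ hγ hγs.le
    (hf.measurable.pow_const m) ?_ (hf.integrable_rpow_mul_one_add_norm_rpow hm hc hρ) a
  · rwa [finrank_euclideanSpace_fin]
  · filter_upwards [hB] with x hx
    rw [abs_of_nonneg (Real.rpow_nonneg (hf.nonneg x) m)]
    exact Real.rpow_le_rpow (hf.nonneg x) hx (by linarith)

end IsGoodSlice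

end TimeSlices

section WeakSolutions

namespace IsTimeTest

variable {θ : ℝ → ℝ}

lemma exists_tsupport_subset_Ioc (hθ : IsTimeTest θ) :
    ∃ t₁ t₂ : ℝ, 0 < t₁ ∧ t₁ < t₂ ∧ tsupport θ ⊆ Ioc t₁ t₂ := by
  rcases (tsupport θ).eq_empty_or_nonempty with hempty | hne
  · exact ⟨1, 2, one_pos, one_lt_two, by simp [hempty]⟩
  · obtain ⟨a, ha, ha_min⟩ := hθ.hasCompactSupport.isCompact.exists_isLeast hne
    obtain ⟨b, -, hb_max⟩ := hθ.hasCompactSupport.isCompact.exists_isGreatest hne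
    have ha0 : 0 < a := hθ.tsupport_subset ha
    exact ⟨a / 2, b, half_pos ha0, (half_lt_self ha0).trans_le (hb_max ha),
      fun t ht => ⟨(half_lt_self ha0).trans_le (ha_min ht), hb_max ht⟩⟩

lemma integrableOn_mul (hθ : IsTimeTest θ) {f : ℝ → ℝ}
    (hf : ∀ t₁ t₂, 0 < t₁ → t₁ < t₂ → IntegrableOn f (Ioc t₁ t₂)) :
    IntegrableOn (fun t => θ t * f t) (Ioi 0) := by
  obtain ⟨t₁, t₂, ht₁, h₁₂, hsupp⟩ := hθ.exists_tsupport_subset_Ioc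
  obtain ⟨A, hA⟩ := hθ.contDiff.continuous.bounded_above_of_compact_support hθ.hasCompactSupport
  refine Integrable.integrableOn ((integrableOn_iff_integrable_of_support_subset
    fun t ht => hsupp (subset_tsupport θ (left_ne_zero_of_mul ht))).1 ?_)
  exact (hf t₁ t₂ ht₁ h₁₂).bdd_mul hθ.contDiff.continuous.aestronglyMeasurable
    (Eventually.of_forall hA)

lemma isTestFn_mul (hθ : IsTimeTest θ) {d : ℕ} {ψ : Ed d → ℝ} (hψ : ContDiff ℝ (⊤ : ℕ∞) ψ)
    (hψ_supp : HasCompactSupport ψ) : IsTestFn d fun z => θ z.2 * ψ z.1 := by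
  have hsub : tsupport (fun z : Ed d × ℝ => θ z.2 * ψ z.1) ⊆ tsupport ψ ×ˢ tsupport θ :=
    closure_minimal (fun z hz => ⟨subset_tsupport _ (right_ne_zero_of_mul hz),
      subset_tsupport _ (left_ne_zero_of_mul hz)⟩)
      ((isClosed_tsupport _).prod (isClosed_tsupport _))
  exact ⟨(hθ.contDiff.comp contDiff_snd).mul (hψ.comp contDiff_fst),
    (hψ_supp.isCompact.prod hθ.hasCompactSupport.isCompact).of_isClosed_subset
      (isClosed_tsupport _) hsub,
    hsub.trans (prod_mono (subset_univ _) hθ.tsupport_subset)⟩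

end IsTimeTest

variable {d : ℕ}

/-- The moment `∫ ψ u(·, t) ρ`. -/
def moment (ρ : Ed d → ℝ) (u : Ed d → ℝ → ℝ) (ψ : Ed d → ℝ) (t : ℝ) : ℝ :=
  ∫ x, ψ x * (u x t * ρ x)

/-- The Gagliardo form of order `s` at `u(·, t) ^ m` and `ψ`, without the constant `κ / 2`. -/
def pairing (s m : ℝ) (u : Ed d → ℝ → ℝ) (ψ : Ed d → ℝ) (t : ℝ) : ℝ :=
  ∫ p, gagliardoIntegrand (d + 2 * s) (fun x => u x t ^ m) ψ p

variable {s m κ c γ M : ℝ} {ρ χ : Ed d → ℝ} {u : Ed d → ℝ → ℝ} {θ : ℝ → ℝ}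

lemma stronglyMeasurable_moment (hρ : Measurable ρ) (hu : Measurable (Function.uncurry u))
    {ψ : Ed d → ℝ} (hψ : Measurable ψ) : StronglyMeasurable (moment ρ u ψ) := by
  have hmeas : Measurable fun z : ℝ × Ed d => ψ z.2 * (u z.2 z.1 * ρ z.2) :=
    (hψ.comp measurable_snd).mul ((hu.comp measurable_swap).mul (hρ.comp measurable_snd))
  exact hmeas.stronglyMeasurable.integral_prod_right (ν := volume)

lemma measurable_gagliardoIntegrand_slice (hu : Measurable (Function.uncurry u))
    {w : Ed d → ℝ → ℝ} (hw : Measurable (Function.uncurry w)) (α : ℝ) :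
    Measurable fun z : ℝ × (Ed d × Ed d) =>
      gagliardoIntegrand α (fun x => u x z.1) (fun x => w x z.1) z.2 := by
  have hfst : Measurable fun z : ℝ × (Ed d × Ed d) => (z.2.1, z.1) := by fun_prop
  have hsnd : Measurable fun z : ℝ × (Ed d × Ed d) => (z.2.2, z.1) := by fun_prop
  exact (((hu.comp hfst).sub (hu.comp hsnd)).mul ((hw.comp hfst).sub (hw.comp hsnd))).div
    (by fun_prop)

lemma stronglyMeasurable_pairing (hu : Measurable (Function.uncurry u)) {ψ : Ed d → ℝ}
    (hψ : Measurable ψ) : StronglyMeasurable (pairing s m u ψ) :=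
  (measurable_gagliardoIntegrand_slice (u := fun x t => u x t ^ m) (hu.pow_const m)
    (w := fun x _ => ψ x) (hψ.comp measurable_fst) _).stronglyMeasurable.integral_prod_right
    (ν := volume)

lemma measurable_gagliardoSq_slice (hu : Measurable (Function.uncurry u)) :
    Measurable fun t => gagliardoSq d s κ fun x => u x t ^ m := by
  simp_rw [gagliardoSq_eq_mul_lintegral_enorm]
  exact ((measurable_gagliardoIntegrand_slice (u := fun x t => u x t ^ m)
    (w := fun x t => u x t ^ m) (hu.pow_const m) (hu.pow_const m)
    _).enorm.lintegral_prod_right' (ν := volume)).const_mul _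

lemma exists_approx_one (d : ℕ) :
    ∃ w : Ed d → ℝ, ContDiff ℝ (⊤ : ℕ∞) w ∧ HasCompactSupport w ∧ (∀ x, |w x| ≤ 1) ∧
      ∀ x, Tendsto (fun n : ℕ => w (((n : ℝ) + 1)⁻¹ • x)) atTop (𝓝 1) := by
  let φ : ContDiffBump (0 : Ed d) := ⟨1, 2, one_pos, one_lt_two⟩
  refine ⟨φ, φ.contDiff, φ.hasCompactSupport, fun x => ?_, fun x => ?_⟩
  · rw [abs_of_nonneg φ.nonneg]
    exact φ.le_one
  · have hlim : Tendsto (fun n : ℕ => ((n : ℝ) + 1)⁻¹ • x) atTop (𝓝 0) := by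
      simpa only [one_div, zero_smul] using
        (tendsto_one_div_add_atTop_nhds_zero_nat (𝕜 := ℝ)).smul_const x
    have hφ := (φ.continuous.tendsto 0).comp hlim
    rwa [φ.one_of_mem_closedBall (Metric.mem_closedBall_self zero_le_one)] at hφ

lemma exists_forall_isGoodSlice_abs_integral_gagliardoIntegrand_le (hd : 2 * s < d) (hs1 : s < 1)
    (hm : 1 ≤ m) (hγ : 0 ≤ γ) (hγs : γ < 2 * s) (hc : 0 < c)
    (hρ : ∀ᵐ x, c * (1 + ‖x‖) ^ (-γ) ≤ ρ x) {w : Ed d → ℝ} (hw : ContDiff ℝ (⊤ : ℕ∞) w)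
    (hw_supp : HasCompactSupport w) :
    ∃ C, ∀ {M : ℝ} {f : Ed d → ℝ}, IsGoodSlice s m ρ M f → ∀ {B : ℝ}, 0 ≤ B →
      (∀ᵐ x, f x ≤ B) → ∀ {R : ℝ}, 1 ≤ R →
      |∫ p, gagliardoIntegrand (d + 2 * s) (fun x => f x ^ m) (fun x => w (R⁻¹ • x)) p| ≤
        C * B ^ (m - 1) * M * R ^ (-(2 * s - γ)) := by
  have hd0 : 0 < d := Nat.cast_pos.1 (by linarith : (0 : ℝ) < d)
  have : NeZero d := ⟨hd0.ne'⟩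
  have hdim : (Module.finrank ℝ (Ed d) : ℝ) = d := by rw [finrank_euclideanSpace_fin]
  obtain ⟨C, hC⟩ := exists_forall_abs_integral_gagliardoIntegrand_comp_inv_smul_le
    (α := d + 2 * s) (γ := γ) hγ (by rw [hdim]; linarith) (by rw [hdim]; linarith)
    (contDiff_infty.1 hw 2) hw_supp
  refine ⟨|C| / c, fun {M f} hf {B} hB0 hB {R} hR => ?_⟩
  have hR0 : 0 < R := one_pos.trans_le hR
  have hv (x : Ed d) : |f x ^ m| = f x ^ m := abs_of_nonneg (Real.rpow_nonneg (hf.nonneg x) m)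
  have hw_R : ContDiff ℝ (⊤ : ℕ∞) fun x => w (R⁻¹ • x) := hw.comp (contDiff_const_smul _)
  have hw_int := integrable_gagliardoIntegrand_self_of_hasCompactSupport (α := d + 2 * s)
    (by rw [hdim]; linarith) (by rw [hdim]; linarith) (contDiff_infty.1 hw_R 1)
    (hw_supp.comp_smul (inv_ne_zero hR0.ne'))
  have hbound := hC R hR (fun x => f x ^ m) (hf.measurable.pow_const m)
    (by simpa only [hv] using hf.integrable_rpow_mul_one_add_norm_rpow hm hc hρ)
    (integrable_gagliardoIntegrand (hf.measurable.pow_const m) hw_R.continuous.measurable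
      hf.integrable_gagliardoIntegrand hw_int)
  simp only [hv, hdim] at hbound
  have hmass := hf.integral_rpow_mul_one_add_norm_rpow_le hm hc hρ hB0 hB
  calc _ ≤ C * R ^ (d + γ - (d + 2 * s)) * ∫ x, f x ^ m * (1 + ‖x‖) ^ (-γ) := hbound
    _ ≤ |C| * R ^ (d + γ - (d + 2 * s)) * (B ^ (m - 1) / c * M) := by
        refine mul_le_mul (by gcongr; exact le_abs_self C) hmass (integral_nonneg fun x => ?_)
          (by positivity)
        exact mul_nonneg (Real.rpow_nonneg (hf.nonneg x) m) (by positivity)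
    _ = |C| / c * B ^ (m - 1) * M * R ^ (-(2 * s - γ)) := by
        rw [show d + γ - (d + 2 * s) = -(2 * s - γ) by ring]
        ring

namespace WeakSolCore

lemma measurable_slice (hu : WeakSolCore d s m κ ρ u) (t : ℝ) : Measurable fun x => u x t :=
  hu.measurable.comp (measurable_id.prodMk measurable_const)

lemma exists_forall_ae_le (hu : WeakSolCore d s m κ ρ u) {τ : ℝ} (hτ : 0 < τ) :
    ∃ B, ∀ᵐ t : ℝ, τ < t → ∀ᵐ x, u x t ≤ B := by
  obtain ⟨B, hB⟩ := hu.essBdd τ hτ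
  refine ⟨B, ?_⟩
  rw [Measure.volume_eq_prod] at hB
  have hswap := (Measure.measurePreserving_swap (μ := (volume : Measure ℝ))
    (ν := (volume : Measure (Ed d)))).quasiMeasurePreserving.ae hB
  filter_upwards [Measure.ae_ae_of_ae_prod hswap] with t ht hτt
  filter_upwards [ht] with x hx using hx hτt

lemma ae_exists_ae_le (hu : WeakSolCore d s m κ ρ u) :
    ∀ᵐ t ∂volume.restrict (Ioi (0 : ℝ)), ∃ B, ∀ᵐ x, u x t ≤ B := by
  choose B hB using fun n : ℕ => hu.exists_forall_ae_le (Nat.one_div_pos_of_nat (n := n))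
  filter_upwards [ae_restrict_mem measurableSet_Ioi, ae_restrict_of_ae (ae_all_iff.2 hB)]
    with t ht0 ht
  obtain ⟨n, hn⟩ := exists_nat_one_div_lt (mem_Ioi.1 ht0)
  exact ⟨B n, ht n hn⟩

lemma exists_ae_isGoodSlice (hκ : 0 < κ) (hu : WeakSolCore d s m κ ρ u) :
    ∃ M, ∀ᵐ t ∂volume.restrict (Ioi (0 : ℝ)), IsGoodSlice s m ρ M fun x => u x t := by
  obtain ⟨M, hM⟩ := hu.massBound
  refine ⟨M, ?_⟩
  filter_upwards [hM, hu.energyFinite, hu.ae_exists_ae_le] with t hmass henergy hbdd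
  exact ⟨hu.measurable_slice t, fun x => hu.nonneg x t, hmass.1, hmass.2,
    integrable_gagliardoIntegrand_self_of_gagliardoSq_lt_top hκ
      ((hu.measurable_slice t).pow_const m) henergy, hbdd⟩

lemma integral_moment_mul_deriv (hu : WeakSolCore d s m κ ρ u) (hθ : IsTimeTest θ) {ψ : Ed d → ℝ}
    (hψ : ContDiff ℝ (⊤ : ℕ∞) ψ) (hψ_supp : HasCompactSupport ψ) :
    ∫ t in Ioi (0 : ℝ), moment ρ u ψ t * deriv θ t =
      κ / 2 * ∫ t in Ioi (0 : ℝ), θ t * pairing s m u ψ t := by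
  calc ∫ t in Ioi (0 : ℝ), moment ρ u ψ t * deriv θ t
      = ∫ t in Ioi (0 : ℝ), ∫ x, u x t * deriv (fun τ => θ τ * ψ x) t * ρ x := by
        refine integral_congr_ae (Eventually.of_forall fun t => ?_)
        simp only [moment, ← integral_mul_const, deriv_mul_const_field]
        exact integral_congr_ae (Eventually.of_forall fun x => by ring)
    _ = ∫ t in Ioi (0 : ℝ), gagliardoE d s κ (fun x => u x t ^ m) fun x => θ t * ψ x :=
        neg_add_eq_zero.1 (hu.weakForm _ (hθ.isTestFn_mul hψ hψ_supp))
    _ = κ / 2 * ∫ t in Ioi (0 : ℝ), θ t * pairing s m u ψ t := by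
        rw [← integral_const_mul]
        refine integral_congr_ae (Eventually.of_forall fun t => ?_)
        simp only [gagliardoE, pairing, gagliardoIntegrand, ← integral_const_mul]
        exact integral_congr_ae (Eventually.of_forall fun p => by ring)

lemma integrableOn_energy (hκ : 0 < κ) (hu : WeakSolCore d s m κ ρ u) {t₁ t₂ : ℝ} (ht₁ : 0 < t₁)
    (h₁₂ : t₁ < t₂) : IntegrableOn (fun t => ∫ p,
      gagliardoIntegrand (d + 2 * s) (fun x => u x t ^ m) (fun x => u x t ^ m) p)
      (Ioc t₁ t₂) := by
  have hint := integrable_toReal_of_lintegral_ne_top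
    (measurable_gagliardoSq_slice hu.measurable).aemeasurable (hu.energyLocInt t₁ t₂ ht₁ h₁₂)
  simp_rw [toReal_gagliardoSq hκ ((hu.measurable_slice _).pow_const m)] at hint
  exact (integrable_const_mul_iff (IsUnit.mk0 _ (by positivity)) _).1 hint

lemma locallyIntegrable_moment (hρ_meas : Measurable ρ) (hρ : ∀ᵐ x, 0 ≤ ρ x)
    (hu : WeakSolCore d s m κ ρ u)
    (hgood : ∀ᵐ t ∂volume.restrict (Ioi (0 : ℝ)), IsGoodSlice s m ρ M fun x => u x t)
    (hχ : Measurable χ) {A : ℝ} (hA : ∀ x, |χ x| ≤ A) :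
    LocallyIntegrable ((Ioi (0 : ℝ)).indicator (moment ρ u χ)) := by
  refine (locallyIntegrable_const |A * M|).mono ((stronglyMeasurable_moment hρ_meas hu.measurable
    hχ).indicator measurableSet_Ioi).aestronglyMeasurable ?_
  filter_upwards [(ae_restrict_iff' measurableSet_Ioi).1 hgood] with t ht
  rw [Real.norm_eq_abs |_|, abs_abs, norm_indicator_eq_indicator_norm]
  exact indicator_apply_le' (fun h => ((ht h).abs_integral_mul_le hρ hA).trans (le_abs_self _))
    fun _ => abs_nonneg _

lemma tendsto_integral_moment_mul_deriv (hρ_meas : Measurable ρ) (hρ : ∀ᵐ x, 0 ≤ ρ x)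
    (hu : WeakSolCore d s m κ ρ u)
    (hgood : ∀ᵐ t ∂volume.restrict (Ioi (0 : ℝ)), IsGoodSlice s m ρ M fun x => u x t)
    (hθ : IsTimeTest θ) {ψ : ℕ → Ed d → ℝ} {A : ℝ} (hψ : ∀ n, Measurable (ψ n))
    (hA : ∀ n x, |ψ n x| ≤ A) (hlim : ∀ x, Tendsto (fun n => ψ n x) atTop (𝓝 (χ x))) :
    Tendsto (fun n => ∫ t in Ioi (0 : ℝ), moment ρ u (ψ n) t * deriv θ t) atTop
      (𝓝 (∫ t in Ioi (0 : ℝ), moment ρ u χ t * deriv θ t)) := by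
  have hcont : Continuous (deriv θ) := hθ.contDiff.continuous_deriv (by simp)
  have hbound : Integrable fun t => A * M * ‖deriv θ t‖ :=
    (hcont.integrable_of_hasCompactSupport hθ.hasCompactSupport.deriv).norm.const_mul _
  refine tendsto_integral_of_dominated_convergence _ (fun n => ?_) hbound.integrableOn
    (fun n => ?_) ?_
  · exact ((stronglyMeasurable_moment hρ_meas hu.measurable (hψ n)).mul
      hcont.stronglyMeasurable).aestronglyMeasurable
  · filter_upwards [hgood] with t ht
    rw [norm_mul]
    exact mul_le_mul_of_nonneg_right (ht.abs_integral_mul_le hρ (hA n)) (norm_nonneg _)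
  · filter_upwards [hgood] with t ht
    refine Tendsto.mul_const _ ?_
    exact tendsto_integral_of_dominated_convergence (fun x => A * (u x t * ρ x))
      (fun n => (ht.integrable_bdd_mul (hψ n) (hA n)).aestronglyMeasurable)
      (ht.integrable_mul.const_mul A)
      (fun n => hρ.mono fun x hx => ht.abs_mul_le (hA n) hx)
      (Eventually.of_forall fun x => (hlim x).mul_const _)

lemma tendsto_integral_mul_pairing (hκ : 0 < κ) (hu : WeakSolCore d s m κ ρ u)
    (hgood : ∀ᵐ t ∂volume.restrict (Ioi (0 : ℝ)), IsGoodSlice s m ρ M fun x => u x t)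
    (hθ : IsTimeTest θ) {ψ : ℕ → Ed d → ℝ} (hψ : ∀ n, Measurable (ψ n))
    (hψχ : ∀ n x y, |ψ n x - ψ n y| ≤ |χ x - χ y|)
    (hχ : Integrable (gagliardoIntegrand (d + 2 * s) χ χ))
    (hlim : ∀ x, Tendsto (fun n => ψ n x) atTop (𝓝 (χ x))) :
    Tendsto (fun n => ∫ t in Ioi (0 : ℝ), θ t * pairing s m u (ψ n) t) atTop
      (𝓝 (∫ t in Ioi (0 : ℝ), θ t * pairing s m u χ t)) := by
  let e (t : ℝ) (p : Ed d × Ed d) : ℝ := 1 / 2 *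
    (gagliardoIntegrand (d + 2 * s) (fun x => u x t ^ m) (fun x => u x t ^ m) p +
      gagliardoIntegrand (d + 2 * s) χ χ p)
  have he {t : ℝ} (ht : IsGoodSlice s m ρ M fun x => u x t) : Integrable (e t) :=
    (ht.integrable_gagliardoIntegrand.add hχ).const_mul _
  have he_time {t₁ t₂ : ℝ} (ht₁ : 0 < t₁) (h₁₂ : t₁ < t₂) :
      IntegrableOn (fun t => ∫ p, e t p) (Ioc t₁ t₂) := by
    refine IntegrableOn.congr_fun_ae (((hu.integrableOn_energy hκ ht₁ h₁₂).add
      (integrableOn_const (C := ∫ p, gagliardoIntegrand (d + 2 * s) χ χ p)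
        measure_Ioc_lt_top.ne)).const_mul (1 / 2)) ?_
    filter_upwards [ae_restrict_of_ae_restrict_of_subset
      (Ioc_subset_Ioi_self.trans (Ioi_subset_Ioi ht₁.le)) hgood] with t ht
    simp only [e, integral_const_mul, integral_add ht.integrable_gagliardoIntegrand hχ]
    rfl
  refine tendsto_integral_of_dominated_convergence (fun t => ‖θ t * ∫ p, e t p‖) (fun n => ?_)
    (hθ.integrableOn_mul fun _ _ => he_time).norm (fun n => ?_) ?_
  · exact (hθ.contDiff.continuous.stronglyMeasurable.mul
      (stronglyMeasurable_pairing hu.measurable (hψ n))).aestronglyMeasurable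
  · filter_upwards [hgood] with t ht
    rw [norm_mul, norm_mul]
    exact mul_le_mul_of_nonneg_left ((norm_integral_le_of_norm_le (he ht) (Eventually.of_forall
      (abs_gagliardoIntegrand_le_half_add (hψχ n)))).trans (le_abs_self _)) (norm_nonneg _)
  · filter_upwards [hgood] with t ht
    refine Tendsto.const_mul _ (tendsto_integral_of_dominated_convergence (e t) (fun n =>
      (measurable_gagliardoIntegrand (ht.measurable.pow_const m) (hψ n)).aestronglyMeasurable)
      (he ht) (fun n => Eventually.of_forall (abs_gagliardoIntegrand_le_half_add (hψχ n)))
      (Eventually.of_forall fun p => ?_))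
    exact (((hlim _).sub (hlim _)).const_mul _).div_const _

-- By `exists_approx` the test functions below `χ` can be taken compactly supported, and the limit
-- of the weak formulation is the distributional inequality `(∫ χ u ρ)' ≤ 0`.
lemma exists_antitoneOn_moment (hd : 2 * s < d) (hm : 1 ≤ m) (hκ : 0 < κ) (hγ : 0 ≤ γ)
    (hγs : γ < 2 * s) (hc : 0 < c) (hρ_meas : Measurable ρ)
    (hρ : ∀ᵐ x, c * (1 + ‖x‖) ^ (-γ) ≤ ρ x) (hu : WeakSolCore d s m κ ρ u)
    (hχ : IsSupersolution (d + 2 * s) χ) :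
    ∃ N : Set ℝ, volume N = 0 ∧ AntitoneOn (moment ρ u χ) (Ioi 0 \ N) := by
  have hρ_nonneg : ∀ᵐ x, 0 ≤ ρ x := hρ.mono fun x hx => le_trans (by positivity) hx
  obtain ⟨M, hgood⟩ := hu.exists_ae_isGoodSlice hκ
  obtain ⟨A, hA⟩ := hχ.exists_abs_le
  obtain ⟨ψ, hψ, hψ_supp, hψχ, hψ_le, hlim⟩ := hχ.exists_approx
  have hψ_meas (n : ℕ) : Measurable (ψ n) := (hψ n).continuous.measurable
  refine exists_antitoneOn_of_integral_mul_deriv_nonneg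
    (hu.locallyIntegrable_moment hρ_meas hρ_nonneg hgood hχ.contDiff.continuous.measurable hA)
    fun θ hθ hθ_nonneg => ?_
  have hmoment := hu.tendsto_integral_moment_mul_deriv hρ_meas hρ_nonneg hgood hθ hψ_meas
    (fun n x => (hψ_le n x).trans ((le_abs_self _).trans (hA x))) hlim
  have hpairing := hu.tendsto_integral_mul_pairing hκ hgood hθ hψ_meas hψχ
    hχ.integrable_gagliardoIntegrand hlim
  simp_rw [hu.integral_moment_mul_deriv hθ (hψ _) (hψ_supp _)] at hmoment
  rw [tendsto_nhds_unique hmoment (hpairing.const_mul (κ / 2))]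
  refine mul_nonneg (by positivity) (integral_nonneg_of_ae ?_)
  filter_upwards [hgood] with t ht
  exact mul_nonneg (hθ_nonneg t)
    (ht.integral_gagliardoIntegrand_nonneg hd hm hγ hγs hc hρ hχ)

lemma exists_forall_abs_pairing_dilation_le (hd : 2 * s < d) (hs1 : s < 1) (hm : 1 ≤ m)
    (hγ : 0 ≤ γ) (hγs : γ < 2 * s) (hc : 0 < c) (hρ : ∀ᵐ x, c * (1 + ‖x‖) ^ (-γ) ≤ ρ x)
    {w : Ed d → ℝ} (hw : ContDiff ℝ (⊤ : ℕ∞) w) (hw_supp : HasCompactSupport w)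
    (hu : WeakSolCore d s m κ ρ u)
    (hgood : ∀ᵐ t ∂volume.restrict (Ioi (0 : ℝ)), IsGoodSlice s m ρ M fun x => u x t)
    {t₁ : ℝ} (ht₁ : 0 < t₁) :
    ∃ K, ∀ᵐ t ∂volume.restrict (Ioi (0 : ℝ)), t₁ < t → ∀ n : ℕ,
      |pairing s m u (fun x => w (((n : ℝ) + 1)⁻¹ • x)) t| ≤
        K * ((n : ℝ) + 1) ^ (-(2 * s - γ)) := by
  obtain ⟨C, hC⟩ := exists_forall_isGoodSlice_abs_integral_gagliardoIntegrand_le hd hs1 hm hγ hγs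
    hc hρ hw hw_supp
  obtain ⟨B, hB⟩ := hu.exists_forall_ae_le ht₁
  refine ⟨C * max B 0 ^ (m - 1) * M, ?_⟩
  filter_upwards [hgood, ae_restrict_of_ae hB] with t ht hBt ht₁t n
  exact hC ht (le_max_right B 0) ((hBt ht₁t).mono fun x hx => hx.trans (le_max_left B 0))
    (by simp)

lemma tendsto_integral_mul_pairing_dilation (hd : 2 * s < d) (hs1 : s < 1) (hm : 1 ≤ m)
    (hγ : 0 ≤ γ) (hγs : γ < 2 * s) (hc : 0 < c) (hρ : ∀ᵐ x, c * (1 + ‖x‖) ^ (-γ) ≤ ρ x)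
    {w : Ed d → ℝ} (hw : ContDiff ℝ (⊤ : ℕ∞) w) (hw_supp : HasCompactSupport w)
    (hu : WeakSolCore d s m κ ρ u)
    (hgood : ∀ᵐ t ∂volume.restrict (Ioi (0 : ℝ)), IsGoodSlice s m ρ M fun x => u x t)
    (hθ : IsTimeTest θ) :
    Tendsto (fun n : ℕ => ∫ t in Ioi (0 : ℝ),
      θ t * pairing s m u (fun x => w (((n : ℝ) + 1)⁻¹ • x)) t) atTop (𝓝 0) := by
  obtain ⟨t₁, t₂, ht₁, -, hsupp⟩ := hθ.exists_tsupport_subset_Ioc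
  obtain ⟨K, hK⟩ := hu.exists_forall_abs_pairing_dilation_le hd hs1 hm hγ hγs hc hρ hw hw_supp
    hgood ht₁
  have hθ_int : Integrable θ :=
    hθ.contDiff.continuous.integrable_of_hasCompactSupport hθ.hasCompactSupport
  have hrate : Tendsto (fun n : ℕ => (∫ t in Ioi (0 : ℝ), ‖θ t‖) * K *
      ((n : ℝ) + 1) ^ (-(2 * s - γ))) atTop (𝓝 0) := by
    have h := ((tendsto_rpow_neg_atTop (sub_pos.2 hγs)).comp
      (tendsto_atTop_add_const_right _ 1 tendsto_natCast_atTop_atTop)).const_mul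
      ((∫ t in Ioi (0 : ℝ), ‖θ t‖) * K)
    rwa [mul_zero] at h
  refine squeeze_zero_norm (fun n => ?_) hrate
  rw [mul_assoc, ← integral_mul_const]
  refine norm_integral_le_of_norm_le (hθ_int.norm.mul_const _).integrableOn ?_
  filter_upwards [hK] with t ht
  by_cases hθt : θ t = 0
  · simp [hθt]
  · rw [norm_mul]
    exact mul_le_mul_of_nonneg_left (ht (hsupp (subset_tsupport θ hθt)).1 n) (norm_nonneg _)

lemma exists_ae_integral_eq_const (hd : 2 * s < d) (hs1 : s < 1) (hm : 1 ≤ m) (hκ : 0 < κ)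
    (hγ : 0 ≤ γ) (hγs : γ < 2 * s) (hc : 0 < c) (hρ_meas : Measurable ρ)
    (hρ : ∀ᵐ x, c * (1 + ‖x‖) ^ (-γ) ≤ ρ x) (hu : WeakSolCore d s m κ ρ u) :
    ∃ mass, ∀ᵐ t ∂volume.restrict (Ioi (0 : ℝ)), ∫ x, u x t * ρ x = mass := by
  have hρ_nonneg : ∀ᵐ x, 0 ≤ ρ x := hρ.mono fun x hx => le_trans (by positivity) hx
  obtain ⟨M, hgood⟩ := hu.exists_ae_isGoodSlice hκ
  obtain ⟨w, hw, hw_supp, hw_le, hw_lim⟩ := exists_approx_one d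
  have hdil (n : ℕ) : ContDiff ℝ (⊤ : ℕ∞) fun x => w (((n : ℝ) + 1)⁻¹ • x) :=
    hw.comp (contDiff_const_smul _)
  suffices h : ∀ θ, IsTimeTest θ → ∫ t in Ioi (0 : ℝ), moment ρ u (fun _ => 1) t * deriv θ t = 0
  · obtain ⟨mass, hmass⟩ := exists_ae_eq_const_of_integral_mul_deriv_eq_zero
      (hu.locallyIntegrable_moment hρ_meas hρ_nonneg hgood measurable_const (A := 1) (by simp)) h
    exact ⟨mass, by simpa only [moment, one_mul] using hmass⟩
  intro θ hθ
  have hmoment := hu.tendsto_integral_moment_mul_deriv hρ_meas hρ_nonneg hgood hθ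
    (fun n => (hdil n).continuous.measurable) (fun n x => hw_le _) hw_lim
  have hpairing := hu.tendsto_integral_mul_pairing_dilation hd hs1 hm hγ hγs hc hρ hw hw_supp
    hgood hθ
  simp_rw [hu.integral_moment_mul_deriv hθ (hdil _)
    (hw_supp.comp_smul (inv_ne_zero (Nat.cast_add_one_ne_zero _)))] at hmoment
  simpa using tendsto_nhds_unique hmoment (hpairing.const_mul (κ / 2))

end WeakSolCore

end WeakSolutions

section GaussianMoments

variable {E : Type*} [NormedAddCommGroup E]

lemma continuous_gaussian (l : ℝ) (a : E) : Continuous (gaussian l a) := by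
  unfold gaussian
  fun_prop

lemma norm_gaussian_le_one {l : ℝ} (hl : 0 ≤ l) (a x : E) : ‖gaussian l a x‖ ≤ 1 := by
  rw [gaussian, Real.norm_of_nonneg (Real.exp_pos _).le, Real.exp_le_one_iff, neg_nonpos]
  positivity

/-- The Gaussian as a bounded continuous function; for `l = 0` it is the constant `1`. -/
def boundedGaussian (l : ℝ≥0) (a : E) : BoundedContinuousFunction E ℝ :=
  .ofNormedAddCommGroup (gaussian l a) (continuous_gaussian l a) 1
    (norm_gaussian_le_one l.coe_nonneg a)

lemma boundedGaussian_apply (l : ℝ≥0) (a x : E) : boundedGaussian l a x = gaussian l a x := rfl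

lemma boundedGaussian_zero (a : E) : boundedGaussian 0 a = 1 := by
  ext x
  simp [boundedGaussian_apply, gaussian]

lemma continuous_integral_boundedGaussian [MeasurableSpace E] [OpensMeasurableSpace E]
    (μ : Measure E) [IsFiniteMeasure μ] :
    Continuous fun z : ℝ≥0 × E => ∫ x, boundedGaussian z.1 z.2 x ∂μ := by
  refine continuous_of_dominated (bound := fun _ => 1)
    (fun z => (continuous_gaussian _ _).aestronglyMeasurable)
    (fun z => Eventually.of_forall fun x => norm_gaussian_le_one z.1.coe_nonneg _ _)
    (integrable_const _) (Eventually.of_forall fun x => ?_)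
  simp only [boundedGaussian_apply, gaussian]
  fun_prop

variable [InnerProductSpace ℝ E]

lemma mul_norm_sub_sq_add_mul_norm_sub_sq {l l' : ℝ} (h : l + l' ≠ 0) (a a' x : E) :
    l * ‖x - a‖ ^ 2 + l' * ‖x - a'‖ ^ 2 =
      l * l' / (l + l') * ‖a - a'‖ ^ 2 +
        (l + l') * ‖x - (l + l')⁻¹ • (l • a + l' • a')‖ ^ 2 := by
  have hbary : ‖(l + l')⁻¹ • (l • a + l' • a')‖ ^ 2 = (l + l')⁻¹ ^ 2 *
      (l ^ 2 * ‖a‖ ^ 2 + 2 * l * l' * inner ℝ a a' + l' ^ 2 * ‖a'‖ ^ 2) := by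
    simp only [norm_smul, mul_pow, norm_add_sq_real, Real.norm_eq_abs, sq_abs, inner_smul_left,
      inner_smul_right, conj_trivial]
    ring
  simp only [norm_sub_sq_real, hbary, inner_smul_right, inner_add_right]
  field_simp
  ring

lemma exists_boundedGaussian_mul (l l' : ℝ≥0) (a a' : E) :
    ∃ (c : ℝ) (b : E), boundedGaussian l a * boundedGaussian l' a' =
      c • boundedGaussian (l + l') b := by
  rcases eq_or_ne (l + l') 0 with h | h
  · obtain ⟨rfl, rfl⟩ := add_eq_zero.1 h
    exact ⟨1, 0, by simp [boundedGaussian_zero]⟩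
  · refine ⟨Real.exp (-(l * l' / (l + l') * ‖a - a'‖ ^ 2)),
      ((l : ℝ) + l')⁻¹ • ((l : ℝ) • a + (l' : ℝ) • a'), ?_⟩
    ext x
    have hsq := mul_norm_sub_sq_add_mul_norm_sub_sq
      (by exact_mod_cast h : (l : ℝ) + l' ≠ 0) a a' x
    simp only [BoundedContinuousFunction.coe_mul, BoundedContinuousFunction.coe_smul,
      Pi.mul_apply, boundedGaussian_apply, gaussian, smul_eq_mul, NNReal.coe_add, ← Real.exp_add]
    congr 1
    linear_combination -hsq

variable (E) in
/-- The multiplicative monoid of constant multiples of Gaussians, a function class that separates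
finite measures. -/
def gaussianMultiples : Submonoid (BoundedContinuousFunction E ℝ) where
  carrier := {f | ∃ (c : ℝ) (l : ℝ≥0) (a : E), f = c • boundedGaussian l a}
  one_mem' := ⟨1, 0, 0, by simp [boundedGaussian_zero]⟩
  mul_mem' := by
    rintro _ _ ⟨c, l, a, rfl⟩ ⟨c', l', a', rfl⟩
    obtain ⟨k, b, hk⟩ := exists_boundedGaussian_mul l l' a a'
    exact ⟨c * c' * k, l + l', b, by rw [smul_mul_smul_comm, hk, smul_smul]⟩

variable (E) in
/-- The unital algebra generated by Gaussians. -/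
def gaussianAlgebra : StarSubalgebra ℝ (BoundedContinuousFunction E ℝ) where
  __ := Algebra.adjoin ℝ (gaussianMultiples E : Set (BoundedContinuousFunction E ℝ))
  star_mem' {f} hf := by
    have hstar : star f = f := by ext x; simp
    rwa [hstar]

lemma boundedGaussian_mem_gaussianAlgebra (l : ℝ≥0) (a : E) :
    boundedGaussian l a ∈ gaussianAlgebra E :=
  Algebra.subset_adjoin ⟨1, l, a, (one_smul ℝ _).symm⟩

lemma mem_span_of_mem_gaussianAlgebra {f : BoundedContinuousFunction E ℝ}
    (hf : f ∈ gaussianAlgebra E) :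
    f ∈ Submodule.span ℝ (range fun z : ℝ≥0 × E => boundedGaussian z.1 z.2) := by
  have hf' : f ∈ Algebra.adjoin ℝ (gaussianMultiples E : Set (BoundedContinuousFunction E ℝ)) := hf
  rw [← Subalgebra.mem_toSubmodule, Algebra.adjoin_eq_span, Submonoid.closure_eq] at hf'
  refine Submodule.span_le.2 ?_ hf'
  rintro _ ⟨c, l, a, rfl⟩
  exact Submodule.smul_mem _ c (Submodule.subset_span (mem_range_self (l, a)))

variable [MeasurableSpace E] [BorelSpace E] [SecondCountableTopology E]

theorem measure_ext_of_integral_boundedGaussian [CompleteSpace E] {μ ν : Measure E}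
    [IsFiniteMeasure μ] [IsFiniteMeasure ν]
    (h : ∀ l a, ∫ x, boundedGaussian l a x ∂μ = ∫ x, boundedGaussian l a x ∂ν) : μ = ν := by
  refine ext_of_forall_mem_subalgebra_integral_eq_of_polish (A := gaussianAlgebra E) ?_ ?_
  · intro x y hxy
    refine ⟨boundedGaussian 1 x, ⟨BoundedContinuousFunction.toContinuousMapStarₐ ℝ _,
      ⟨_, boundedGaussian_mem_gaussianAlgebra 1 x, rfl⟩, rfl⟩, fun heq => hxy ?_⟩
    change gaussian (1 : ℝ≥0) x x = gaussian (1 : ℝ≥0) x y at heq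
    have hexp : Real.exp (-‖y - x‖ ^ 2) = 1 := by simpa [gaussian] using heq.symm
    exact .symm (by simpa [sub_eq_zero] using hexp)
  · intro f hf
    replace hf := mem_span_of_mem_gaussianAlgebra hf
    induction hf using Submodule.span_induction with
    | mem f hf =>
      obtain ⟨z, rfl⟩ := hf
      exact h z.1 z.2
    | zero => simp
    | add f g _ _ hf hg =>
      simp only [BoundedContinuousFunction.coe_add, Pi.add_apply]
      rw [integral_add (f.integrable μ) (g.integrable μ),
        integral_add (f.integrable ν) (g.integrable ν), hf, hg]
    | smul c f _ hf =>
      simp only [BoundedContinuousFunction.coe_smul, smul_eq_mul, integral_const_mul, hf]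

-- By tightness the family has weak cluster points, and its Gaussian moments identify them.
theorem exists_tendsto_finiteMeasure_of_tight [CompleteSpace E] {ι : Type*} {F : Filter ι}
    [F.NeBot] {ν : ι → FiniteMeasure E} {C : ℝ≥0} (hmass : ∀ᶠ i in F, (ν i).mass = C)
    {D : Set (ℝ≥0 × E)} (hD : Dense D)
    (hlim : ∀ z ∈ D, ∃ L, Tendsto (fun i => ∫ x, boundedGaussian z.1 z.2 x ∂(ν i : Measure E)) F
      (𝓝 L))
    {e : ℕ → ℝ≥0} {K : ℕ → Set E} (he : Tendsto e atTop (𝓝 0)) (hK : ∀ n, IsCompact (K n))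
    (htight : ∀ᶠ i in F, ∀ n, ν i (K n)ᶜ ≤ e n) :
    ∃ μ : FiniteMeasure E, Tendsto ν F (𝓝 μ) ∧ μ.mass = C := by
  choose! L hL using hlim
  have hcluster (μ : FiniteMeasure E) (hμ : MapClusterPt μ F ν) :
      EqOn (fun z => ∫ x, boundedGaussian z.1 z.2 x ∂(μ : Measure E)) L D := fun z hz => by
    obtain ⟨U, hU, hUμ⟩ := mapClusterPt_iff_ultrafilter.1 hμ
    exact tendsto_nhds_unique (FiniteMeasure.tendsto_iff_forall_integral_tendsto.1 hUμ _)
      ((hL z hz).mono_left hU)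
  have hcpt := isCompact_setOfPred_finiteMeasure_mass_eq_compl_isCompact_le (E := E) C he hK
    (Or.inl inferInstance)
  have hmem : ∀ᶠ i in F, ν i ∈ {μ : FiniteMeasure E | μ.mass = C ∧ ∀ n, μ (K n)ᶜ ≤ e n} :=
    hmass.and htight
  obtain ⟨μ, hμs, hμ⟩ := hcpt.exists_mapClusterPt_of_frequently (f := ν) hmem.frequently
  refine ⟨μ, hcpt.tendsto_nhds_of_unique_mapClusterPt hmem fun μ' _ hμ' => ?_, hμs.1⟩
  have hmoments := (continuous_integral_boundedGaussian (μ' : Measure E)).ext_on hD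
    (continuous_integral_boundedGaussian (μ : Measure E))
    ((hcluster μ' hμ').trans (hcluster μ hμ).symm)
  exact Subtype.ext (measure_ext_of_integral_boundedGaussian (μ := (μ' : Measure E))
    (ν := (μ : Measure E)) fun l a => congrFun hmoments (l, a))

end GaussianMoments

section InitialTraces

lemma neBot_nhdsWithin_Ioi_diff {N : Set ℝ} (hN : volume N = 0) (a : ℝ) :
    (𝓝[Ioi a \ N] a).NeBot := by
  have hdense : Dense Nᶜ := Measure.dense_of_ae (measure_eq_zero_iff_ae_notMem.1 hN)
  rw [← mem_closure_iff_nhdsWithin_neBot, Set.sdiff_eq]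
  exact isClosed_closure.closure_subset_iff.2 (hdense.open_subset_closure_inter isOpen_Ioi)
    (by rw [closure_Ioi]; exact self_mem_Ici)

lemma exists_measure_zero_forall_mem_diff {X : Type*} [MeasurableSpace X] {μ : Measure X}
    {S : Set X} (hS : MeasurableSet S) {p : X → Prop} (h : ∀ᵐ x ∂μ.restrict S, p x) :
    ∃ N, μ N = 0 ∧ ∀ x ∈ S \ N, p x :=
  ⟨{x | ¬(x ∈ S → p x)}, (ae_restrict_iff' hS).1 h, fun _ hx => not_not.1 hx.2 hx.1⟩

lemma exists_tendsto_nhdsWithin_of_antitoneOn {α β : Type*} [LinearOrder α] [TopologicalSpace α]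
    [OrderTopology α] [ConditionallyCompleteLinearOrder β] [TopologicalSpace β] [OrderTopology β]
    {f : α → β} {S : Set α} {a : α} (hf : AntitoneOn f S) (hS : S ⊆ Ioi a)
    (hbdd : BddAbove (f '' S)) : ∃ L, Tendsto f (𝓝[S] a) (𝓝 L) := by
  rcases S.eq_empty_or_nonempty with rfl | hne
  · exact ⟨f a, by simp⟩
  refine ⟨sSup (f '' S), tendsto_order.2 ⟨fun b hb => ?_, fun b hb => ?_⟩⟩
  · obtain ⟨_, ⟨t₀, ht₀, rfl⟩, hlt⟩ := exists_lt_of_lt_csSup (hne.image f) hb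
    filter_upwards [self_mem_nhdsWithin, nhdsWithin_le_nhds (Iio_mem_nhds (hS ht₀))] with t ht htt₀
    exact hlt.trans_le (hf ht ht₀ (le_of_lt htt₀))
  · filter_upwards [self_mem_nhdsWithin] with t ht
    exact (le_csSup hbdd (mem_image_of_mem f ht)).trans_lt hb

lemma exists_finiteMeasure_integral_eq {X : Type*} [MeasurableSpace X] {μ : Measure X} {g : X → ℝ}
    (hg : Integrable g μ) (hg_nonneg : 0 ≤ᵐ[μ] g) :
    ∃ ν : FiniteMeasure X, ∀ f : X → ℝ, ∫ x, f x ∂(ν : Measure X) = ∫ x, f x * g x ∂μ := by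
  have : IsFiniteMeasure (μ.withDensity fun x => ENNReal.ofReal (g x)) :=
    isFiniteMeasure_withDensity_ofReal hg.2
  refine ⟨⟨_, this⟩, fun f => (integral_withDensity_eq_integral_toReal_smul₀
    hg.aemeasurable.ennreal_ofReal (Eventually.of_forall fun _ => ENNReal.ofReal_lt_top) f).trans
    (integral_congr_ae ?_)⟩
  filter_upwards [hg_nonneg] with x hx
  rw [ENNReal.toReal_ofReal hx, smul_eq_mul, mul_comm]

lemma measureReal_compl_le_two_mul_sub_integral {X : Type*} [MeasurableSpace X] {ν : Measure X}
    [IsFiniteMeasure ν] {χ : X → ℝ} (hχ : Measurable χ) (hχ_nonneg : ∀ x, 0 ≤ χ x)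
    (hχ_le : ∀ x, χ x ≤ 1) {K : Set X} (hK : MeasurableSet K) (hlt : ∀ x ∈ Kᶜ, χ x < 1 / 2) :
    ν.real Kᶜ ≤ 2 * (ν.real univ - ∫ x, χ x ∂ν) := by
  have hχ_int : Integrable χ ν := .of_bound hχ.aestronglyMeasurable 1
    (Eventually.of_forall fun x => by rw [Real.norm_of_nonneg (hχ_nonneg x)]; exact hχ_le x)
  calc ν.real Kᶜ = ∫ x, Kᶜ.indicator (fun _ => (1 : ℝ)) x ∂ν := by
        rw [integral_indicator hK.compl]
        simp
    _ ≤ ∫ x, 2 * (1 - χ x) ∂ν := by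
        refine integral_mono ((integrable_const _).indicator hK.compl)
          (((integrable_const _).sub hχ_int).const_mul 2) fun x => ?_
        refine indicator_apply_le' (fun hx => ?_) fun _ => ?_
        · linarith [hlt x hx]
        · linarith [hχ_le x]
    _ = 2 * (ν.real univ - ∫ x, χ x ∂ν) := by
        rw [integral_const_mul, integral_sub (integrable_const _) hχ_int]
        simp

-- The integral against `χ n` only increases backwards in time, so little mass lies where `χ n` is
-- small at all earlier times if this holds at time `T`.
lemma exists_forall_measure_compl_le_of_antitoneOn {X : Type*} [TopologicalSpace X] [T2Space X]
    [MeasurableSpace X] [OpensMeasurableSpace X] {ν : ℝ → FiniteMeasure X} {S : Set ℝ} {C : ℝ≥0}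
    (hmass : ∀ t ∈ S, (ν t).mass = C) {χ : ℕ → X → ℝ} (hχ : ∀ n, Measurable (χ n))
    (hχ_nonneg : ∀ n x, 0 ≤ χ n x) (hχ_le : ∀ n x, χ n x ≤ 1)
    (hχ_zero : ∀ n, Tendsto (χ n) (cocompact X) (𝓝 0))
    (hχ_one : ∀ x, Tendsto (fun n => χ n x) atTop (𝓝 1))
    (hanti : ∀ n, AntitoneOn (fun t => ∫ x, χ n x ∂(ν t : Measure X)) S) {T : ℝ} (hT : T ∈ S) :
    ∃ (e : ℕ → ℝ≥0) (K : ℕ → Set X), Tendsto e atTop (𝓝 0) ∧ (∀ n, IsCompact (K n)) ∧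
      ∀ t ∈ S, t ≤ T → ∀ n, ν t (K n)ᶜ ≤ e n := by
  choose K hK hKχ using fun n => mem_cocompact.1
    ((hχ_zero n).eventually (Iio_mem_nhds (one_half_pos : (0 : ℝ) < 1 / 2)))
  refine ⟨fun n => (2 * (C - ∫ x, χ n x ∂(ν T : Measure X))).toNNReal, K, ?_, hK,
    fun t ht htT n => NNReal.le_toNNReal_of_coe_le ?_⟩
  · have hlim : Tendsto (fun n => ∫ x, χ n x ∂(ν T : Measure X)) atTop
        (𝓝 (∫ _, 1 ∂(ν T : Measure X))) :=
      tendsto_integral_of_dominated_convergence (fun _ => 1)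
        (fun n => (hχ n).aestronglyMeasurable) (integrable_const _)
        (fun n => Eventually.of_forall fun x => by
          rw [Real.norm_of_nonneg (hχ_nonneg n x)]; exact hχ_le n x)
        (Eventually.of_forall hχ_one)
    have hone : ∫ _, (1 : ℝ) ∂(ν T : Measure X) = C := by
      rw [← hmass T hT, integral_const, smul_eq_mul, mul_one]
      rfl
    rw [hone] at hlim
    simpa using tendsto_real_toNNReal ((hlim.const_sub (C : ℝ)).const_mul 2)
  · calc (ν t (K n)ᶜ : ℝ) ≤ 2 * ((ν t : Measure X).real univ - ∫ x, χ n x ∂(ν t : Measure X)) :=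
          measureReal_compl_le_two_mul_sub_integral (hχ n) (hχ_nonneg n) (hχ_le n)
            (hK n).measurableSet (hKχ n)
      _ = 2 * (C - ∫ x, χ n x ∂(ν t : Measure X)) := by rw [← hmass t ht]; rfl
      _ ≤ 2 * (C - ∫ x, χ n x ∂(ν T : Measure X)) := by linarith [hanti n ht hT htT]

section Bubble

variable {E : Type*} [NormedAddCommGroup E] [InnerProductSpace ℝ E] {α : ℝ}

lemma bubble_le_one {l : ℝ} (hα : α ≤ 2 * Module.finrank ℝ E) (hl : 0 ≤ l) (a x : E) :
    bubble α l a x ≤ 1 :=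
  Real.rpow_le_one_of_one_le_of_nonpos (le_add_of_nonneg_right (by positivity)) (by linarith)

lemma tendsto_bubble_one (α : ℝ) (a x : E) : Tendsto (fun l => bubble α l a x) (𝓝 0) (𝓝 1) := by
  have h : Tendsto (fun l : ℝ => 1 + l * ‖x - a‖ ^ 2) (𝓝 0) (𝓝 1) :=
    Continuous.tendsto' (by fun_prop) _ _ (by simp)
  simpa only [bubble, Real.one_rpow] using h.rpow_const (p := -((2 * Module.finrank ℝ E - α) / 2))
    (Or.inl one_ne_zero)

end Bubble

variable {d : ℕ} {s m κ c γ : ℝ} {ρ χ : Ed d → ℝ} {u : Ed d → ℝ → ℝ}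

namespace WeakSolCore

lemma exists_tendsto_moment (hd : 2 * s < d) (hm : 1 ≤ m) (hκ : 0 < κ) (hγ : 0 ≤ γ)
    (hγs : γ < 2 * s) (hc : 0 < c) (hρ_meas : Measurable ρ)
    (hρ : ∀ᵐ x, c * (1 + ‖x‖) ^ (-γ) ≤ ρ x) (hu : WeakSolCore d s m κ ρ u)
    (hχ : IsSupersolution (d + 2 * s) χ) :
    ∃ N : Set ℝ, volume N = 0 ∧ ∃ L, Tendsto (moment ρ u χ) (𝓝[Ioi 0 \ N] 0) (𝓝 L) := by
  have hρ_nonneg : ∀ᵐ x, 0 ≤ ρ x := hρ.mono fun x hx => le_trans (by positivity) hx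
  obtain ⟨M, hgood⟩ := hu.exists_ae_isGoodSlice hκ
  obtain ⟨A, hA⟩ := hχ.exists_abs_le
  obtain ⟨N, hN, hslice⟩ := exists_measure_zero_forall_mem_diff measurableSet_Ioi hgood
  obtain ⟨N', hN', hanti⟩ := hu.exists_antitoneOn_moment hd hm hκ hγ hγs hc hρ_meas hρ hχ
  refine ⟨N ∪ N', measure_union_null hN hN', exists_tendsto_nhdsWithin_of_antitoneOn
    (hanti.mono (sdiff_subset_sdiff_right subset_union_right)) sdiff_subset ⟨A * M, ?_⟩⟩
  rintro _ ⟨t, ht, rfl⟩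
  exact (le_abs_self _).trans ((hslice t (sdiff_subset_sdiff_right subset_union_left ht)
    ).abs_integral_mul_le hρ_nonneg hA)

-- A Gaussian is, up to a factor, the difference of two supersolutions.
lemma exists_tendsto_moment_gaussian (hs1 : s < 1) (hd : 2 * s < d) (hm : 1 ≤ m) (hκ : 0 < κ)
    (hγ : 0 ≤ γ) (hγs : γ < 2 * s) (hc : 0 < c) (hρ_meas : Measurable ρ)
    (hρ : ∀ᵐ x, c * (1 + ‖x‖) ^ (-γ) ≤ ρ x) (hu : WeakSolCore d s m κ ρ u) {l : ℝ} (hl : 0 < l)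
    (a : Ed d) :
    ∃ N : Set ℝ, volume N = 0 ∧
      ∃ L, Tendsto (moment ρ u (gaussian l a)) (𝓝[Ioi 0 \ N] 0) (𝓝 L) := by
  have hd0 : 0 < d := Nat.cast_pos.1 (by linarith : (0 : ℝ) < d)
  have : NeZero d := ⟨hd0.ne'⟩
  have hdim : (Module.finrank ℝ (Ed d) : ℝ) = d := by rw [finrank_euclideanSpace_fin]
  obtain ⟨M, hgood⟩ := hu.exists_ae_isGoodSlice hκ
  obtain ⟨N₀, hN₀, hslice⟩ := exists_measure_zero_forall_mem_diff measurableSet_Ioi hgood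
  obtain ⟨ε, hε, hsum⟩ := exists_isSupersolution_bubble_add_gaussian (E := Ed d)
    (α := d + 2 * s) (by linarith) (by linarith) (by linarith) hl
  have hbubble : IsSupersolution (d + 2 * s) (bubble (d + 2 * s) 1 a) :=
    isSupersolution_bubble (by linarith) (by linarith) (by linarith) one_pos a
  obtain ⟨A, hA⟩ := hbubble.exists_abs_le
  obtain ⟨N₁, hN₁, L₁, hL₁⟩ :=
    hu.exists_tendsto_moment hd hm hκ hγ hγs hc hρ_meas hρ (hsum a)
  obtain ⟨N₂, hN₂, L₂, hL₂⟩ := hu.exists_tendsto_moment hd hm hκ hγ hγs hc hρ_meas hρ hbubble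
  refine ⟨N₀ ∪ (N₁ ∪ N₂), measure_union_null hN₀ (measure_union_null hN₁ hN₂), (L₁ - L₂) / ε,
    Tendsto.congr' ?_ (((hL₁.mono_left (nhdsWithin_mono _ (sdiff_subset_sdiff_right
      (subset_union_left.trans subset_union_right)))).sub (hL₂.mono_left (nhdsWithin_mono _
      (sdiff_subset_sdiff_right (subset_union_right.trans subset_union_right))))).div_const ε)⟩
  filter_upwards [self_mem_nhdsWithin] with t ht
  have ht := hslice t (sdiff_subset_sdiff_right subset_union_left ht)
  have hbubble_int := ht.integrable_bdd_mul hbubble.contDiff.continuous.measurable hA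
  have hgaussian_int := ht.integrable_bdd_mul (continuous_gaussian l a).measurable
    (norm_gaussian_le_one hl.le a)
  have hadd : moment ρ u (fun x => bubble (d + 2 * s) 1 a x + ε * gaussian l a x) t =
      moment ρ u (bubble (d + 2 * s) 1 a) t + ε * moment ρ u (gaussian l a) t := by
    simp only [moment, add_mul, mul_assoc]
    rw [integral_add hbubble_int (hgaussian_int.const_mul ε), integral_const_mul]
  rw [hadd, add_sub_cancel_left, mul_div_cancel_left₀ _ hε.ne']

lemma exists_tendsto_moment_boundedGaussian (hs1 : s < 1) (hd : 2 * s < d) (hm : 1 ≤ m)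
    (hκ : 0 < κ) (hγ : 0 ≤ γ) (hγs : γ < 2 * s) (hc : 0 < c) (hρ_meas : Measurable ρ)
    (hρ : ∀ᵐ x, c * (1 + ‖x‖) ^ (-γ) ≤ ρ x) (hu : WeakSolCore d s m κ ρ u) (l : ℝ≥0)
    (a : Ed d) :
    ∃ N : Set ℝ, volume N = 0 ∧
      ∃ L, Tendsto (moment ρ u (boundedGaussian l a)) (𝓝[Ioi 0 \ N] 0) (𝓝 L) := by
  rcases eq_zero_or_pos l with rfl | hl
  · obtain ⟨mass, hmass⟩ :=
      hu.exists_ae_integral_eq_const hd hs1 hm hκ hγ hγs hc hρ_meas hρ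
    obtain ⟨N, hN, hconst⟩ := exists_measure_zero_forall_mem_diff measurableSet_Ioi hmass
    refine ⟨N, hN, mass, tendsto_const_nhds.congr' ?_⟩
    filter_upwards [self_mem_nhdsWithin] with t ht
    simpa [moment, boundedGaussian_zero] using (hconst t ht).symm
  · exact hu.exists_tendsto_moment_gaussian hs1 hd hm hκ hγ hγs hc hρ_meas hρ hl a

lemma exists_null_tendsto_antitoneOn (hs1 : s < 1) (hd : 2 * s < d) (hm : 1 ≤ m) (hκ : 0 < κ)
    (hγ : 0 ≤ γ) (hγs : γ < 2 * s) (hc : 0 < c) (hρ_meas : Measurable ρ)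
    (hρ : ∀ᵐ x, c * (1 + ‖x‖) ^ (-γ) ≤ ρ x) (hu : WeakSolCore d s m κ ρ u)
    (z : ℕ → ℝ≥0 × Ed d) {χ : ℕ → Ed d → ℝ} (hχ : ∀ n, IsSupersolution (d + 2 * s) (χ n))
    {p : ℝ → Prop} (hp : ∀ᵐ t ∂volume.restrict (Ioi (0 : ℝ)), p t) :
    ∃ N : Set ℝ, volume N = 0 ∧ (∀ t ∈ Ioi 0 \ N, p t) ∧
      (∀ n, ∃ L, Tendsto (moment ρ u (boundedGaussian (z n).1 (z n).2)) (𝓝[Ioi 0 \ N] 0)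
        (𝓝 L)) ∧
      ∀ n, AntitoneOn (moment ρ u (χ n)) (Ioi 0 \ N) := by
  obtain ⟨N₀, hN₀, hpN₀⟩ := exists_measure_zero_forall_mem_diff measurableSet_Ioi hp
  choose N₁ hN₁ L hL using fun n => hu.exists_tendsto_moment_boundedGaussian hs1 hd hm hκ hγ hγs
    hc hρ_meas hρ (z n).1 (z n).2
  choose N₂ hN₂ hanti using fun n =>
    hu.exists_antitoneOn_moment hd hm hκ hγ hγs hc hρ_meas hρ (hχ n)
  have hsub (n : ℕ) : N₁ n ∪ N₂ n ⊆ N₀ ∪ ⋃ n, N₁ n ∪ N₂ n :=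
    subset_union_of_subset_right (subset_iUnion (fun n => N₁ n ∪ N₂ n) n) N₀
  exact ⟨N₀ ∪ ⋃ n, N₁ n ∪ N₂ n,
    measure_union_null hN₀ (measure_iUnion_null fun n => measure_union_null (hN₁ n) (hN₂ n)),
    fun t ht => hpN₀ t (sdiff_subset_sdiff_right subset_union_left ht),
    fun n => ⟨L n, (hL n).mono_left (nhdsWithin_mono _
      (sdiff_subset_sdiff_right (subset_union_left.trans (hsub n))))⟩,
    fun n => (hanti n).mono (sdiff_subset_sdiff_right (subset_union_right.trans (hsub n)))⟩

lemma exists_finiteMeasure_ae_integral_eq_moment (hs1 : s < 1) (hd : 2 * s < d) (hm : 1 ≤ m)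
    (hκ : 0 < κ) (hγ : 0 ≤ γ) (hγs : γ < 2 * s) (hc : 0 < c) (hρ_meas : Measurable ρ)
    (hρ : ∀ᵐ x, c * (1 + ‖x‖) ^ (-γ) ≤ ρ x) (hu : WeakSolCore d s m κ ρ u) :
    ∃ (C : ℝ≥0) (ν : ℝ → FiniteMeasure (Ed d)), ∀ᵐ t ∂volume.restrict (Ioi (0 : ℝ)),
      (ν t).mass = C ∧ ∀ φ : Ed d → ℝ, ∫ x, φ x ∂(ν t : Measure (Ed d)) = moment ρ u φ t := by
  obtain ⟨M, hgood⟩ := hu.exists_ae_isGoodSlice hκ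
  obtain ⟨mass, hmass⟩ := hu.exists_ae_integral_eq_const hd hs1 hm hκ hγ hγs hc hρ_meas hρ
  have hnonneg (t : ℝ) : 0 ≤ᵐ[volume] fun x => u x t * ρ x :=
    hρ.mono fun x hx => mul_nonneg (hu.nonneg x t) (le_trans (by positivity) hx)
  choose! ν hν using fun t (ht : Integrable fun x => u x t * ρ x) =>
    exists_finiteMeasure_integral_eq ht (hnonneg t)
  refine ⟨mass.toNNReal, ν, ?_⟩
  filter_upwards [hgood, hmass] with t hgood hmass
  have hν_mass : ((ν t).mass : ℝ) = mass := by
    rw [← hmass]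
    simpa using hν t hgood.integrable_mul fun _ => 1
  exact ⟨by rw [← hν_mass, Real.toNNReal_coe], hν t hgood.integrable_mul⟩

lemma exists_initialTrace (hs1 : s < 1) (hd : 2 * s < d) (hm : 1 ≤ m) (hκ : 0 < κ) (hγ : 0 ≤ γ)
    (hγs : γ < 2 * s) (hc : 0 < c) (hρ_meas : Measurable ρ)
    (hρ : ∀ᵐ x, c * (1 + ‖x‖) ^ (-γ) ≤ ρ x) (hu : WeakSolCore d s m κ ρ u) :
    ∃ μ : FiniteMeasure (Ed d), HasInitialTrace d ρ u μ ∧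
      ∀ᵐ t ∂volume.restrict (Ioi (0 : ℝ)), ∫ x, u x t * ρ x = μ.mass := by
  have hd0 : 0 < d := Nat.cast_pos.1 (by linarith : (0 : ℝ) < d)
  have : NeZero d := ⟨hd0.ne'⟩
  have hdim : (Module.finrank ℝ (Ed d) : ℝ) = d := by rw [finrank_euclideanSpace_fin]
  have hχ (n : ℕ) : IsSupersolution (d + 2 * s)
      (bubble (d + 2 * s) (1 / ((n : ℝ) + 1)) (0 : Ed d)) :=
    isSupersolution_bubble (by linarith) (by linarith) (by linarith) (by positivity) 0
  obtain ⟨C, ν, hν⟩ :=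
    hu.exists_finiteMeasure_ae_integral_eq_moment hs1 hd hm hκ hγ hγs hc hρ_meas hρ
  obtain ⟨N, hN, hνN, hlim, hanti⟩ := hu.exists_null_tendsto_antitoneOn hs1 hd hm hκ hγ hγs hc
    hρ_meas hρ (TopologicalSpace.denseSeq (ℝ≥0 × Ed d)) hχ hν
  have : (𝓝[Ioi 0 \ N] (0 : ℝ)).NeBot := neBot_nhdsWithin_Ioi_diff hN 0
  have hmem : ∀ᶠ t in 𝓝[Ioi 0 \ N] (0 : ℝ), t ∈ Ioi 0 \ N := self_mem_nhdsWithin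
  obtain ⟨T, hT⟩ := hmem.exists
  obtain ⟨e, K, he, hK, htight⟩ := exists_forall_measure_compl_le_of_antitoneOn
    (fun t ht => (hνN t ht).1) (fun n => (hχ n).contDiff.continuous.measurable)
    (fun n => (hχ n).nonneg) (fun n => bubble_le_one (by linarith) (by positivity) 0)
    (fun n => (hχ n).tendsto_zero)
    (fun x => (tendsto_bubble_one _ 0 x).comp tendsto_one_div_add_atTop_nhds_zero_nat)
    (fun n => (hanti n).congr fun t ht => ((hνN t ht).2 _).symm) hT
  obtain ⟨μ, hμ, hμ_mass⟩ := exists_tendsto_finiteMeasure_of_tight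
    (hmem.mono fun t ht => (hνN t ht).1) (TopologicalSpace.denseRange_denseSeq (ℝ≥0 × Ed d))
    (forall_mem_range.2 fun n => (hlim n).imp fun L hL =>
      hL.congr' (hmem.mono fun t ht => ((hνN t ht).2 _).symm)) he hK
    (by filter_upwards [hmem, nhdsWithin_le_nhds (Iio_mem_nhds hT.1)] with t ht htT using
      htight t ht (le_of_lt htT))
  refine ⟨μ, ⟨N, hN, fun φ hφ ⟨B, hB⟩ => ?_⟩, hν.mono fun t ⟨hmass, hint⟩ => ?_⟩
  · exact (FiniteMeasure.tendsto_iff_forall_integral_tendsto.1 hμ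
      (.ofNormedAddCommGroup φ hφ B hB)).congr' (hmem.mono fun t ht => (hνN t ht).2 φ)
  · rw [hμ_mass, ← hmass]
    simpa [moment] using (hint fun _ => 1).symm

end WeakSolCore

lemma HasInitialTrace.unique {μ μ' : Measure (Ed d)} [IsFiniteMeasure μ] [IsFiniteMeasure μ']
    (h : HasInitialTrace d ρ u μ) (h' : HasInitialTrace d ρ u μ') : μ = μ' := by
  obtain ⟨N, hN, h⟩ := h
  obtain ⟨N', hN', h'⟩ := h'
  have : (𝓝[Ioi 0 \ (N ∪ N')] (0 : ℝ)).NeBot :=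
    neBot_nhdsWithin_Ioi_diff (measure_union_null hN hN') 0
  refine ext_of_forall_integral_eq_of_IsFiniteMeasure fun f => ?_
  have hf : ∃ B : ℝ, ∀ x, |f x| ≤ B := ⟨‖f‖, f.norm_coe_le_norm⟩
  exact tendsto_nhds_unique
    ((h f f.continuous hf).mono_left
      (nhdsWithin_mono _ (sdiff_subset_sdiff_right subset_union_left)))
    ((h' f f.continuous hf).mono_left
      (nhdsWithin_mono _ (sdiff_subset_sdiff_right subset_union_right)))

lemma AdmissibleWeight.ae_mul_one_add_norm_rpow_neg_le {γ₀ C : ℝ} (hd : 0 < d)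
    (hρ : AdmissibleWeight d ρ γ₀ γ c C) (hγ₀ : 0 ≤ γ₀) (hγ : 0 ≤ γ) :
    ∀ᵐ x, c * (1 + ‖x‖) ^ (-γ) ≤ ρ x := by
  obtain ⟨hc, -, -, -, hball, hcompl⟩ := hρ
  have : NeZero d := ⟨hd.ne'⟩
  filter_upwards [Measure.ae_ne volume 0, hball, hcompl] with x hx hball hcompl
  have hx0 : 0 < ‖x‖ := norm_pos_iff.2 hx
  rcases le_or_gt ‖x‖ 1 with hx1 | hx1
  · refine le_trans (mul_le_mul_of_nonneg_left ?_ hc.le) (hball hx1).1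
    exact (Real.rpow_le_one_of_one_le_of_nonpos (by linarith) (by linarith)).trans
      (Real.one_le_rpow_of_pos_of_le_one_of_nonpos hx0 hx1 (by linarith))
  · refine le_trans (mul_le_mul_of_nonneg_left ?_ hc.le) (hcompl hx1).1
    exact Real.rpow_le_rpow_of_nonpos hx0 (by linarith) (by linarith)

theorem initial_trace_exists_unique_general (hs1 : s < 1) (hd : 2 * s < d) (hm : 1 ≤ m)
    (hκ : 0 < κ) (hγ : 0 ≤ γ) (hγs : γ < 2 * s) (hc : 0 < c) (hρ_meas : Measurable ρ)
    (hρ : ∀ᵐ x, c * (1 + ‖x‖) ^ (-γ) ≤ ρ x) (hu : WeakSolCore d s m κ ρ u) :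
    ∃ μ : Measure (Ed d), IsFiniteMeasure μ ∧ HasInitialTrace d ρ u μ ∧
      (∀ μ' : Measure (Ed d), IsFiniteMeasure μ' → HasInitialTrace d ρ u μ' → μ' = μ) ∧
      ∀ᵐ t ∂volume.restrict (Ioi (0 : ℝ)), ∫ x, u x t * ρ x = (μ univ).toReal := by
  obtain ⟨μ, hμ, hmass⟩ := hu.exists_initialTrace hs1 hd hm hκ hγ hγs hc hρ_meas hρ
  exact ⟨μ, inferInstance, hμ, fun μ' _ hμ' => hμ'.unique hμ, hmass⟩

end InitialTraces

/-- **Existence and uniqueness of the initial trace.** If `u` satisfies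
conditions (i)–(iii) of the definition of weak solution (with no prescribed
initial datum), then there is a unique positive finite Radon measure `μ`
which is the initial trace of `u`; moreover
`μ(ℝ^d) = ∫ u(x,t) ρ(x) dx` for a.e. `t > 0`. -/
theorem initial_trace_exists_unique
    (d : ℕ) (s m κ γ₀ γ c C : ℝ)
    (hs0 : 0 < s) (hs1 : s < 1) (hd : 2 * s < (d : ℝ)) (hm : 1 < m) (hκ : 0 < κ)
    (hγ₀0 : 0 ≤ γ₀) (hγ₀γ : γ₀ ≤ γ) (hγs : γ < 2 * s) (hγd : γ ≤ (d : ℝ) - 2 * s)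
    (ρ : Ed d → ℝ) (hρ : AdmissibleWeight d ρ γ₀ γ c C)
    (u : Ed d → ℝ → ℝ) (hu : WeakSolCore d s m κ ρ u) :
    ∃ μ : Measure (Ed d), IsFiniteMeasure μ ∧ HasInitialTrace d ρ u μ ∧
      (∀ μ' : Measure (Ed d), IsFiniteMeasure μ' → HasInitialTrace d ρ u μ' → μ' = μ) ∧
      (∀ᵐ t ∂(volume.restrict (Ioi (0 : ℝ))),
        (∫ x : Ed d, u x t * ρ x) = (μ univ).toReal) := by
  have hγ : 0 ≤ γ := hγ₀0.trans hγ₀γ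
  exact initial_trace_exists_unique_general hs1 hd hm.le hκ hγ hγs hρ.1 hρ.2.2.1
    (hρ.ae_mul_one_add_norm_rpow_neg_le (Nat.cast_pos.1 (by linarith : (0 : ℝ) < d)) hγ₀0 hγ) hu
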